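/- arXiv:1909.04085 — 3 statements merged into one kernel-verified Lean document; each statement's English description precedes it below -/
import Mathlib

section
/- For every t with 0 < t < √3/2 and every δ > 0, the polynomially convex hull of (P₀ᵗ ∪ P₁ᵗ ∪ P₂ᵗ) ∩ B̄(0;δ) contains a neighbourhood of the origin in ℂ²; i.e., there exists ρ > 0 such that the open ball B(0;ρ) is contained in the hull of (P₀ᵗ ∪ P₁ᵗ ∪ P₂ᵗ) ∩ B̄(0;δ). -/
open Complex ComplexConjugate

/-- The polynomially convex hull of a set `K ⊆ ℂ²`. -/
def polyHull2 (K : Set (ℂ × ℂ)) : Set (ℂ × ℂ) :=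
  { z | ∀ p : MvPolynomial (Fin 2) ℂ,
      ‖MvPolynomial.eval (fun i => if i = 0 then z.1 else z.2) p‖ ≤
        sSup ((fun w : ℂ × ℂ =>
          ‖MvPolynomial.eval (fun i => if i = 0 then w.1 else w.2) p‖) '' K) }

/-- A set `K ⊆ ℂ²` is polynomially convex if it equals its polynomially convex hull. -/
def PolyConvex2 (K : Set (ℂ × ℂ)) : Prop := polyHull2 K = K

/-- The closed Euclidean ball of radius `r` centred at the origin in `ℂ²`. -/
def eClosedBall (r : ℝ) : Set (ℂ × ℂ) := { z | ‖z.1‖ ^ 2 + ‖z.2‖ ^ 2 ≤ r ^ 2 }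

/-- The open Euclidean ball of radius `r` centred at the origin in `ℂ²`. -/
def eOpenBall (r : ℝ) : Set (ℂ × ℂ) := { z | ‖z.1‖ ^ 2 + ‖z.2‖ ^ 2 < r ^ 2 }

/-- The plane `P₀ᵗ = {w = z̄}`. -/
def P0 : Set (ℂ × ℂ) := { zw | zw.2 = conj zw.1 }

/-- The plane `P₁ᵗ = {w = −(√3(√3−i)/(2t)) z − ((1−i√3)/2) z̄}`. -/
noncomputable def P1 (t : ℝ) : Set (ℂ × ℂ) :=
  { zw | zw.2 = -((Real.sqrt 3 : ℂ) * ((Real.sqrt 3 : ℂ) - Complex.I) / (2 * (t : ℂ))) * zw.1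
      - ((1 - Complex.I * (Real.sqrt 3 : ℂ)) / 2) * conj zw.1 }

/-- The plane `P₂ᵗ = {w = −(√3(√3+i)/(2t)) z − ((1+i√3)/2) z̄}`. -/
noncomputable def P2 (t : ℝ) : Set (ℂ × ℂ) :=
  { zw | zw.2 = -((Real.sqrt 3 : ℂ) * ((Real.sqrt 3 : ℂ) + Complex.I) / (2 * (t : ℂ))) * zw.1
      - ((1 + Complex.I * (Real.sqrt 3 : ℂ)) / 2) * conj zw.1 }


open Set Filter Topology Metric in
theorem hurwitz_aux {ι : Type*} {φ : Filter ι} [φ.NeBot] {U : Set ℂ} (hU : IsOpen U)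
    (hc : IsPreconnected U) {F : ι → ℂ → ℂ} {f : ℂ → ℂ}
    (hlim : TendstoLocallyUniformlyOn F f φ U) (hd : ∀ n, DifferentiableOn ℂ (F n) U)
    (hne : ∀ n, ∀ z ∈ U, F n z ≠ 0) : (∀ z ∈ U, f z = 0) ∨ (∀ z ∈ U, f z ≠ 0) := by
  by_contra hcon
  push Not at hcon
  obtain ⟨⟨z1, hz1, hfz1⟩, z0, hz0, hfz0⟩ := hcon
  have hfd : DifferentiableOn ℂ f U := hlim.differentiableOn (Eventually.of_forall hd) hU
  have han : AnalyticOnNhd ℂ f U := hfd.analyticOnNhd hU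
  rcases (han z0 hz0).eventually_eq_zero_or_eventually_ne_zero with h | h
  · exact hfz1 (han.eqOn_zero_of_preconnected_of_eventuallyEq_zero hc hz0 h hz1)
  rw [eventually_nhdsWithin_iff] at h
  obtain ⟨r, hr, hrb⟩ := Metric.nhds_basis_closedBall.mem_iff.1 (h.and (hU.mem_nhds hz0))
  have hsub : closedBall z0 r ⊆ U := fun z hz => (hrb hz).2
  have hsph : ∀ z ∈ sphere z0 r, f z ≠ 0 := by
    intro z hz
    refine (hrb (sphere_subset_closedBall hz)).1 ?_
    intro h0
    simp only [mem_singleton_iff] at h0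
    rw [h0] at hz; simp at hz; exact hr.ne hz
  have hcont : ContinuousOn (fun z => ‖f z‖) (sphere z0 r) :=
    (hfd.continuousOn.mono (sphere_subset_closedBall.trans hsub)).norm
  obtain ⟨z2, hz2, hmin⟩ := (isCompact_sphere z0 r).exists_isMinOn
    (NormedSpace.sphere_nonempty.2 hr.le) hcont
  set δ := ‖f z2‖ with hδ
  have hδ0 : 0 < δ := norm_pos_iff.2 (hsph z2 hz2)
  have hunif := (tendstoLocallyUniformlyOn_iff_forall_isCompact hU).1 hlim _ hsub
    (isCompact_closedBall z0 r)
  obtain ⟨n, hn⟩ := (Metric.tendstoUniformlyOn_iff.1 hunif (δ/2) (by positivity)).exists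
  have h1 : ∀ z ∈ sphere z0 r, ‖(F n z)⁻¹‖ ≤ (δ/2)⁻¹ := by
    intro z hz
    have a1 : δ ≤ ‖f z‖ := hmin hz
    have a2 := hn z (sphere_subset_closedBall hz)
    rw [dist_eq_norm] at a2
    have a3 := norm_sub_norm_le (f z) (F n z)
    rw [norm_inv]
    apply inv_anti₀ (by positivity)
    linarith
  have h2 : ‖(F n z0)⁻¹‖ ≤ (δ/2)⁻¹ := by
    have hdc : DiffContOnCl ℂ (fun z => (F n z)⁻¹) (ball z0 r) := by
      apply DifferentiableOn.diffContOnCl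
      rw [closure_ball _ hr.ne']
      exact ((hd n).mono hsub).inv (fun z hz => hne n z (hsub hz))
    refine Complex.norm_le_of_forall_mem_frontier_norm_le isBounded_ball hdc ?_ ?_
    · rw [frontier_ball _ hr.ne']; exact h1
    · exact subset_closure (mem_ball_self hr)
  have h3 := hn z0 (mem_closedBall_self hr.le)
  rw [hfz0, dist_zero_left] at h3
  rw [norm_inv] at h2
  have h4 : 0 < ‖F n z0‖ := norm_pos_iff.2 (hne n z0 hz0)
  have := (inv_le_inv₀ h4 (by positivity)).1 h2
  linarith

open Set Filter Topology Metric in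
theorem montel_aux {U : Set ℂ} (hU : IsOpen U) (F : ℕ → ℂ → ℂ)
    (hd : ∀ n, DifferentiableOn ℂ (F n) U) (hb : ∀ n, ∀ z ∈ U, ‖F n z‖ ≤ 1) :
    ∃ f : ℂ → ℂ, TendstoLocallyUniformlyOn F f (hyperfilter ℕ : Filter ℕ) U ∧
      ∀ z ∈ U, ‖f z‖ ≤ 1 := by
  have key : ∀ z, ∃ w, z ∈ U → ‖w‖ ≤ 1 ∧ Tendsto (fun n => F n z) (hyperfilter ℕ : Filter ℕ) (𝓝 w) := by
    intro z
    by_cases hz : z ∈ U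
    · obtain ⟨w, hw, hle⟩ := (isCompact_closedBall (0:ℂ) 1).ultrafilter_le_nhds
        ((hyperfilter ℕ).map (fun n => F n z)) (by
          rw [le_principal_iff]
          apply Filter.mem_map.2
          apply Filter.univ_mem'
          intro n; simpa using hb n z hz)
      exact ⟨w, fun _ => ⟨by simpa using hw, hle⟩⟩
    · exact ⟨0, fun h => absurd h hz⟩
  choose f hf using key
  refine ⟨f, ?_, fun z hz => (hf z hz).1⟩
  rw [Metric.tendstoLocallyUniformlyOn_iff]
  intro ε hε z hz
  obtain ⟨r, hr, hrb⟩ := Metric.isOpen_iff.1 hU z hz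
  have heq : ∀ n, ∀ y ∈ ball z r, dist (F n y) (F n z) ≤ 2 / r * dist y z := by
    intro n y hy
    refine Complex.dist_le_div_mul_dist_of_mapsTo_ball ((hd n).mono hrb) ?_ hy
    intro x hx
    rw [mem_closedBall, dist_eq_norm]
    have := norm_sub_le (F n x) (F n z)
    linarith [hb n x (hrb hx), hb n z hz]
  have heqf : ∀ y ∈ ball z r, dist (f y) (f z) ≤ 2 / r * dist y z := by
    intro y hy
    have := ((hf y (hrb hy)).2.dist (hf z hz).2)
    exact le_of_tendsto this (Eventually.of_forall fun n => heq n y hy)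
  set ρ := min r (ε * r / 8) with hρ
  have hρ0 : 0 < ρ := lt_min hr (by positivity)
  refine ⟨ball z ρ, mem_nhdsWithin_of_mem_nhds (ball_mem_nhds z hρ0), ?_⟩
  have h1 := Metric.tendsto_nhds.1 (hf z hz).2 (ε/4) (by positivity)
  filter_upwards [h1] with n hn y hy
  have hy' : y ∈ ball z r := ball_subset_ball (min_le_left _ _) hy
  have hdy : 2 / r * dist y z ≤ ε / 4 := by
    have : dist y z ≤ ε * r / 8 := (mem_ball.1 hy).le.trans (min_le_right _ _)
    calc 2 / r * dist y z ≤ 2 / r * (ε * r / 8) := by gcongr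
      _ = ε/4 := by field_simp; ring
  have e1 := heq n y hy'
  have e2 := heqf y hy'
  rw [dist_comm] at e1
  rw [dist_comm] at hn
  have := dist_triangle4 (f y) (f z) (F n z) (F n y)
  linarith

/-- The class of injective holomorphic maps of `U` to the unit disc fixing the origin. -/
def RF (U : Set ℂ) (f : ℂ → ℂ) : Prop :=
  DifferentiableOn ℂ f U ∧ Set.InjOn f U ∧ Set.MapsTo f U (Metric.ball 0 1) ∧ f 0 = 0 ∧
    ∀ z ∈ U, deriv f z ≠ 0

open Set Filter Topology Metric in
theorem rf_exists_max {U : Set ℂ} (hU : IsOpen U) (hc : IsPreconnected U)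
    (hb : ∃ B : ℝ, ∀ z ∈ U, ‖z‖ < B) (h0 : (0:ℂ) ∈ U) :
    ∃ g, RF U g ∧ ∀ f, RF U f → ‖deriv f 0‖ ≤ ‖deriv g 0‖ := by
  obtain ⟨B, hB⟩ := hb
  have hB0 : 0 < B := by simpa using hB 0 h0
  have hBc : (B:ℂ) ≠ 0 := by exact_mod_cast hB0.ne'
  set S := (fun f : ℂ → ℂ => ‖deriv f 0‖) '' {f | RF U f} with hS
  have hderiv : ∀ z : ℂ, HasDerivAt (fun z : ℂ => z / B) (1 / B) z := fun z =>
    (hasDerivAt_id z).div_const _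
  have hid : RF U (fun z => z / B) := by
    refine ⟨fun z _ => (hderiv z).differentiableAt.differentiableWithinAt, ?_, ?_, by simp, ?_⟩
    · intro a _ b _ hab
      simpa [hBc] using hab
    · intro z hz
      simp only [mem_ball, dist_zero_right, norm_div, norm_real, Real.norm_eq_abs, abs_of_pos hB0]
      rw [div_lt_one hB0]; exact hB z hz
    · intro z _
      rw [(hderiv z).deriv]; simp [hBc]
  have hSne : S.Nonempty := ⟨_, _, hid, rfl⟩
  obtain ⟨r, hr, hrb⟩ := Metric.isOpen_iff.1 hU 0 h0
  have hSb : BddAbove S := by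
    refine ⟨1 / r, ?_⟩
    rintro _ ⟨f, hf, rfl⟩
    refine Complex.norm_deriv_le_div_of_mapsTo_ball (hf.1.mono hrb) ?_ hr
    intro z hz
    rw [hf.2.2.2.1]
    exact ball_subset_closedBall (hf.2.2.1 (hrb hz))
  obtain ⟨u, -, hu, huS⟩ := exists_seq_tendsto_sSup hSne hSb
  choose F hF hFu using huS
  obtain ⟨g, hg, hgb⟩ := montel_aux hU F (fun n => (hF n).1)
    (fun n z hz => (mem_ball_zero_iff.1 ((hF n).2.2.1 hz)).le)
  have hgd : DifferentiableOn ℂ g U := hg.differentiableOn (Eventually.of_forall fun n => (hF n).1) hU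
  have hg' := hg.deriv (Eventually.of_forall fun n => (hF n).1) hU
  have hlim : ‖deriv g 0‖ = sSup S := by
    have h1 := (hg'.tendsto_at h0).norm
    have h2 : Tendsto u (hyperfilter ℕ : Filter ℕ) (𝓝 (sSup S)) :=
      hu.mono_left Nat.hyperfilter_le_atTop
    refine tendsto_nhds_unique h1 ?_
    convert h2 using 1
    ext n; exact hFu n
  have hmax : ∀ f, RF U f → ‖deriv f 0‖ ≤ ‖deriv g 0‖ := by
    intro f hf
    rw [hlim]; exact le_csSup hSb ⟨f, hf, rfl⟩
  have hg0' : deriv g 0 ≠ 0 := by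
    have h1 := hmax _ hid
    have h2 : 0 < ‖deriv (fun z : ℂ => z / B) 0‖ := norm_pos_iff.2 (hid.2.2.2.2 0 h0)
    exact norm_pos_iff.1 (h2.trans_le h1)
  have hg0 : g 0 = 0 := by
    have h1 := hg.tendsto_at h0
    refine tendsto_nhds_unique h1 ?_
    have : (fun n => F n 0) = fun _ => 0 := by ext n; exact (hF n).2.2.2.1
    rw [this]; exact tendsto_const_nhds
  have hconst : ∀ w, ¬ ∀ z ∈ U, g z = w := by
    intro w hw
    apply hg0'
    have : g =ᶠ[𝓝 0] fun _ => w := by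
      filter_upwards [hU.mem_nhds h0] with z hz using hw z hz
    rw [this.deriv_eq]; simp
  refine ⟨g, ⟨hgd, ?_, ?_, hg0, ?_⟩, hmax⟩
  · intro a ha b hb hab
    by_contra hne
    obtain ⟨ρ, hρ, hρb⟩ := Metric.isOpen_iff.1 (hU.sdiff (isClosed_singleton (x := a))) b
      ⟨hb, fun h => hne (by simpa using h.symm)⟩
    have hsub : ball b ρ ⊆ U := fun z hz => (hρb hz).1
    have hl : TendstoLocallyUniformlyOn (fun n z => F n z - F n a) (fun z => g z - g a)
        (hyperfilter ℕ : Filter ℕ) (ball b ρ) := by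
      have l1 := hg.mono hsub
      have l2 := hg.tendsto_at ha
      rw [Metric.tendstoLocallyUniformlyOn_iff] at l1 ⊢
      intro ε hε x hx
      obtain ⟨t, ht, hev⟩ := l1 (ε/2) (by positivity) x hx
      refine ⟨t, ht, ?_⟩
      filter_upwards [hev, Metric.tendsto_nhds.1 l2 (ε/2) (by positivity)] with n h1 h2 y hy
      have h3 := dist_sub_sub_le (g y) (g a) (F n y) (F n a)
      have h1' := h1 y hy
      rw [dist_comm] at h2
      linarith
    rcases hurwitz_aux isOpen_ball (convex_ball b ρ).isPreconnected hl
      (fun n => ((hF n).1.mono hsub).sub (differentiableOn_const _))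
      (fun n z hz h => (hρb hz).2 (by
        simpa using (hF n).2.1 (hsub hz) ha (sub_eq_zero.1 h))) with h | h
    · apply hconst (g a)
      have han : AnalyticOnNhd ℂ (fun z => g z - g a) U :=
        (hgd.sub (differentiableOn_const _)).analyticOnNhd hU
      have := han.eqOn_zero_of_preconnected_of_eventuallyEq_zero hc hb
        (by filter_upwards [ball_mem_nhds b hρ] with z hz using h z hz)
      intro z hz
      exact sub_eq_zero.1 (this hz)
    · exact h b (mem_ball_self hρ) (by simp [hab])
  · intro c hcU
    by_contra hcon
    have hc1 : ‖g c‖ = 1 := le_antisymm (hgb c hcU) (by simpa using hcon)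
    have := Complex.eqOn_of_isPreconnected_of_isMaxOn_norm hc hU hgd hcU
      (fun z hz => by simp only [Function.comp, mem_ofPred_eq, hc1]; exact hgb z hz)
    have h2 := this h0
    simp only [Function.const, hg0] at h2
    rw [← h2] at hc1; simp at hc1
  · rcases hurwitz_aux hU hc hg' (fun n => (hF n).1.deriv hU)
      (fun n => (hF n).2.2.2.2) with h | h
    · exact absurd (h 0 h0) hg0'
    · exact h

theorem mob_den {c a : ℂ} (hc : ‖c‖ < 1) (ha : ‖a‖ < 1) : 1 - conj c * a ≠ 0 := by
  intro h
  have h1 : conj c * a = 1 := (sub_eq_zero.1 h).symm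
  have h2 : ‖c‖ * ‖a‖ = 1 := by
    rw [← Complex.norm_conj c, ← norm_mul, h1, norm_one]
  nlinarith [norm_nonneg c, norm_nonneg a]

theorem mob_lt {c a : ℂ} (hc : ‖c‖ < 1) (ha : ‖a‖ < 1) :
    ‖(a - c) / (1 - conj c * a)‖ < 1 := by
  rw [norm_div, div_lt_one (norm_pos_iff.2 (mob_den hc ha))]
  apply lt_of_pow_lt_pow_left₀ 2 (norm_nonneg _)
  rw [← Complex.normSq_eq_norm_sq, ← Complex.normSq_eq_norm_sq]
  have h1 : Complex.normSq c < 1 := by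
    rw [Complex.normSq_eq_norm_sq]; nlinarith [norm_nonneg c]
  have h2 : Complex.normSq a < 1 := by
    rw [Complex.normSq_eq_norm_sq]; nlinarith [norm_nonneg a]
  have h3 : Complex.normSq (1 - conj c * a) - Complex.normSq (a - c)
      = (1 - Complex.normSq c) * (1 - Complex.normSq a) := by
    simp [Complex.normSq_apply]; ring
  nlinarith

theorem mob_inj {c a b : ℂ} (hc : ‖c‖ < 1) (ha : ‖a‖ < 1) (hb : ‖b‖ < 1)
    (h : (a - c) / (1 - conj c * a) = (b - c) / (1 - conj c * b)) : a = b := by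
  rw [div_eq_div_iff (mob_den hc ha) (mob_den hc hb)] at h
  have h1 : (a - b) * (1 - conj c * c) = 0 := by linear_combination h
  rcases mul_eq_zero.1 h1 with h2 | h2
  · exact sub_eq_zero.1 h2
  · exact absurd h2 (mob_den hc hc)

theorem mob_deriv {c : ℂ} {f : ℂ → ℂ} {f' p : ℂ} (hc : ‖c‖ < 1) (ha : ‖f p‖ < 1)
    (hf : HasDerivAt f f' p) :
    HasDerivAt (fun z => (f z - c) / (1 - conj c * f z))
      ((1 - conj c * c) / (1 - conj c * f p) ^ 2 * f') p := by
  have h1 := (hf.sub_const c).div ((hf.const_mul (conj c)).const_sub 1) (mob_den hc ha)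
  refine h1.congr_deriv ?_
  rw [div_mul_eq_mul_div]
  congr 1
  ring

open Set Filter Topology Metric in
theorem sqrt_deriv {h F : ℂ → ℂ} {p F' : ℂ} (hh : ContinuousAt h p) (hF : HasDerivAt F F' p)
    (hsq : ∀ z, h z ^ 2 = F z) (hp : h p ≠ 0) : HasDerivAt h (F' / (2 * h p)) p := by
  rw [hasDerivAt_iff_tendsto_slope] at hF ⊢
  have h1 : Tendsto (fun z => h z + h p) (𝓝[≠] p) (𝓝 (2 * h p)) := by
    rw [two_mul]
    exact (hh.tendsto.mono_left nhdsWithin_le_nhds).add tendsto_const_nhds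
  have hne : 2 * h p ≠ 0 := by simpa using hp
  have h2 := hF.div h1 hne
  refine h2.congr' ?_
  filter_upwards [h1.eventually_ne hne] with z hz
  simp only [slope_def_field, Pi.div_apply, ← hsq]
  rw [div_div, mul_comm (z - p), ← div_div]
  congr 1
  rw [div_eq_iff hz]; ring

open Set Filter Topology Metric in
theorem rf_surj {U : Set ℂ} (hU : IsOpen U) (hc : IsSimplyConnected U)
    (h0 : (0:ℂ) ∈ U) {g : ℂ → ℂ} (hg : RF U g)
    (hmax : ∀ f, RF U f → ‖deriv f 0‖ ≤ ‖deriv g 0‖) :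
    ∀ c ∈ ball (0:ℂ) 1, ∃ z ∈ U, g z = c := by
  intro c hcb
  by_contra hcon
  push Not at hcon
  obtain ⟨hgd, hgi, hgm, hg0, hg'⟩ := hg
  have hc1 : ‖c‖ < 1 := by simpa using hcb
  have hgn : ∀ z ∈ U, ‖g z‖ < 1 := fun z hz => by simpa using hgm hz
  set F : ℂ → ℂ := fun z => (g z - c) / (1 - conj c * g z) with hF
  have hgD : ∀ z ∈ U, HasDerivAt g (deriv g z) z := fun z hz =>
    (hgd.differentiableAt (hU.mem_nhds hz)).hasDerivAt
  have hFD : ∀ z ∈ U, HasDerivAt F ((1 - conj c * c) / (1 - conj c * g z) ^ 2 * deriv g z) z :=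
    fun z hz => mob_deriv hc1 (hgn z hz) (hgD z hz)
  have hFne : ∀ z ∈ U, F z ≠ 0 := fun z hz =>
    div_ne_zero (sub_ne_zero.2 (hcon z hz)) (mob_den hc1 (hgn z hz))
  obtain ⟨h, hhc, hhsq⟩ := Complex.exists_continuousOn_pow_eq hc hU (g := F)
    (fun z hz => (hFD z hz).continuousAt.continuousWithinAt)
    (by rintro ⟨z, hz, h⟩; exact hFne z hz h) (n := 2) two_ne_zero
  have hhne : ∀ z ∈ U, h z ≠ 0 := fun z hz h' => hFne z hz (by rw [← hhsq, h']; simp)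
  have hhn : ∀ z ∈ U, ‖h z‖ < 1 := by
    intro z hz
    have : ‖h z‖ ^ 2 < 1 := by
      rw [← norm_pow, hhsq]; exact mob_lt hc1 (hgn z hz)
    nlinarith [norm_nonneg (h z)]
  have hhD : ∀ z ∈ U, HasDerivAt h ((1 - conj c * c) / (1 - conj c * g z) ^ 2 * deriv g z / (2 * h z)) z :=
    fun z hz => sqrt_deriv (hhc.continuousAt (hU.mem_nhds hz)) (hFD z hz) hhsq (hhne z hz)
  set d := h 0 with hd
  have hd1 : ‖d‖ < 1 := hhn 0 h0
  have hd0 : d ≠ 0 := hhne 0 h0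
  set G : ℂ → ℂ := fun z => (h z - d) / (1 - conj d * h z) with hG
  have hGD := fun z hz => mob_deriv hd1 (hhn z hz) (hhD z hz)
  have hGRF : RF U G := by
    refine ⟨fun z hz => (hGD z hz).differentiableAt.differentiableWithinAt, ?_, ?_, ?_, ?_⟩
    · intro a ha b hb hab
      have h1 := mob_inj hd1 (hhn a ha) (hhn b hb) hab
      have h2 : F a = F b := by rw [← hhsq, ← hhsq, h1]
      exact hgi ha hb (mob_inj hc1 (hgn a ha) (hgn b hb) h2)
    · intro z hz
      exact mem_ball_zero_iff.2 (mob_lt hd1 (hhn z hz))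
    · simp [hG, ← hd]
    · intro z hz
      rw [(hGD z hz).deriv]
      refine mul_ne_zero (div_ne_zero (mob_den hd1 hd1) (pow_ne_zero _ (mob_den hd1 (hhn z hz)))) ?_
      refine div_ne_zero (mul_ne_zero (div_ne_zero (mob_den hc1 hc1)
        (pow_ne_zero _ (mob_den hc1 (hgn z hz)))) (hg' z hz)) ?_
      simpa using hhne z hz
  have hle := hmax G hGRF
  have hdc : ‖d‖ ^ 2 = ‖c‖ := by
    rw [← norm_pow, hhsq]; simp [hF, hg0]
  have hgp : 0 < ‖deriv g 0‖ := norm_pos_iff.2 (hg' 0 h0)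
  have hdp : 0 < ‖d‖ := norm_pos_iff.2 hd0
  have hcc : ∀ w : ℂ, ‖w‖ < 1 → ‖1 - conj w * w‖ = 1 - ‖w‖ ^ 2 := by
    intro w hw
    rw [Complex.conj_mul']
    rw [show (1:ℂ) - (‖w‖:ℂ)^2 = ((1 - ‖w‖^2 : ℝ) : ℂ) by push_cast; ring, Complex.norm_real]
    rw [Real.norm_of_nonneg]; nlinarith [norm_nonneg w]
  rw [(hGD 0 h0).deriv] at hle
  rw [norm_mul, norm_div, norm_pow, norm_div, norm_mul, norm_div, norm_pow, ← hd, hg0, hcc d hd1, hcc c hc1,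
    ← hdc] at hle
  simp only [mul_zero, sub_zero, norm_one, one_pow, div_one, norm_mul, Complex.norm_ofNat] at hle
  have h5 : 0 < 1 - ‖d‖^2 := by nlinarith
  have h6 : (1 - ‖d‖ ^ 2) / (1 - ‖d‖ ^ 2) ^ 2 * ((1 - (‖d‖ ^ 2) ^ 2) * ‖deriv g 0‖ / (2 * ‖d‖))
     = (1 + ‖d‖^2) / (2 * ‖d‖) * ‖deriv g 0‖ := by
    field_simp; ring
  rw [h6] at hle
  have h7 : 1 < (1 + ‖d‖^2) / (2 * ‖d‖) := by
    rw [one_lt_div (by positivity)]; nlinarith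
  nlinarith

open Set Filter Topology Metric in
theorem riemann_map {U : Set ℂ} (hU : IsOpen U) (hc : IsSimplyConnected U)
    (hb : ∃ B : ℝ, ∀ z ∈ U, ‖z‖ < B) (h0 : (0:ℂ) ∈ U) :
    ∃ x : ℂ → ℂ, DifferentiableOn ℂ x (ball 0 1) ∧ x 0 = 0 ∧ MapsTo x (ball 0 1) U ∧
      (∀ q ∈ ball (0:ℂ) 1, x q = 0 → q = 0) ∧ deriv x 0 ≠ 0 ∧
      ∀ K, IsCompact K → K ⊆ U → ∃ r < 1, ∀ q ∈ ball (0:ℂ) 1, x q ∈ K → ‖q‖ ≤ r := by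
  obtain ⟨g, hg, hmax⟩ := rf_exists_max hU hc.isPathConnected.isConnected.isPreconnected hb h0
  have hsurj := rf_surj hU hc h0 hg hmax
  obtain ⟨hgd, hgi, hgm, hg0, hg'⟩ := hg
  have : ∀ q, ∃ z, q ∈ ball (0:ℂ) 1 → z ∈ U ∧ g z = q := by
    intro q
    by_cases hq : q ∈ ball (0:ℂ) 1
    · obtain ⟨z, hz⟩ := hsurj q hq
      exact ⟨z, fun _ => hz⟩
    · exact ⟨0, fun h => absurd h hq⟩
  choose x hx using this
  have h01 : (0:ℂ) ∈ ball (0:ℂ) 1 := mem_ball_self one_pos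
  have hxd : ∀ q ∈ ball (0:ℂ) 1, HasDerivAt x (deriv g (x q))⁻¹ q := by
    intro q hq
    obtain ⟨hxU, hgx⟩ := hx q hq
    have hs : HasStrictDerivAt g (deriv g (x q)) (x q) :=
      ((hgd.analyticOnNhd hU) (x q) hxU).hasStrictDerivAt
    have hl := (hs.to_localInverse (hg' _ hxU)).hasDerivAt
    rw [hgx] at hl
    refine hl.congr_of_eventuallyEq ?_
    have hl0 : HasStrictDerivAt.localInverse g (deriv g (x q)) (x q) hs (hg' _ hxU) q = x q := by
      have := HasStrictFDerivAt.localInverse_apply_image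
        (f' := ContinuousLinearEquiv.unitsEquivAut ℂ (Units.mk0 (deriv g (x q)) (hg' _ hxU))) (a := x q)
        (hs.hasStrictFDerivAt_equiv (hg' _ hxU))
      rw [hgx] at this
      exact this
    have hr : ∀ᶠ y in 𝓝 (g (x q)), g (HasStrictDerivAt.localInverse g (deriv g (x q)) (x q) hs (hg' _ hxU) y) = y :=
      HasStrictFDerivAt.eventually_right_inverse (hs.hasStrictFDerivAt_equiv (hg' _ hxU))
    rw [hgx] at hr
    have hm := hl.continuousAt.eventually (show ∀ᶠ y in 𝓝 _, y ∈ U by rw [hl0]; exact hU.mem_nhds hxU)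
    filter_upwards [hr, hm, isOpen_ball.mem_nhds hq] with y h1 h2 h3
    exact hgi (hx y h3).1 h2 ((hx y h3).2.trans h1.symm)
  have hx0 : x 0 = 0 := hgi (hx 0 h01).1 h0 ((hx 0 h01).2.trans hg0.symm)
  refine ⟨x, fun q hq => (hxd q hq).differentiableAt.differentiableWithinAt, hx0,
    fun q hq => (hx q hq).1, ?_, ?_, ?_⟩
  · intro q hq h
    have := (hx q hq).2
    rw [h, hg0] at this; exact this.symm
  · rw [(hxd 0 h01).deriv]
    exact inv_ne_zero (hg' _ (hx 0 h01).1)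
  · intro K hK hKU
    rcases K.eq_empty_or_nonempty with rfl | hne
    · exact ⟨0, one_pos, fun q _ h => absurd h (by simp)⟩
    obtain ⟨k, hk, hkm⟩ := hK.exists_isMaxOn hne ((hgd.continuousOn.mono hKU).norm)
    refine ⟨‖g k‖, by simpa using hgm (hKU hk), ?_⟩
    intro q hq hqK
    have := hkm hqK
    simp only [mem_ofPred_eq, (hx q hq).2] at this
    exact this

/-- principal cube root -/
noncomputable def croot (M : ℂ) : ℂ := Complex.exp (Complex.log M / 3)

theorem croot_pow {M : ℂ} (hM : M ≠ 0) : croot M ^ 3 = M := by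
  rw [croot, ← Complex.exp_nat_mul]
  rw [show ((3:ℕ):ℂ) * (Complex.log M / 3) = Complex.log M by push_cast; ring]
  exact Complex.exp_log hM

theorem one_add_geom {s : ℂ} (hs : ‖s‖ < Real.sqrt 3 / 2) :
    0 < (1 + s).re ∧ (1 + s).im ^ 2 < 3 * (1 + s).re ^ 2 := by
  have h3 : ‖s‖ ^ 2 < 3 / 4 := by
    have h := Real.sq_sqrt (show (0:ℝ) ≤ 3 by norm_num)
    nlinarith [norm_nonneg s, Real.sqrt_nonneg 3]
  rw [← Complex.normSq_eq_norm_sq, Complex.normSq_apply] at h3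
  simp only [Complex.add_re, Complex.one_re, Complex.add_im, Complex.one_im, zero_add]
  constructor
  · nlinarith [mul_self_nonneg s.im]
  · nlinarith [sq_nonneg (2 * (1 + s.re) - 1/2)]

theorem arg_one_add {s : ℂ} (hs : ‖s‖ < Real.sqrt 3 / 2) :
    |(1 + s).arg| < Real.pi / 3 := by
  obtain ⟨h1, h2⟩ := one_add_geom hs
  have h0 : 1 + s ≠ 0 := fun h => by rw [h] at h1; simp at h1
  have hn : 0 < ‖1 + s‖ := norm_pos_iff.2 h0
  have h3 : |(1 + s).im / ‖1 + s‖| < Real.sqrt 3 / 2 := by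
    rw [abs_div, abs_of_pos hn, div_lt_iff₀ hn]
    apply lt_of_pow_lt_pow_left₀ 2 (by positivity)
    rw [sq_abs, mul_pow, div_pow, Real.sq_sqrt (by norm_num), ← Complex.normSq_eq_norm_sq,
      Complex.normSq_apply]
    nlinarith
  rw [Complex.arg_of_re_nonneg h1.le]
  have hs3 : Real.sqrt 3 / 2 ≤ 1 := by
    have h := Real.sq_sqrt (show (0:ℝ) ≤ 3 by norm_num)
    nlinarith [Real.sqrt_nonneg 3]
  have e : Real.arcsin (Real.sqrt 3 / 2) = Real.pi / 3 := by
    rw [← Real.sin_pi_div_three, Real.arcsin_sin] <;> linarith [Real.pi_pos]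
  rw [abs_lt] at h3 ⊢
  rw [← e, ← Real.arcsin_neg]
  exact ⟨Real.arcsin_lt_arcsin (by linarith) h3.1 (by linarith),
    Real.arcsin_lt_arcsin (by linarith) h3.2 (by linarith)⟩

theorem croot_unique {s : ℂ} (hs : ‖s‖ < Real.sqrt 3 / 2) :
    croot ((1 + s) ^ 3) = 1 + s ∧ (1 + s) ^ 3 ∈ Complex.slitPlane := by
  have h := abs_lt.1 (arg_one_add hs)
  have h0 : 1 + s ≠ 0 := fun h' => by
    have := (one_add_geom hs).1
    rw [h'] at this; simp at this
  have hl : Complex.log ((1 + s) ^ 3) = (3 : ℕ) * Complex.log (1 + s) := by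
    rw [← Complex.log_exp (x := ((3:ℕ):ℂ) * Complex.log (1 + s)), Complex.exp_nat_mul, Complex.exp_log h0]
    · simp [Complex.log_im]; linarith
    · simp [Complex.log_im]; linarith
  constructor
  · rw [croot, hl]
    rw [show ((3:ℕ):ℂ) * Complex.log (1 + s) / 3 = Complex.log (1 + s) by push_cast; ring]
    exact Complex.exp_log h0
  · rw [Complex.mem_slitPlane_iff_arg]
    refine ⟨?_, pow_ne_zero _ h0⟩
    rw [← Complex.log_im, hl]
    simp [Complex.log_im]
    linarith

theorem croot_re_im {M : ℂ} :
    0 < (croot M).re ∧ (croot M).im ^ 2 ≤ 3 * (croot M).re ^ 2 ∧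
      (M.im ≤ 0 → M ∈ Complex.slitPlane → (croot M).im ≤ 0) := by
  have hre : (croot M).re = Real.exp ((Complex.log M / 3).re) * Real.cos (M.arg / 3) := by
    rw [croot, Complex.exp_re, Complex.div_ofNat_im, Complex.log_im]
  have him : (croot M).im = Real.exp ((Complex.log M / 3).re) * Real.sin (M.arg / 3) := by
    rw [croot, Complex.exp_im, Complex.div_ofNat_im, Complex.log_im]
  have ha := Complex.arg_le_pi M
  have ha' := Complex.neg_pi_lt_arg M
  have hpi := Real.pi_pos
  have hcos : 1 / 2 ≤ Real.cos (M.arg / 3) := by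
    rw [← Real.cos_pi_div_three, ← Real.cos_abs (M.arg / 3)]
    apply Real.cos_le_cos_of_nonneg_of_le_pi (abs_nonneg _) (by linarith)
    rw [abs_le]; constructor <;> linarith
  have hE := Real.exp_pos ((Complex.log M / 3).re)
  rw [hre, him]
  refine ⟨mul_pos hE (by linarith), ?_, ?_⟩
  · rw [mul_pow, mul_pow]
    have := Real.sin_sq_add_cos_sq (M.arg / 3)
    have h2 : Real.sin (M.arg / 3) ^ 2 ≤ 3 * Real.cos (M.arg / 3) ^ 2 := by nlinarith
    nlinarith [pow_pos hE 2]
  · intro hM hs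
    have : M.arg ≤ 0 := by
      rcases hM.lt_or_eq with h | h
      · exact (Complex.arg_neg_iff.2 h).le
      · rw [Complex.mem_slitPlane_iff] at hs
        have h1 : 0 < M.re := hs.resolve_right (by simp [h])
        exact (Complex.arg_eq_zero_iff.2 ⟨h1.le, h⟩).le
    exact mul_nonpos_of_nonneg_of_nonpos hE.le
      (Real.sin_nonpos_of_nonpos_of_neg_pi_le (by linarith) (by linarith))

theorem im_h_nonpos {m : ℂ} (h1 : 0 < m.re) (h2 : m.im ^ 2 ≤ 3 * m.re ^ 2) (h3 : m.im ≤ 0) :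
    (m ^ 3 + m ^ 2 + m - 1 - m⁻¹ - (m⁻¹) ^ 2).im ≤ 0 := by
  have hn : 0 < Complex.normSq m := by
    rw [Complex.normSq_apply]; nlinarith [mul_self_nonneg m.im]
  have e1 : (m ^ 3).im ≤ 0 := by
    have : (m ^ 3).im = m.im * (3 * m.re ^ 2 - m.im ^ 2) := by
      simp [pow_succ, Complex.mul_im, Complex.mul_re]; ring
    rw [this]; exact mul_nonpos_of_nonpos_of_nonneg h3 (by linarith)
  have e2 : (m ^ 2).im ≤ 0 := by
    have : (m ^ 2).im = m.im * (2 * m.re) := by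
      simp [pow_succ, Complex.mul_im, Complex.mul_re]; ring
    rw [this]; exact mul_nonpos_of_nonpos_of_nonneg h3 (by linarith)
  have e3 : 0 ≤ (m⁻¹).im := by
    rw [Complex.inv_im]; exact div_nonneg (by linarith) hn.le
  have e4 : 0 ≤ ((m⁻¹) ^ 2).im := by
    have : ((m⁻¹) ^ 2).im = (m⁻¹).im * (2 * (m⁻¹).re) := by
      simp [pow_succ, Complex.mul_im, Complex.mul_re]; ring
    rw [this]
    refine mul_nonneg e3 (mul_nonneg (by norm_num) ?_)
    rw [Complex.inv_re]; exact div_nonneg h1.le hn.le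
  simp only [Complex.add_im, Complex.sub_im, Complex.one_im]
  linarith

/-- the planar domain -/
def UU (t : ℝ) : Set ℂ := {x | ∀ s : ℂ, ‖s‖ ≤ t → x * ((1 + s) ^ 3 - 1) ≠ 1}

theorem mem_UU {t : ℝ} {x : ℂ} : x ∈ UU t ↔ ∀ s : ℂ, ‖s‖ ≤ t → x * ((1 + s) ^ 3 - 1) ≠ 1 := Iff.rfl

theorem not_mem_UU {t : ℝ} (ht : t < Real.sqrt 3 / 2) {x : ℂ} (h : x ∉ UU t) :
    x ≠ 0 ∧ 1 + x⁻¹ ∈ Complex.slitPlane ∧ ‖croot (1 + x⁻¹) - 1‖ ≤ t := by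
  rw [mem_UU] at h
  push Not at h
  obtain ⟨s, hs, hx⟩ := h
  have hx0 : x ≠ 0 := fun h => by rw [h] at hx; simp at hx
  have hM : 1 + x⁻¹ = (1 + s) ^ 3 := by
    field_simp; linear_combination -hx
  have := croot_unique (hs.trans_lt ht)
  rw [hM, this.1]
  exact ⟨hx0, this.2, by simpa using hs⟩

theorem not_mem_UU_of {t : ℝ} {x : ℂ} (h0 : x ≠ 0) (h1 : 1 + x⁻¹ ≠ 0)
    (h : ‖croot (1 + x⁻¹) - 1‖ ≤ t) : x ∉ UU t := by
  intro hx
  apply hx _ h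
  rw [add_sub_cancel, croot_pow h1]
  field_simp; ring

open Set Filter Topology Metric in
theorem isOpen_UU (t : ℝ) : IsOpen (UU t) := by
  rw [isOpen_iff_mem_nhds]
  intro x hx
  have := (isCompact_closedBall (0:ℂ) t).eventually_forall_of_forall_eventually
    (x₀ := x) (P := fun x s => x * ((1 + s) ^ 3 - 1) ≠ 1) (by
      intro s hs
      have hc : Continuous fun p : ℂ × ℂ => p.1 * ((1 + p.2) ^ 3 - 1) := by fun_prop
      exact hc.continuousAt.eventually_ne (hx s (by simpa using hs)))
  filter_upwards [this] with y hy s hs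
  exact hy s (by simpa using hs)

open Set Filter Topology Metric in
theorem bdd_UU {t : ℝ} (ht : 0 < t) : ∃ B : ℝ, ∀ z ∈ UU t, ‖z‖ < B := by
  have hd : HasStrictDerivAt (fun s : ℂ => (1 + s) ^ 3 - 1) 3 0 := by
    have h1 : HasStrictDerivAt (fun s : ℂ => 1 + s) 1 0 := (hasStrictDerivAt_id 0).const_add 1
    have : HasStrictDerivAt (fun s : ℂ => (1 + s) ^ 3 - 1) (((3:ℕ):ℂ) * (1 + 0) ^ (3 - 1) * 1) 0 :=
      (h1.pow 3).sub_const 1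
    convert this using 1
    norm_num
  have hm := hd.map_nhds_eq (by norm_num)
  have h1 : (fun s : ℂ => (1 + s) ^ 3 - 1) '' closedBall 0 t ∈ 𝓝 (0:ℂ) := by
    have := image_mem_map (m := fun s : ℂ => (1 + s) ^ 3 - 1) (closedBall_mem_nhds (0:ℂ) ht)
    rw [hm] at this
    simpa using this
  obtain ⟨η, hη, hb⟩ := Metric.mem_nhds_iff.1 h1
  refine ⟨1 / η + 1, ?_⟩
  intro x hx
  by_contra hcon
  push Not at hcon
  have hx0 : 0 < ‖x‖ := lt_of_lt_of_le (by positivity) hcon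
  have : x⁻¹ ∈ ball (0:ℂ) η := by
    rw [mem_ball_zero_iff, norm_inv, inv_lt_comm₀ hx0 hη, ← one_div]; linarith
  obtain ⟨s, hs, hsx⟩ := hb this
  refine hx s (by simpa using hs) ?_
  simp only at hsx
  rw [hsx]
  exact mul_inv_cancel₀ (norm_pos_iff.1 hx0)

theorem zero_mem_UU (t : ℝ) : (0:ℂ) ∈ UU t := fun s _ => by simp

theorem conj_mem_UU {t : ℝ} {x : ℂ} (hx : x ∈ UU t) : conj x ∈ UU t := by
  intro s hs h
  apply hx (conj s) (by simpa using hs)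
  have := congrArg conj h
  simpa using this

theorem vert_im {a b : ℝ} (hb : 0 < b) : (1 + ((a:ℂ) + b * Complex.I)⁻¹).im < 0 := by
  have h : (1 + ((a:ℂ) + b * Complex.I)⁻¹).im = -b / Complex.normSq ((a:ℂ) + b * Complex.I) := by
    simp [Complex.inv_im]
  rw [h]
  apply div_neg_of_neg_of_pos (by linarith)
  apply Complex.normSq_pos.2
  intro h'
  have := congrArg Complex.im h'
  simp at this; exact hb.ne' this

theorem vert_ne {a b : ℝ} (hb : 0 < b) : ((a:ℂ) + b * Complex.I) ≠ 0 := by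
  intro h'
  have := congrArg Complex.im h'
  simp at this; exact hb.ne' this

theorem vert_deriv (a b : ℝ) (h0 : ((a:ℂ) + b * Complex.I) ≠ 0)
    (hs : 1 + ((a:ℂ) + b * Complex.I)⁻¹ ∈ Complex.slitPlane) :
    HasDerivAt (fun b : ℝ => croot (1 + ((a:ℂ) + b * Complex.I)⁻¹) - 1)
      (-(Complex.I / 3) * ((croot (1 + ((a:ℂ) + b * Complex.I)⁻¹)) ^ 3 - 1) ^ 2
        / (croot (1 + ((a:ℂ) + b * Complex.I)⁻¹)) ^ 2) b := by
  set x : ℂ := (a:ℂ) + b * Complex.I with hx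
  set m := croot (1 + x⁻¹) with hm
  have hM0 := Complex.slitPlane_ne_zero hs
  have hm3 : m ^ 3 = 1 + x⁻¹ := croot_pow hM0
  have hm0 : m ≠ 0 := Complex.exp_ne_zero _
  have h1 : HasDerivAt (fun b : ℝ => (a:ℂ) + b * Complex.I) (Complex.I) b := by
    have := ((hasDerivAt_id b).ofReal_comp.mul_const Complex.I).const_add (a:ℂ)
    simpa using this
  have h2 : HasDerivAt (fun b : ℝ => 1 + ((a:ℂ) + b * Complex.I)⁻¹) (-Complex.I / x ^ 2) b :=
    (h1.inv h0).const_add 1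
  have h3 := (((h2.clog_real hs).div_const 3).cexp).sub_const 1
  refine h3.congr_deriv ?_
  change m * (-Complex.I / x ^ 2 / (1 + x⁻¹) / 3) = _
  rw [hm3, add_sub_cancel_left]
  rw [show m * (-Complex.I / x ^ 2 / (1 + x⁻¹) / 3) = m * (-Complex.I / x ^ 2 / m ^ 3 / 3) by rw [hm3]]
  field_simp

theorem vert_mono {t a b b' : ℝ} (ht : t < Real.sqrt 3 / 2) (hb : 0 ≤ b) (hbb : b < b')
    (h : ((a:ℂ) + b * Complex.I) ∉ UU t) : ((a:ℂ) + b' * Complex.I) ∉ UU t := by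
  obtain ⟨h0, hs, hle⟩ := not_mem_UU ht h
  have hb' : 0 < b' := hb.trans_lt hbb
  have hall : ∀ c : ℝ, b ≤ c → ((a:ℂ) + c * Complex.I) ≠ 0 ∧
      1 + ((a:ℂ) + c * Complex.I)⁻¹ ∈ Complex.slitPlane := by
    intro c hc
    rcases hc.eq_or_lt with rfl | hc
    · exact ⟨h0, hs⟩
    · exact ⟨vert_ne (hb.trans_lt hc), Complex.mem_slitPlane_iff.2 (Or.inr (vert_im (hb.trans_lt hc)).ne)⟩
  set f : ℝ → ℂ := fun b : ℝ => croot (1 + ((a:ℂ) + b * Complex.I)⁻¹) - 1 with hf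
  have hfd : ∀ c : ℝ, b ≤ c → HasDerivAt f _ c := fun c hc => vert_deriv a c (hall c hc).1 (hall c hc).2
  have hφ : ∀ c : ℝ, b ≤ c → HasDerivAt (fun c => ‖f c‖ ^ 2) _ c := fun c hc => (hfd c hc).norm_sq
  have hanti : AntitoneOn (fun c => ‖f c‖ ^ 2) (Set.Ici b) := by
    apply antitoneOn_of_deriv_nonpos (convex_Ici b)
    · intro c hc
      exact (hφ c hc).continuousAt.continuousWithinAt
    · intro c hc
      rw [interior_Ici] at hc
      exact (hφ c hc.le).differentiableAt.differentiableWithinAt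
    · intro c hc
      rw [interior_Ici] at hc
      have hc : b < c := hc
      rw [(hφ c hc.le).deriv]
      set M := 1 + ((a:ℂ) + c * Complex.I)⁻¹ with hM
      set m := croot M with hm
      have hfc : f c = m - 1 := rfl
      have hm0 : m ≠ 0 := Complex.exp_ne_zero _
      obtain ⟨g1, g2, g3⟩ := croot_re_im (M := M)
      have g3 := g3 (vert_im (hb.trans_lt hc)).le (hall c hc.le).2
      have hI := im_h_nonpos g1 g2 g3
      rw [← hm] at hI
      have e : -(Complex.I / 3) * (m ^ 3 - 1) ^ 2 / m ^ 2
          = (m - 1) * (-(Complex.I / 3) * (m ^ 3 + m ^ 2 + m - 1 - m⁻¹ - (m⁻¹) ^ 2)) := by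
        field_simp; ring
      rw [hfc, e, Complex.inner]
      rw [show (m - 1) * (-(Complex.I / 3) * (m ^ 3 + m ^ 2 + m - 1 - m⁻¹ - (m⁻¹) ^ 2)) * conj (m - 1)
        = ((m - 1) * conj (m - 1)) * (-(Complex.I / 3) * (m ^ 3 + m ^ 2 + m - 1 - m⁻¹ - (m⁻¹) ^ 2)) by ring]
      rw [Complex.mul_conj, Complex.re_ofReal_mul]
      have e2 : ∀ w : ℂ, (-(Complex.I / 3) * w).re = w.im / 3 := by
        intro w; simp; ring
      rw [e2]
      have := Complex.normSq_nonneg (m - 1)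
      have : Complex.normSq (m - 1) * ((m ^ 3 + m ^ 2 + m - 1 - m⁻¹ - (m⁻¹) ^ 2).im / 3) ≤ 0 :=
        mul_nonpos_of_nonneg_of_nonpos this (by linarith)
      linarith
  have hfin := hanti (Set.self_mem_Ici) (Set.mem_Ici.2 hbb.le) hbb.le
  simp only at hfin
  have hlast : ‖f b'‖ ≤ ‖f b‖ := by
    exact le_of_sq_le_sq hfin (norm_nonneg _)
  exact not_mem_UU_of (hall b' hbb.le).1 (Complex.slitPlane_ne_zero (hall b' hbb.le).2) (hlast.trans hle)

theorem UU_vert {t : ℝ} (ht : t < Real.sqrt 3 / 2) {x : ℂ} (hx : x ∈ UU t) {τ : ℝ}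
    (h0 : 0 ≤ τ) (h1 : τ ≤ 1) : (x.re : ℂ) + (τ * x.im : ℝ) * Complex.I ∈ UU t := by
  rcases h1.eq_or_lt with rfl | h1
  · rw [one_mul, Complex.re_add_im]; exact hx
  have key : ∀ y : ℂ, y ∈ UU t → 0 ≤ y.im → (y.re : ℂ) + (τ * y.im : ℝ) * Complex.I ∈ UU t := by
    intro y hy hyi
    rcases hyi.eq_or_lt with h | h
    · rw [← h, mul_zero, h, Complex.re_add_im]; exact hy
    by_contra hcon
    refine vert_mono ht (by positivity) (show τ * y.im < y.im by nlinarith) hcon ?_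
    rw [Complex.re_add_im]; exact hy
  rcases le_total 0 x.im with h | h
  · exact key x hx h
  · have := conj_mem_UU (key _ (conj_mem_UU hx) (by simpa using h))
    convert this using 1
    simp

theorem UU_real {t : ℝ} (ht : t < Real.sqrt 3 / 2) {a : ℝ} (ha : (a:ℂ) ∈ UU t) {τ : ℝ}
    (h0 : 0 ≤ τ) (h1 : τ ≤ 1) : ((τ * a : ℝ) : ℂ) ∈ UU t := by
  intro s hs h
  have hs' : ‖conj s‖ ≤ t := by simpa using hs
  have hne : ((τ * a : ℝ) : ℂ) ≠ 0 := fun h' => by rw [h'] at h; simp at h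
  have e1 : (1 + conj s) ^ 3 = (1 + s) ^ 3 := by
    have h2 := congrArg conj h
    simp only [map_mul, map_sub, map_pow, map_add, map_one, Complex.conj_ofReal] at h2
    have := mul_left_cancel₀ hne (h2.trans h.symm)
    linear_combination this
  have e2 : conj s = s := by
    have u1 := (croot_unique (hs.trans_lt ht)).1
    have u2 := (croot_unique (hs'.trans_lt ht)).1
    rw [e1, u1] at u2
    exact (add_left_cancel u2).symm
  obtain ⟨r, rfl⟩ := Complex.conj_eq_iff_real.1 e2
  have hr : τ * a * ((1 + r) ^ 3 - 1) = 1 := by exact_mod_cast h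
  have hr' : |r| ≤ t := by simpa using hs
  have hc : ContinuousOn (fun s : ℝ => (1 + s) ^ 3 - 1) (Set.uIcc 0 r) := by fun_prop
  have hiv := intermediate_value_uIcc hc
  have hmem : τ * ((1 + r) ^ 3 - 1) ∈ Set.uIcc ((1 + (0:ℝ)) ^ 3 - 1) ((1 + r) ^ 3 - 1) := by
    rw [Set.mem_uIcc]
    rcases le_total 0 ((1 + r) ^ 3 - 1) with h | h
    · left; constructor <;> nlinarith
    · right; constructor <;> nlinarith
  obtain ⟨s', hs1, hs2⟩ := hiv hmem
  simp only at hs2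
  apply ha s'
  · rw [Complex.norm_real, Real.norm_eq_abs]
    refine le_trans ?_ hr'
    rw [Set.mem_uIcc] at hs1
    rcases hs1 with ⟨p, q⟩ | ⟨p, q⟩
    · rw [abs_of_nonneg p, abs_of_nonneg (p.trans q)]; exact q
    · rw [abs_of_nonpos q, abs_of_nonpos (p.trans q)]; linarith
  · have : a * ((1 + s') ^ 3 - 1) = 1 := by rw [hs2]; linarith
    exact_mod_cast this

open Set Filter Topology Metric unitInterval in
theorem sc_UU {t : ℝ} (ht : t < Real.sqrt 3 / 2) : IsSimplyConnected (UU t) := by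
  have hmem : ∀ (τ : I) (x : UU t),
      ((min 1 (2 - 2 * (τ:ℝ)) * (x:ℂ).re : ℝ) : ℂ) + (max 0 (1 - 2 * (τ:ℝ)) * (x:ℂ).im : ℝ) * Complex.I ∈ UU t := by
    intro τ x
    have hτ0 := τ.2.1
    have hτ1 := τ.2.2
    rcases le_total (τ:ℝ) (1/2) with h | h
    · rw [min_eq_left (by linarith), max_eq_right (by linarith), one_mul]
      exact UU_vert ht x.2 (by linarith) (by linarith)
    · rw [min_eq_right (by linarith), max_eq_left (by linarith)]
      have h2 := UU_vert ht x.2 (τ := 0) le_rfl zero_le_one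
      simp only [zero_mul, Complex.ofReal_zero, add_zero] at h2 ⊢
      exact UU_real ht h2 (by linarith) (by linarith)
  have : ContractibleSpace (UU t) := by
    rw [contractible_iff_id_nullhomotopic]
    refine ⟨⟨0, zero_mem_UU t⟩, ⟨?_⟩⟩
    refine { toFun := fun p => ⟨_, hmem p.1 p.2⟩, continuous_toFun := ?_, map_zero_left := ?_, map_one_left := ?_ }
    · apply Continuous.subtype_mk
      fun_prop
    · intro x
      ext
      simp
    · intro x
      ext
      simp
  exact (inferInstance : SimplyConnectedSpace (UU t))

open Set Filter Topology Metric in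
theorem log_on_ball {D : ℂ → ℂ} (hD : DifferentiableOn ℂ D (ball 0 1))
    (hne : ∀ q ∈ ball (0:ℂ) 1, D q ≠ 0) :
    ∃ κ : ℂ → ℂ, DifferentiableOn ℂ κ (ball 0 1) ∧ ∀ q ∈ ball (0:ℂ) 1, D q = Complex.exp (κ q) := by
  have hDD : ∀ q ∈ ball (0:ℂ) 1, HasDerivAt D (deriv D q) q := fun q hq =>
    (hD.differentiableAt (isOpen_ball.mem_nhds hq)).hasDerivAt
  obtain ⟨G, hG⟩ := ((hD.deriv isOpen_ball).div hD hne).isExactOn_ball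
  have h0 : (0:ℂ) ∈ ball (0:ℂ) 1 := mem_ball_self one_pos
  have hQ : ∀ q ∈ ball (0:ℂ) 1, HasDerivAt (fun q => D q * Complex.exp (- G q)) 0 q := by
    intro q hq
    refine ((hDD q hq).mul ((hG q hq).neg.cexp)).congr_deriv ?_
    have := hne q hq
    simp only [Pi.div_apply, Pi.neg_apply]
    field_simp
    ring
  have hconst : ∀ q ∈ ball (0:ℂ) 1, D q * Complex.exp (- G q) = D 0 * Complex.exp (- G 0) := by
    intro q hq
    refine isOpen_ball.is_const_of_deriv_eq_zero (convex_ball (0:ℂ) 1).isPreconnected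
      (fun q hq => (hQ q hq).differentiableAt.differentiableWithinAt)
      (fun q hq => (hQ q hq).deriv) hq h0
  refine ⟨fun q => G q + Complex.log (D 0 * Complex.exp (- G 0)), ?_, ?_⟩
  · intro q hq
    exact ((hG q hq).add_const _).differentiableAt.differentiableWithinAt
  · intro q hq
    rw [Complex.exp_add, Complex.exp_log (mul_ne_zero (hne 0 h0) (Complex.exp_ne_zero _)), ← hconst q hq,
      mul_comm, mul_assoc, ← Complex.exp_add]
    simp

open Set Filter Topology Metric in
theorem annulus_fun {t : ℝ} (ht0 : 0 < t) (ht : t < Real.sqrt 3 / 2) :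
    ∃ (X κ : ℂ → ℂ) (B : ℝ), DifferentiableOn ℂ κ (ball 0 1) ∧
      (∀ q ∈ ball (0:ℂ) 1, X q = q * Complex.exp (κ q)) ∧
      (∀ q ∈ ball (0:ℂ) 1, ‖X q‖ < B) ∧
      ∀ ε > 0, ∃ r < 1, ∀ q ∈ ball (0:ℂ) 1, r < ‖q‖ → X q ≠ 0 ∧ 1 + (X q)⁻¹ ∈ Complex.slitPlane ∧
        t < ‖croot (1 + (X q)⁻¹) - 1‖ ∧ ‖croot (1 + (X q)⁻¹) - 1‖ < t + ε := by
  obtain ⟨B, hB⟩ := bdd_UU ht0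
  obtain ⟨X, hXd, hX0, hXU, hXz, hX', hXK⟩ := riemann_map (isOpen_UU t) (sc_UU ht) ⟨B, hB⟩ (zero_mem_UU t)
  have hDd : DifferentiableOn ℂ (dslope X 0) (ball 0 1) :=
    (Complex.differentiableOn_dslope (ball_mem_nhds 0 one_pos)).2 hXd
  have hDne : ∀ q ∈ ball (0:ℂ) 1, dslope X 0 q ≠ 0 := by
    intro q hq
    rcases eq_or_ne q 0 with rfl | h
    · rw [dslope_same]; exact hX'
    · rw [dslope_of_ne _ h, slope_def_field, hX0, sub_zero, sub_zero]
      exact div_ne_zero (fun h' => h (hXz q hq h')) h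
  obtain ⟨κ, hκ, hκe⟩ := log_on_ball hDd hDne
  refine ⟨X, κ, B, hκ, ?_, fun q hq => hB _ (hXU hq), ?_⟩
  · intro q hq
    rw [← hκe q hq]
    have := sub_smul_dslope X 0 q
    simpa [hX0] using this.symm
  · intro ε hε
    set W : Set ℂ := {x | x ≠ 0 ∧ 1 + x⁻¹ ∈ Complex.slitPlane ∧ ‖croot (1 + x⁻¹) - 1‖ < t + ε} with hW
    have hWo : IsOpen W := by
      rw [isOpen_iff_mem_nhds]
      rintro x ⟨h1, h2, h3⟩
      have c1 : ContinuousAt (fun x : ℂ => 1 + x⁻¹) x := by fun_prop (disch := exact h1)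
      have c2 : ContinuousAt (fun x : ℂ => ‖croot (1 + x⁻¹) - 1‖) x :=
        (((c1.clog h2).div_const 3).cexp.sub continuousAt_const).norm
      filter_upwards [continuousAt_id.eventually_ne h1, c1.eventually (Complex.isOpen_slitPlane.mem_nhds h2),
        c2.eventually_lt continuousAt_const h3] with y a b c
      exact ⟨a, b, c⟩
    obtain ⟨r, hr, hrK⟩ := hXK (closedBall 0 B ∩ Wᶜ)
      ((isCompact_closedBall 0 B).inter_right hWo.isClosed_compl) (by
        rintro x ⟨-, hx⟩
        by_contra hU
        obtain ⟨a, b, c⟩ := not_mem_UU ht hU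
        exact hx ⟨a, b, by linarith⟩)
    refine ⟨r, hr, ?_⟩
    intro q hq hrq
    have hqW : X q ∈ W := by
      by_contra hcon
      have := hrK q hq ⟨by simpa using (hB _ (hXU hq)).le, hcon⟩
      linarith
    refine ⟨hqW.1, hqW.2.1, ?_, hqW.2.2⟩
    by_contra hcon
    push Not at hcon
    exact not_mem_UU_of hqW.1 (Complex.slitPlane_ne_zero hqW.2.1) hcon (hXU hq)

theorem circle_conj (F : ℂ → ℂ) (r : ℝ) :
    conj (∮ z in C(0, r), F z) =
      ∫ θ in (0:ℝ)..2 * Real.pi, conj (circleMap 0 r θ) * (-Complex.I) * conj (F (circleMap 0 r θ)) := by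
  rw [circleIntegral, intervalIntegral.integral_of_le Real.two_pi_pos.le,
    intervalIntegral.integral_of_le Real.two_pi_pos.le, ← integral_conj]
  congr 1
  ext θ
  simp [deriv_circleMap]

open Set Filter Topology Metric in
theorem laurent_split {f : ℂ → ℂ} {r0 r1 : ℝ} (h0 : 0 < r0) (h01 : r0 < r1) (h11 : r1 < 1)
    (hf : DifferentiableOn ℂ f {ξ | r0 < ‖ξ‖ ∧ ‖ξ‖ < 1}) :
    ∃ C : ℂ → ℂ, DifferentiableOn ℂ C (ball 0 r1) ∧ ∀ r', r1 < r' → r' < 1 →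
      ∃ A : ℂ → ℂ, DifferentiableOn ℂ A (ball 0 r') ∧
        ∀ ξ : ℂ, r1 < ‖ξ‖ → ‖ξ‖ < r' → f ξ = A ξ + conj (C (r1 ^ 2 / conj ξ)) := by
  have hopen : IsOpen {ξ : ℂ | r0 < ‖ξ‖ ∧ ‖ξ‖ < 1} :=
    (isOpen_lt continuous_const continuous_norm).inter (isOpen_lt continuous_norm continuous_const)
  have hr1 : 0 < r1 := h0.trans h01
  have hsph : ∀ r, r0 < r → r < 1 → sphere (0:ℂ) r ⊆ {ξ | r0 < ‖ξ‖ ∧ ‖ξ‖ < 1} := by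
    intro r h1 h2 z hz
    rw [mem_sphere_zero_iff_norm] at hz
    simp only [mem_ofPred_eq, hz]; exact ⟨h1, h2⟩
  have hcauchy : ∀ (g : ℂ → ℂ) (r : ℝ), 0 < r → ContinuousOn g (sphere 0 r) →
      DifferentiableOn ℂ (fun w => (2 * (Real.pi:ℂ) * Complex.I)⁻¹ • ∮ z in C(0, r), (z - w)⁻¹ • g z) (ball 0 r) := by
    intro g r hr hg
    lift r to NNReal using hr.le
    have := hasFPowerSeriesOn_cauchy_integral (f := g) (c := 0) (R := r)
      (hg.circleIntegrable hr.le) (by exact_mod_cast hr)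
    have h2 := this.differentiableOn
    rw [Metric.eball_coe] at h2
    exact h2
  refine ⟨fun η => η * ((2 * (Real.pi:ℂ) * Complex.I)⁻¹ • ∮ z in C(0, r1), (z - η)⁻¹ • (conj (f z) / z)), ?_, ?_⟩
  · refine differentiableOn_id.mul (hcauchy _ r1 hr1 ?_)
    refine ContinuousOn.div (Complex.continuous_conj.comp_continuousOn (hf.continuousOn.mono (hsph r1 h01 h11)))
      continuousOn_id ?_
    intro z hz h
    rw [mem_sphere_zero_iff_norm] at hz
    rw [h, norm_zero] at hz; exact hr1.ne hz
  · intro r' h1 h2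
    refine ⟨fun w => (2 * (Real.pi:ℂ) * Complex.I)⁻¹ • ∮ z in C(0, r'), (z - w)⁻¹ • f z,
      hcauchy f r' (hr1.trans h1) (hf.continuousOn.mono (hsph r' (h01.trans h1) h2)), ?_⟩
    intro ξ hξ1 hξ2
    have hξ0 : ξ ≠ 0 := fun h => by rw [h, norm_zero] at hξ1; linarith
    have hξm : ξ ∈ {ξ : ℂ | r0 < ‖ξ‖ ∧ ‖ξ‖ < 1} := ⟨h01.trans hξ1, hξ2.trans h2⟩
    have hpi : (2 * (Real.pi:ℂ) * Complex.I) ≠ 0 := Complex.two_pi_I_ne_zero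
    have hC : conj ((r1 ^ 2 / conj ξ) * ((2 * (Real.pi:ℂ) * Complex.I)⁻¹ •
        ∮ z in C(0, r1), (z - (r1 ^ 2 / conj ξ))⁻¹ • (conj (f z) / z)))
        = - ((2 * (Real.pi:ℂ) * Complex.I)⁻¹ • ∮ z in C(0, r1), (z - ξ)⁻¹ • f z) := by
      rw [smul_eq_mul, map_mul, map_mul, circle_conj, smul_eq_mul, circleIntegral]
      have e1 : conj ((2 * (Real.pi:ℂ) * Complex.I)⁻¹) = -(2 * (Real.pi:ℂ) * Complex.I)⁻¹ := by
        simp [Complex.conj_ofNat]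
      rw [e1]
      rw [show ∀ a b c : ℂ, a * (-b * c) = -(b * (a * c)) by intros; ring]
      congr 2
      rw [← intervalIntegral.integral_const_mul]
      congr 1
      ext θ
      set s := circleMap 0 r1 θ with hs
      have hsn : ‖s‖ = r1 := by simp [hs, abs_of_pos hr1]
      have hs0 : s ≠ 0 := fun h => by rw [h, norm_zero] at hsn; exact hr1.ne hsn
      have hr1c : (r1:ℂ) ≠ 0 := by exact_mod_cast hr1.ne'
      have hsc : conj s = r1 ^ 2 / s := by
        rw [eq_div_iff hs0, Complex.conj_mul', hsn]
      have hne : s - ξ ≠ 0 := fun h => by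
        rw [← sub_eq_zero.1 h] at hξ1; linarith
      have hne' : ξ - s ≠ 0 := fun h => hne (by linear_combination -h)
      simp only [deriv_circleMap, ← hs, smul_eq_mul, map_mul, map_div₀, map_inv₀, map_sub, map_pow,
        Complex.conj_conj, Complex.conj_ofReal, hsc]
      have e3 : (r1:ℂ) ^ 2 / s - r1 ^ 2 / ξ = r1 ^ 2 * (ξ - s) / (s * ξ) := by
        field_simp
      rw [e3]
      have e4 : s - ξ = -(ξ - s) := by ring
      rw [e4]
      field_simp
    rw [hC]
    set g : ℂ → ℂ := dslope f ξ with hg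
    have hgd : DifferentiableOn ℂ g {ξ | r0 < ‖ξ‖ ∧ ‖ξ‖ < 1} :=
      (Complex.differentiableOn_dslope (hopen.mem_nhds hξm)).2 hf
    have hint := Complex.circleIntegral_eq_of_differentiable_on_annulus_off_countable (c := 0) hr1 h1.le
      (f := g) countable_empty
      (hgd.continuousOn.mono (by
        rintro z ⟨a, b⟩
        simp only [mem_closedBall, dist_zero_right, mem_ball, not_lt] at a b
        exact ⟨by linarith, by linarith⟩))
      (by
        rintro z ⟨⟨a, b⟩, -⟩
        simp only [mem_closedBall, dist_zero_right, mem_ball, not_le] at a b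
        exact hgd.differentiableAt (hopen.mem_nhds ⟨by linarith, by linarith⟩))
    have hexp : ∀ r, r0 < r → r < 1 → r ≠ ‖ξ‖ →
        (∮ z in C(0, r), g z) = (∮ z in C(0, r), (z - ξ)⁻¹ • f z) - (∮ z in C(0, r), (z - ξ)⁻¹) * f ξ := by
      intro r ha hb hrξ
      have hr : 0 < r := h0.trans ha
      have hne : ∀ z ∈ sphere (0:ℂ) r, z - ξ ≠ 0 := by
        intro z hz h
        rw [mem_sphere_zero_iff_norm] at hz
        rw [sub_eq_zero.1 h] at hz; exact hrξ hz.symm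
      have ci : ContinuousOn (fun z : ℂ => (z - ξ)⁻¹) (sphere 0 r) :=
        ContinuousOn.inv₀ (by fun_prop) hne
      have cf := hf.continuousOn.mono (hsph r ha hb)
      have i1 : CircleIntegrable (fun z => (z - ξ)⁻¹ • f z) 0 r := (ci.smul cf).circleIntegrable hr.le
      have i2 : CircleIntegrable (fun z => f ξ * (z - ξ)⁻¹) 0 r :=
        (continuousOn_const.mul ci).circleIntegrable hr.le
      rw [mul_comm _ (f ξ), ← circleIntegral.integral_const_mul, ← circleIntegral.integral_sub i1 i2]
      refine circleIntegral.integral_congr hr.le ?_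
      intro z hz
      have hzne := hne z hz
      simp only [hg]
      rw [dslope_of_ne _ (sub_ne_zero.1 hzne), slope_def_field, smul_eq_mul]
      field_simp
    rw [hexp r' (h01.trans h1) h2 hξ2.ne', hexp r1 h01 h11 hξ1.ne,
      circleIntegral.integral_sub_inv_of_mem_ball (by simpa using hξ2)] at hint
    have hz : (∮ z in C(0, r1), (z - ξ)⁻¹) = 0 := by
      have hne : ∀ z : ℂ, ‖z‖ ≤ r1 → z - ξ ≠ 0 := by
        intro z hz h
        rw [sub_eq_zero.1 h] at hz; linarith
      apply Complex.circleIntegral_eq_zero_of_differentiable_on_off_countable hr1.le countable_empty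
      · exact ContinuousOn.inv₀ (by fun_prop) (fun z hz => hne z (by simpa using hz))
      · rintro z ⟨hz, -⟩
        have := hne z (by simpa using (mem_ball_zero_iff.1 hz).le)
        fun_prop (disch := exact this)
    rw [hz, zero_mul, sub_zero] at hint
    rw [← sub_eq_add_neg, ← smul_sub, ← hint, sub_sub_cancel, smul_eq_mul]
    field_simp

theorem bdry_alg {ξ E s a : ℂ} {r c : ℝ} (hr : 0 < r) (hξ : ‖ξ‖ = r) (hc : 0 < c)
    (h : 3 * ξ ^ 3 * s * E ^ 2 = c) :
    s * (ξ * (E * (a * (ξ / r) + conj a))) = ‖s‖ * conj (ξ * (E * (a * (ξ / r) + conj a))) := by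
  set Z := ξ * (E * (a * (ξ / r) + conj a)) with hZ
  have hξ0 : ξ ≠ 0 := fun h' => by rw [h', norm_zero] at hξ; exact hr.ne hξ
  have hrc : (r:ℂ) ≠ 0 := by exact_mod_cast hr.ne'
  have hxc : ξ * conj ξ = (r:ℂ) ^ 2 := by rw [Complex.mul_conj', hξ]
  set p : ℝ := c / (3 * r) * ‖a * (ξ / r) + conj a‖ ^ 2 with hp
  have hp0 : 0 ≤ p := by positivity
  have key : Z ^ 2 * s = (p : ℂ) := by
    have e1 : ((‖a * (ξ / r) + conj a‖ : ℝ) : ℂ) ^ 2 = (a * (ξ / r) + conj a) * (conj a * (conj ξ / r) + a) := by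
      rw [← Complex.mul_conj']
      simp
    have e2 : (p : ℂ) = c / (3 * r) * ((a * (ξ / r) + conj a) * (conj a * (conj ξ / r) + a)) := by
      rw [hp]; push_cast; rw [e1]
    have e3 : ξ * (conj a * (conj ξ / r) + a) = r * (a * (ξ / r) + conj a) := by
      field_simp
      linear_combination (conj a) * hxc
    have e4 : ξ * (Z ^ 2 * s) = ξ * (p:ℂ) := by
      rw [e2, hZ, ← h]
      have : ξ * (3 * ξ ^ 3 * s * E ^ 2 / (3 * r) * ((a * (ξ / r) + conj a) * (conj a * (conj ξ / r) + a)))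
        = 3 * ξ ^ 3 * s * E ^ 2 / (3 * r) * ((a * (ξ / r) + conj a) * (ξ * (conj a * (conj ξ / r) + a))) := by ring
      rw [this, e3]
      field_simp
    exact mul_left_cancel₀ hξ0 e4
  have hn : ‖Z‖ ^ 2 * ‖s‖ = p := by
    have := congrArg norm key
    rw [norm_mul, norm_pow, Complex.norm_real, Real.norm_of_nonneg hp0] at this
    exact this
  rcases eq_or_ne Z 0 with h0 | h0
  · rw [h0]; simp
  · apply mul_left_cancel₀ h0
    have h1 : Z * conj Z = (‖Z‖:ℂ) ^ 2 := Complex.mul_conj' Z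
    have h2 : ((‖Z‖:ℂ)) ^ 2 * ‖s‖ = (p:ℂ) := by exact_mod_cast hn
    linear_combination key - h2 - (‖s‖:ℂ) * h1

theorem psi_re {s : ℂ} (hs : ‖s‖ < Real.sqrt 3 / 2) : 0 < (1 + s + s ^ 2 / 3).re := by
  have h3 : ‖s‖ ^ 2 < 3 / 4 := by
    have h := Real.sq_sqrt (show (0:ℝ) ≤ 3 by norm_num)
    nlinarith [norm_nonneg s, Real.sqrt_nonneg 3]
  rw [← Complex.normSq_eq_norm_sq, Complex.normSq_apply] at h3
  have : (1 + s + s ^ 2 / 3).re = 1 + s.re + (s.re * s.re - s.im * s.im) / 3 := by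
    simp [pow_two, Complex.mul_re]
  rw [this]
  nlinarith [sq_nonneg (s.re + 3/4)]

theorem solve_a {ζ b : ℂ} (hζ : ‖ζ‖ ≤ 1 / 2) : ∃ a : ℂ, a * ζ + conj a = b ∧ ‖a‖ ≤ 2 * ‖b‖ := by
  have h1 : ‖ζ‖ ^ 2 ≤ 1 / 4 := by nlinarith [norm_nonneg ζ]
  have hd : ((1 - ‖ζ‖ ^ 2 : ℝ) : ℂ) ≠ 0 := by
    have : (1 - ‖ζ‖ ^ 2 : ℝ) ≠ 0 := by linarith
    exact_mod_cast this
  have hzc : ζ * conj ζ = (‖ζ‖:ℂ) ^ 2 := Complex.mul_conj' ζ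
  refine ⟨(conj b - conj ζ * b) / ((1 - ‖ζ‖ ^ 2 : ℝ) : ℂ), ?_, ?_⟩
  · rw [map_div₀, Complex.conj_ofReal, div_mul_eq_mul_div, ← add_div, div_eq_iff hd]
    push_cast
    simp only [map_sub, map_mul, Complex.conj_conj]
    linear_combination -b * hzc
  · rw [norm_div, Complex.norm_real, Real.norm_of_nonneg (by linarith), div_le_iff₀ (by linarith)]
    have := norm_sub_le (conj b) (conj ζ * b)
    rw [norm_mul, Complex.norm_conj, Complex.norm_conj] at this
    nlinarith [norm_nonneg b]

set_option maxHeartbeats 2000000 in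
open Set Filter Topology Metric in
theorem discs {t : ℝ} (ht0 : 0 < t) (ht : t < Real.sqrt 3 / 2) :
    ∃ η0 > 0, ∃ c4 > 0, ∀ ε > 0, ∀ X0 κ0 : ℂ, ‖X0‖ < η0 →
      ∃ (Z V : ℂ → ℂ) (r : ℝ) (ξ0 : ℂ), 0 < r ∧ DifferentiableOn ℂ Z (closedBall 0 r) ∧
        DifferentiableOn ℂ V (closedBall 0 r) ∧ ξ0 ∈ ball (0:ℂ) r ∧ Z ξ0 = X0 * κ0 ∧
        V ξ0 = (X0 ^ 3 + 1) * κ0 ^ 3 ∧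
        ∀ ξ ∈ sphere (0:ℂ) r, ‖Z ξ‖ ≤ c4 * ‖κ0‖ ∧
          ∃ τ : ℝ, t ≤ τ ∧ τ ≤ t + ε ∧ V ξ = (Z ξ + τ * conj (Z ξ)) ^ 3 := by
  obtain ⟨X, κ, B, hκ, hX, -, hann⟩ := annulus_fun ht0 ht
  have hsq1 : Real.sqrt 3 / 2 < 1 := by
    have h := Real.sq_sqrt (show (0:ℝ) ≤ 3 by norm_num)
    nlinarith [Real.sqrt_nonneg 3]
  obtain ⟨rr, hrr, hann0⟩ := hann (Real.sqrt 3 / 2 - t) (by linarith)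
  -- cube bookkeeping
  have cube : ∀ ρ < (1:ℝ), ∃ r < 1, 1 / 2 < r ∧ ∀ ξ : ℂ, r < ‖ξ‖ → ρ < ‖ξ ^ 3‖ := by
    intro ρ hρ
    refine ⟨max (3 / 4) (1 - (1 - ρ) / 3), max_lt (by norm_num) (by linarith),
      lt_of_lt_of_le (by norm_num) (le_max_left _ _), ?_⟩
    intro ξ hξ
    rw [norm_pow]
    have h1 : 1 - (1 - ρ) / 3 < ‖ξ‖ := (le_max_right _ _).trans_lt hξ
    have h2 : 3 / 4 < ‖ξ‖ := (le_max_left _ _).trans_lt hξ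
    nlinarith [mul_nonneg (sq_nonneg (‖ξ‖ - 1)) (show 0 ≤ ‖ξ‖ + 2 by linarith)]
  have cube1 : ∀ ξ : ℂ, ‖ξ‖ < 1 → ξ ^ 3 ∈ ball (0:ℂ) 1 := by
    intro ξ h
    rw [mem_ball_zero_iff, norm_pow]
    exact pow_lt_one₀ (norm_nonneg _) h (by norm_num)
  obtain ⟨r0, hr01, hr0h, hr0c⟩ := cube rr hrr
  set kt : ℂ → ℂ := fun ξ => κ (ξ ^ 3) with hkt
  have hktd : DifferentiableOn ℂ kt (ball 0 1) :=
    hκ.comp (by fun_prop) (fun ξ hξ => cube1 ξ (by simpa using hξ))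
  set s : ℂ → ℂ := fun ξ => croot (1 + (X (ξ ^ 3))⁻¹) - 1 with hs
  have hXe : ∀ ξ : ℂ, ‖ξ‖ < 1 → X (ξ ^ 3) = ξ ^ 3 * Complex.exp (kt ξ) := fun ξ h => hX _ (cube1 ξ h)
  have hsprop : ∀ ξ : ℂ, r0 < ‖ξ‖ → ‖ξ‖ < 1 → X (ξ ^ 3) ≠ 0 ∧ 1 + (X (ξ ^ 3))⁻¹ ∈ Complex.slitPlane ∧
      t < ‖s ξ‖ ∧ ‖s ξ‖ < Real.sqrt 3 / 2 := by
    intro ξ h1 h2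
    obtain ⟨a, b, c, d⟩ := hann0 _ (cube1 ξ h2) (hr0c ξ h1)
    exact ⟨a, b, c, by simpa using d⟩
  have hopen : IsOpen {ξ : ℂ | r0 < ‖ξ‖ ∧ ‖ξ‖ < 1} :=
    (isOpen_lt continuous_const continuous_norm).inter (isOpen_lt continuous_norm continuous_const)
  have hXd : DifferentiableOn ℂ (fun ξ => X (ξ ^ 3)) {ξ | r0 < ‖ξ‖ ∧ ‖ξ‖ < 1} := by
    have : DifferentiableOn ℂ (fun ξ => ξ ^ 3 * Complex.exp (kt ξ)) {ξ | r0 < ‖ξ‖ ∧ ‖ξ‖ < 1} := by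
      refine DifferentiableOn.mul (by fun_prop) (DifferentiableOn.cexp (hktd.mono ?_))
      intro ξ hξ; simpa using hξ.2
    exact this.congr (fun ξ hξ => hXe ξ hξ.2)
  have hsd : DifferentiableOn ℂ s {ξ | r0 < ‖ξ‖ ∧ ‖ξ‖ < 1} := by
    refine DifferentiableOn.sub ?_ (differentiableOn_const _)
    refine DifferentiableOn.cexp ?_
    refine DifferentiableOn.div_const ?_ 3
    refine DifferentiableOn.clog ?_ (fun ξ hξ => (hsprop ξ hξ.1 hξ.2).2.1)
    refine DifferentiableOn.add (differentiableOn_const _) ?_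
    exact hXd.inv (fun ξ hξ => (hsprop ξ hξ.1 hξ.2).1)
  have hs3 : ∀ ξ : ℂ, r0 < ‖ξ‖ → ‖ξ‖ < 1 → (1 + s ξ) ^ 3 = 1 + (X (ξ ^ 3))⁻¹ := by
    intro ξ h1 h2
    have := croot_pow (Complex.slitPlane_ne_zero (hsprop ξ h1 h2).2.1)
    rw [← this]; simp [hs]
  set ψ : ℂ → ℂ := fun ξ => 1 + s ξ + (s ξ) ^ 2 / 3 with hψ
  have hψre : ∀ ξ : ℂ, r0 < ‖ξ‖ → ‖ξ‖ < 1 → 0 < (ψ ξ).re := fun ξ h1 h2 => psi_re (hsprop ξ h1 h2).2.2.2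
  have hψd : DifferentiableOn ℂ (fun ξ => Complex.log (ψ ξ)) {ξ | r0 < ‖ξ‖ ∧ ‖ξ‖ < 1} := by
    refine DifferentiableOn.clog ?_ (fun ξ hξ => Complex.mem_slitPlane_iff.2 (Or.inl (hψre ξ hξ.1 hξ.2)))
    exact (hsd.const_add 1).add ((hsd.pow 2).div_const 3)
  set r1 := (r0 + 1) / 2 with hr1
  have h01 : r0 < r1 := by rw [hr1]; linarith
  have h11 : r1 < 1 := by rw [hr1]; linarith
  have hr1p : 0 < r1 := by linarith
  obtain ⟨C, hC, hsplit⟩ := laurent_split (by linarith) h01 h11 hψd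
  set rs := (r1 + 1) / 2 with hrs
  have hrs1 : r1 < rs := by rw [hrs]; linarith
  have hrs2 : rs < 1 := by rw [hrs]; linarith
  -- bound for C
  obtain ⟨MC, hMC⟩ : ∃ MC : ℝ, ∀ η ∈ closedBall (0:ℂ) (r1 ^ 2 / rs), ‖C η‖ ≤ MC := by
    refine (isCompact_closedBall (0:ℂ) (r1 ^ 2 / rs)).exists_bound_of_continuousOn (hC.continuousOn.mono ?_)
    apply closedBall_subset_ball
    rw [div_lt_iff₀ (by linarith)]; nlinarith
  obtain ⟨Mk, hMk⟩ : ∃ Mk : ℝ, ∀ ξ ∈ closedBall (0:ℂ) (1 / 4), ‖Complex.exp (kt ξ / 3)‖ ≤ Mk := by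
    refine (isCompact_closedBall (0:ℂ) (1 / 4)).exists_bound_of_continuousOn ?_
    exact ((hktd.continuousOn.mono (closedBall_subset_ball (by norm_num))).div_const 3).cexp
  have hMk0 : 0 < Mk := by
    have := hMk 0 (by simp)
    exact (norm_pos_iff.2 (Complex.exp_ne_zero _)).trans_le this
  -- reaching X0
  obtain ⟨η0, hη0, hreach⟩ : ∃ η0 > 0, ∀ X0 : ℂ, ‖X0‖ < η0 →
      ∃ ξ0 : ℂ, ‖ξ0‖ < 1 / 4 ∧ ξ0 * Complex.exp (kt ξ0 / 3) = X0 := by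
    set φ : ℂ → ℂ := fun ξ => ξ * Complex.exp (kt ξ / 3) with hφ
    have hφd : DifferentiableOn ℂ φ (ball 0 1) := differentiableOn_id.mul ((hktd.div_const 3).cexp)
    have h0b : (0:ℂ) ∈ ball (0:ℂ) 1 := mem_ball_self one_pos
    have hstrict : HasStrictDerivAt φ (deriv φ 0) 0 :=
      ((hφd.analyticOnNhd isOpen_ball) 0 h0b).hasStrictDerivAt
    have hder : deriv φ 0 = Complex.exp (kt 0 / 3) := by
      have h1 : HasDerivAt (fun ξ : ℂ => Complex.exp (kt ξ / 3)) (deriv (fun ξ : ℂ => Complex.exp (kt ξ / 3)) 0) 0 :=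
        (((hktd.div_const 3).cexp).differentiableAt (isOpen_ball.mem_nhds h0b)).hasDerivAt
      have h2 := (hasDerivAt_id (0:ℂ)).mul h1
      have h3 : deriv φ 0 = _ := h2.deriv
      rw [h3]; simp
    have hm := hstrict.map_nhds_eq (by rw [hder]; exact Complex.exp_ne_zero _)
    have h1 : φ '' ball 0 (1/4) ∈ 𝓝 (0:ℂ) := by
      have := image_mem_map (m := φ) (ball_mem_nhds (0:ℂ) (show (0:ℝ) < 1/4 by norm_num))
      rw [hm] at this
      simpa [hφ] using this
    obtain ⟨η, hη, hb⟩ := Metric.mem_nhds_iff.1 h1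
    refine ⟨η, hη, ?_⟩
    intro X0 hX0
    obtain ⟨ξ0, h2, h3⟩ := hb (mem_ball_zero_iff.2 hX0)
    exact ⟨ξ0, by simpa using h2, h3⟩
  set c1 := Real.sqrt (Real.exp (-2 * MC) / 3) with hc1
  set c2 := Real.sqrt (8 * Real.exp (2 * MC) / (3 * t)) with hc2
  have hc1p : 0 < c1 := Real.sqrt_pos.2 (by positivity)
  have hc2p : 0 < c2 := Real.sqrt_pos.2 (by positivity)
  refine ⟨η0, hη0, 4 * c2 * Mk / c1, by positivity, ?_⟩
  intro ε hε X0 κ0 hX0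
  obtain ⟨ξ0, hξ0, hξX⟩ := hreach X0 hX0
  obtain ⟨re, hre, hanne⟩ := hann ε hε
  obtain ⟨r2, hr2, -, hr2c⟩ := cube re hre
  set r := (max rs r2 + 1) / 2 with hr
  have hmx : max rs r2 < 1 := max_lt hrs2 hr2
  have hrrs : rs < r := by have := le_max_left rs r2; rw [hr]; linarith
  have hrr2 : r2 < r := by have := le_max_right rs r2; rw [hr]; linarith
  have hr_1 : r < 1 := by rw [hr]; linarith
  have hr_h : 1 / 2 < r := by linarith
  have hr_p : 0 < r := by linarith
  obtain ⟨A, hA, hAC⟩ := hsplit ((r + 1) / 2) (by linarith) (by linarith)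
  set E : ℂ → ℂ := fun ξ => Complex.exp ((kt ξ + A ξ - C (r1 ^ 2 * ξ / r ^ 2)) / 2) with hE
  have hrc : (r:ℂ) ≠ 0 := by exact_mod_cast hr_p.ne'
  have hηn : ∀ ξ : ℂ, ‖ξ‖ ≤ r → ‖(r1:ℂ) ^ 2 * ξ / r ^ 2‖ ≤ r1 ^ 2 / rs := by
    intro ξ h
    rw [norm_div, norm_mul, norm_pow, norm_pow, Complex.norm_real, Complex.norm_real,
      Real.norm_of_nonneg hr1p.le, Real.norm_of_nonneg hr_p.le]
    rw [div_le_div_iff₀ (by positivity) (by linarith), mul_assoc]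
    apply mul_le_mul_of_nonneg_left _ (by positivity)
    nlinarith [norm_nonneg ξ]
  have hηb : ∀ ξ : ℂ, ‖ξ‖ ≤ r → (r1:ℂ) ^ 2 * ξ / r ^ 2 ∈ ball (0:ℂ) r1 := by
    intro ξ h
    rw [mem_ball_zero_iff]
    refine (hηn ξ h).trans_lt ?_
    rw [div_lt_iff₀ (by linarith)]; nlinarith
  have hkr : DifferentiableOn ℂ kt (closedBall 0 r) := hktd.mono (closedBall_subset_ball hr_1)
  have hEd : DifferentiableOn ℂ E (closedBall 0 r) := by
    refine DifferentiableOn.cexp (DifferentiableOn.div_const ?_ 2)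
    refine (hkr.add (hA.mono (closedBall_subset_ball (by linarith)))).sub ?_
    exact hC.comp (by fun_prop) (fun ξ hξ => hηb ξ (by simpa using hξ))
  have hEne : ∀ ξ, E ξ ≠ 0 := fun ξ => Complex.exp_ne_zero _
  have hbdE : ∀ ξ ∈ sphere (0:ℂ) r, 3 * ξ ^ 3 * s ξ * E ξ ^ 2
      = (Real.exp (-2 * (C (r1 ^ 2 * ξ / r ^ 2)).re) : ℝ) := by
    intro ξ hξ
    rw [mem_sphere_zero_iff_norm] at hξ
    have hξ0' : ξ ≠ 0 := fun h => by rw [h, norm_zero] at hξ; exact hr_p.ne hξ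
    have hcx : conj ξ ≠ 0 := by simpa using hξ0'
    have a1 : r0 < ‖ξ‖ := by linarith
    have a2 : ‖ξ‖ < 1 := by linarith
    have hη : (r1:ℂ) ^ 2 / conj ξ = r1 ^ 2 * ξ / r ^ 2 := by
      have : ξ * conj ξ = (r:ℂ) ^ 2 := by rw [Complex.mul_conj', hξ]
      rw [← this]; field_simp
    have hspl := hAC ξ (by linarith) (by linarith)
    rw [hη] at hspl
    set c := C (r1 ^ 2 * ξ / r ^ 2) with hc
    have hψ0 : ψ ξ ≠ 0 := fun h => by
      have := hψre ξ a1 a2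
      rw [h] at this; simp at this
    have hE2 : E ξ ^ 2 = Complex.exp (kt ξ) * ψ ξ * Complex.exp ((-2 * c.re : ℝ) : ℂ) := by
      rw [hE]
      simp only
      rw [← Complex.exp_nat_mul, ← hc]
      rw [← Complex.exp_log hψ0, ← Complex.exp_add, ← Complex.exp_add]
      congr 1
      rw [hspl]
      have : c + conj c = ((2 * c.re : ℝ) : ℂ) := Complex.add_conj c
      push_cast at this ⊢
      linear_combination -this
    rw [hE2]
    have hx := hXe ξ a2
    have h3 := hs3 ξ a1 a2
    have hX0' := (hsprop ξ a1 a2).1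
    have h4 : 3 * X (ξ ^ 3) * s ξ * ψ ξ = 1 := by
      have : X (ξ ^ 3) * ((1 + s ξ) ^ 3 - 1) = 1 := by
        rw [h3, add_sub_cancel_left, mul_inv_cancel₀ hX0']
      rw [hψ]; linear_combination this
    rw [hx] at h4
    push_cast
    linear_combination Complex.exp (-2 * (c.re:ℂ)) * h4
  have hEnorm : ∀ ξ ∈ sphere (0:ℂ) r, c1 ≤ ‖E ξ‖ ∧ ‖E ξ‖ ≤ c2 := by
    intro ξ hξ
    have hb := hbdE ξ hξ
    rw [mem_sphere_zero_iff_norm] at hξ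
    obtain ⟨-, -, hs1, hs2⟩ := hsprop ξ (by linarith) (by linarith)
    have hCb := hMC _ (mem_closedBall_zero_iff.2 (hηn ξ hξ.le))
    set c := C (r1 ^ 2 * ξ / r ^ 2) with hc
    have hre := abs_le.1 ((Complex.abs_re_le_norm c).trans hCb)
    have hn := congrArg norm hb
    rw [norm_mul, norm_mul, norm_mul, norm_pow, norm_pow, hξ, Complex.norm_real,
      Real.norm_of_nonneg (Real.exp_pos _).le, Complex.norm_ofNat] at hn
    have e1 : Real.exp (-2 * MC) ≤ Real.exp (-2 * c.re) := Real.exp_le_exp.2 (by linarith)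
    have e2 : Real.exp (-2 * c.re) ≤ Real.exp (2 * MC) := Real.exp_le_exp.2 (by linarith)
    have hs0 : 0 < ‖s ξ‖ := ht0.trans hs1
    have hr3 : r ^ 3 ≤ 1 := pow_le_one₀ hr_p.le hr_1.le
    have hr3' : 1 / 8 ≤ r ^ 3 := by
      have : (1/2:ℝ) ^ 3 ≤ r ^ 3 := pow_le_pow_left₀ (by norm_num) hr_h.le 3
      norm_num at this ⊢; exact this
    have hEE := sq_nonneg ‖E ξ‖
    constructor
    · rw [hc1]
      apply Real.sqrt_le_iff.2 ⟨norm_nonneg _, ?_⟩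
      rw [div_le_iff₀ (by norm_num)]
      have : r ^ 3 * ‖s ξ‖ ≤ 1 := mul_le_one₀ hr3 hs0.le (by linarith)
      have h := mul_le_mul_of_nonneg_right this hEE
      linarith only [h, hn, e1]
    · rw [hc2]
      apply Real.le_sqrt_of_sq_le
      rw [le_div_iff₀ (by positivity)]
      have : 1 / 8 * t ≤ r ^ 3 * ‖s ξ‖ := mul_le_mul hr3' hs1.le ht0.le (by positivity)
      have h := mul_le_mul_of_nonneg_right this hEE
      linarith only [h, hn, e2]
  have hξ0r : ξ0 ∈ ball (0:ℂ) r := by rw [mem_ball_zero_iff]; linarith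
  have hE0 : ‖(E ξ0)⁻¹‖ ≤ c1⁻¹ := by
    have hdc : DiffContOnCl ℂ (fun z => (E z)⁻¹) (ball 0 r) := by
      apply DifferentiableOn.diffContOnCl
      rw [closure_ball _ hr_p.ne']
      exact hEd.inv (fun z _ => hEne z)
    refine Complex.norm_le_of_forall_mem_frontier_norm_le isBounded_ball hdc ?_ (subset_closure hξ0r)
    rw [frontier_ball _ hr_p.ne']
    intro z hz
    rw [norm_inv]
    exact inv_anti₀ hc1p (hEnorm z hz).1
  obtain ⟨a, ha, han⟩ := solve_a (ζ := ξ0 / r) (b := κ0 * Complex.exp (kt ξ0 / 3) * (E ξ0)⁻¹) (by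
    rw [norm_div, Complex.norm_real, Real.norm_of_nonneg hr_p.le, div_le_iff₀ hr_p]; linarith)
  have hbn : ‖κ0 * Complex.exp (kt ξ0 / 3) * (E ξ0)⁻¹‖ ≤ ‖κ0‖ * Mk * c1⁻¹ := by
    rw [norm_mul, norm_mul]
    have := hMk ξ0 (by simpa using hξ0.le)
    gcongr
  have hyd : DifferentiableOn ℂ (fun ξ => E ξ * (a * (ξ / r) + conj a)) (closedBall 0 r) :=
    hEd.mul (by fun_prop)
  have hy0 : E ξ0 * (a * (ξ0 / r) + conj a) = κ0 * Complex.exp (kt ξ0 / 3) := by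
    rw [ha]; have := hEne ξ0; field_simp
  have hexp3 : Complex.exp (kt ξ0 / 3) ^ 3 = Complex.exp (kt ξ0) := by
    rw [← Complex.exp_nat_mul]; congr 1; push_cast; ring
  refine ⟨fun ξ => ξ * (E ξ * (a * (ξ / r) + conj a)),
    fun ξ => (ξ ^ 3 + Complex.exp (- kt ξ)) * (E ξ * (a * (ξ / r) + conj a)) ^ 3, r, ξ0, hr_p,
    differentiableOn_id.mul hyd, ?_, hξ0r, ?_, ?_, ?_⟩
  · exact (DifferentiableOn.add (by fun_prop) hkr.neg.cexp).mul (hyd.pow 3)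
  · simp only
    rw [hy0, ← hξX]; ring
  · simp only
    rw [hy0, ← hξX, mul_pow, mul_pow, hexp3, Complex.exp_neg]
    have := Complex.exp_ne_zero (kt ξ0)
    field_simp
  · intro ξ hξ
    have hb := hbdE ξ hξ
    have hξn := mem_sphere_zero_iff_norm.1 hξ
    have hbd := bdry_alg (a := a) hr_p hξn (Real.exp_pos _) hb
    have a1 : r0 < ‖ξ‖ := by linarith
    have a2 : ‖ξ‖ < 1 := by linarith
    constructor
    · simp only
      rw [norm_mul, norm_mul, hξn]
      have h1 : ‖a * (ξ / r) + conj a‖ ≤ 2 * ‖a‖ := by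
        refine (norm_add_le _ _).trans ?_
        rw [norm_mul, norm_div, hξn, Complex.norm_real, Real.norm_of_nonneg hr_p.le, div_self hr_p.ne',
          Complex.norm_conj]
        linarith
      have h2 := (hEnorm ξ hξ).2
      calc r * (‖E ξ‖ * ‖a * (ξ / r) + conj a‖) ≤ 1 * (c2 * (2 * (2 * (‖κ0‖ * Mk * c1⁻¹)))) := by
            gcongr
            linarith
        _ = 4 * c2 * Mk / c1 * ‖κ0‖ := by field_simp; ring
    · obtain ⟨-, -, u1, u2⟩ := hanne _ (cube1 ξ a2) (hr2c ξ (by linarith))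
      refine ⟨‖s ξ‖, u1.le, u2.le, ?_⟩
      simp only
      rw [← hbd]
      have hx := hXe ξ a2
      have h3 := hs3 ξ a1 a2
      have hX0' := (hsprop ξ a1 a2).1
      have h5 : ξ ^ 3 * (1 + s ξ) ^ 3 = ξ ^ 3 + Complex.exp (- kt ξ) := by
        have hξne : ξ ≠ 0 := fun h => by rw [h, norm_zero] at hξn; exact hr_p.ne hξn
        rw [h3, hx, Complex.exp_neg]
        have := Complex.exp_ne_zero (kt ξ)
        field_simp
      rw [← h5]; ring

open Set Filter Topology Metric in
theorem limit_core {t : ℝ} (ht0 : 0 < t) (ht : t < Real.sqrt 3 / 2) :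
    ∃ η0 > 0, ∃ c4 > 0, ∀ (R : ℂ × ℂ → ℂ) (δ' M : ℝ), Differentiable ℂ R →
      (∀ z : ℂ, ‖z‖ ≤ δ' → ‖R (z, (z + t * conj z) ^ 3)‖ ≤ M) →
      ∀ X0 κ0 : ℂ, ‖X0‖ < η0 → c4 * ‖κ0‖ ≤ δ' → ‖R (X0 * κ0, (X0 ^ 3 + 1) * κ0 ^ 3)‖ ≤ M := by
  obtain ⟨η0, hη0, c4, hc4, H⟩ := discs ht0 ht
  refine ⟨η0, hη0, c4, hc4, ?_⟩
  intro R δ' M hR hM X0 κ0 hX0 hκ0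
  refine le_of_forall_pos_lt_add (fun e he => ?_)
  have hcont : Continuous (fun p : ℝ × ℂ => ‖R (p.2, (p.2 + p.1 * conj p.2) ^ 3)‖) := by
    have := hR.continuous
    have hc : Continuous (fun p : ℝ × ℂ => (p.2, (p.2 + (p.1:ℂ) * conj p.2) ^ 3)) := by
      refine continuous_snd.prodMk (Continuous.pow (continuous_snd.add ?_) 3)
      exact (Complex.continuous_ofReal.comp continuous_fst).mul (Complex.continuous_conj.comp continuous_snd)
    exact (this.comp hc).norm
  have hev : ∀ᶠ τ in 𝓝 t, ∀ z ∈ closedBall (0:ℂ) δ', ‖R (z, (z + (τ:ℝ) * conj z) ^ 3)‖ < M + e / 2 := by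
    refine (isCompact_closedBall (0:ℂ) δ').eventually_forall_of_forall_eventually ?_
    intro z hz
    have h1 : ‖R (z, (z + t * conj z) ^ 3)‖ < M + e / 2 :=
      (hM z (by simpa using hz)).trans_lt (by linarith)
    exact (hcont.tendsto (t, z)).eventually (gt_mem_nhds h1)
  obtain ⟨ε, hε, hb⟩ := Metric.eventually_nhds_iff.1 hev
  obtain ⟨Z, V, r, ξ0, hr, hZ, hV, hξ0, hZ0, hV0, hbd⟩ := H (ε / 2) (by linarith) X0 κ0 hX0
  rw [← hZ0, ← hV0]
  have hdc : DiffContOnCl ℂ (fun ξ => R (Z ξ, V ξ)) (ball 0 r) := by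
    apply DifferentiableOn.diffContOnCl
    rw [closure_ball _ hr.ne']
    exact hR.comp_differentiableOn (hZ.prodMk hV)
  have : ‖R (Z ξ0, V ξ0)‖ ≤ M + e / 2 := by
    refine Complex.norm_le_of_forall_mem_frontier_norm_le isBounded_ball hdc ?_ (subset_closure hξ0)
    rw [frontier_ball _ hr.ne']
    intro ξ hξ
    obtain ⟨h1, τ, h2, h3, h4⟩ := hbd ξ hξ
    rw [h4]
    refine (hb (y := τ) ?_ (Z ξ) ?_).le
    · rw [Real.dist_eq, abs_of_nonneg (by linarith)]; linarith
    · rw [mem_closedBall_zero_iff]; exact h1.trans hκ0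
  linarith

open Set Filter Topology Metric in
theorem fill_core {t : ℝ} (ht0 : 0 < t) (ht : t < Real.sqrt 3 / 2) {δ' : ℝ} (hδ : 0 < δ') :
    ∃ ρ > 0, ∀ (R : ℂ × ℂ → ℂ) (M : ℝ), Differentiable ℂ R →
      (∀ z : ℂ, ‖z‖ ≤ δ' → ‖R (z, (z + t * conj z) ^ 3)‖ ≤ M) →
      ∀ z0 u0 : ℂ, ‖z0‖ < ρ → ‖u0‖ < ρ → ‖R (z0, u0)‖ ≤ M := by
  obtain ⟨η0, hη0, c4, hc4, H⟩ := limit_core ht0 ht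
  -- k is the size of the cube root of u
  set k := δ' / (2 * c4) with hk
  have hkp : 0 < k := by positivity
  refine ⟨min (k ^ 3) (min (k / 2) (η0 * k / 2)), by positivity, ?_⟩
  intro R M hR hM z0 u0 hz0 hu0
  have hz1 : ‖z0‖ < k / 2 := hz0.trans_le ((min_le_right _ _).trans (min_le_left _ _))
  have hz2 : ‖z0‖ < η0 * k / 2 := hz0.trans_le ((min_le_right _ _).trans (min_le_right _ _))
  have hu1 : ‖u0‖ < k ^ 3 := hu0.trans_le (min_le_left _ _)
  have hk3 : 0 < k ^ 3 := by positivity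
  have hdc : DiffContOnCl ℂ (fun u => R (z0, u)) (ball 0 (k ^ 3)) := by
    apply Differentiable.diffContOnCl
    exact hR.comp ((differentiable_const z0).prodMk differentiable_id)
  refine Complex.norm_le_of_forall_mem_frontier_norm_le (f := fun u => R (z0, u)) isBounded_ball hdc ?_
    (subset_closure (mem_ball_zero_iff.2 hu1))
  rw [frontier_ball _ hk3.ne']
  intro u hu
  rw [mem_sphere_zero_iff_norm] at hu
  obtain ⟨κ0, hκ0⟩ := IsAlgClosed.exists_pow_nat_eq (u - z0 ^ 3) (show 0 < 3 by norm_num)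
  have hz3 : ‖z0 ^ 3‖ ≤ k ^ 3 / 8 := by
    rw [norm_pow]
    have := pow_le_pow_left₀ (norm_nonneg z0) hz1.le 3
    calc _ ≤ _ := this
      _ = _ := by ring
  have hn : ‖κ0‖ ^ 3 = ‖u - z0 ^ 3‖ := by rw [← hκ0, norm_pow]
  have hlo : k / 2 < ‖κ0‖ := by
    refine lt_of_pow_lt_pow_left₀ 3 (norm_nonneg _) ?_
    rw [hn]
    have := norm_sub_norm_le u (z0 ^ 3)
    have h2 : (k / 2) ^ 3 = k ^ 3 / 8 := by ring
    rw [h2]; linarith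
  have hhi : ‖κ0‖ < 2 * k := by
    refine lt_of_pow_lt_pow_left₀ 3 (by positivity) ?_
    rw [hn]
    have := norm_sub_le u (z0 ^ 3)
    have h2 : (2 * k) ^ 3 = 8 * k ^ 3 := by ring
    rw [h2]; linarith
  have hκne : κ0 ≠ 0 := norm_pos_iff.1 (by linarith)
  have := H R δ' M hR hM (z0 / κ0) κ0 ?_ ?_
  · have e1 : z0 / κ0 * κ0 = z0 := div_mul_cancel₀ _ hκne
    have e2 : ((z0 / κ0) ^ 3 + 1) * κ0 ^ 3 = u := by
      have : ((z0 / κ0) ^ 3 + 1) * κ0 ^ 3 = (z0 / κ0 * κ0) ^ 3 + κ0 ^ 3 := by ring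
      rw [this, e1, hκ0]; ring
    rwa [e1, e2] at this
  · rw [norm_div, div_lt_iff₀ (by linarith)]
    nlinarith
  · have : c4 * (2 * k) = δ' := by rw [hk]; field_simp
    nlinarith

theorem power_sum_cubic {a b c : ℂ} {M : ℝ} (hM : 0 ≤ M) (h1 : ‖a + b + c‖ ≤ 3 * M)
    (h2 : ‖a ^ 2 + b ^ 2 + c ^ 2‖ ≤ 3 * M ^ 2) (h3 : ‖a ^ 3 + b ^ 3 + c ^ 3‖ ≤ 3 * M ^ 3) :
    ‖a‖ ≤ 5 * M := by
  set s1 := a + b + c with hs1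
  set s2 := a ^ 2 + b ^ 2 + c ^ 2 with hs2
  set s3 := a ^ 3 + b ^ 3 + c ^ 3 with hs3
  have hid : a ^ 3 = s1 * a ^ 2 + (-(1 / 2)) * (s1 ^ 2 - s2) * a + (1 / 6) * (s1 ^ 3 - 3 * (s1 * s2) + 2 * s3) := by
    rw [hs1, hs2, hs3]; ring
  have e1 : ‖s1‖ ^ 2 ≤ (3 * M) ^ 2 := pow_le_pow_left₀ (norm_nonneg _) h1 2
  have e2 : ‖s1‖ ^ 3 ≤ (3 * M) ^ 3 := pow_le_pow_left₀ (norm_nonneg _) h1 3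
  have e3 : ‖s1‖ * ‖s2‖ ≤ (3 * M) * (3 * M ^ 2) := mul_le_mul h1 h2 (norm_nonneg _) (by positivity)
  have f2 : ‖s1 ^ 2 - s2‖ ≤ 12 * M ^ 2 := by
    have := norm_sub_le (s1 ^ 2) s2
    rw [norm_pow] at this
    linarith
  have f3 : ‖s1 ^ 3 - 3 * (s1 * s2) + 2 * s3‖ ≤ 60 * M ^ 3 := by
    have g1 := norm_add_le (s1 ^ 3 - 3 * (s1 * s2)) (2 * s3)
    have g2 := norm_sub_le (s1 ^ 3) (3 * (s1 * s2))
    rw [norm_mul, Complex.norm_ofNat] at g1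
    rw [norm_pow, norm_mul, norm_mul, Complex.norm_ofNat] at g2
    linarith
  have hx : ‖a‖ ^ 3 ≤ 3 * M * ‖a‖ ^ 2 + 6 * M ^ 2 * ‖a‖ + 10 * M ^ 3 := by
    rw [← norm_pow, hid]
    refine (norm_add₃_le).trans ?_
    rw [norm_mul, norm_mul, norm_mul, norm_mul, norm_pow]
    have c1 : ‖(-(1 / 2) : ℂ)‖ = 1 / 2 := by simp
    have c2 : ‖(1 / 6 : ℂ)‖ = 1 / 6 := by simp
    rw [c1, c2]
    have k1 : ‖s1‖ * ‖a‖ ^ 2 ≤ 3 * M * ‖a‖ ^ 2 := by gcongr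
    have k2 : 1 / 2 * ‖s1 ^ 2 - s2‖ * ‖a‖ ≤ 1 / 2 * (12 * M ^ 2) * ‖a‖ := by gcongr
    linarith
  by_contra hcon
  push Not at hcon
  set x := ‖a‖
  have hx0 : 0 < x := by linarith [hM]
  have j1 : 5 * M * x ^ 2 < x * x ^ 2 := mul_lt_mul_of_pos_right hcon (by positivity)
  have j2 : 5 * M * (M * x) ≤ x * (M * x) := mul_le_mul_of_nonneg_right hcon.le (by positivity)
  have j3 : 5 * M * (M ^ 2) ≤ x * (M ^ 2) := mul_le_mul_of_nonneg_right hcon.le (by positivity)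
  have j4 : 0 ≤ M ^ 3 := by positivity
  nlinarith

theorem power_sum_bound {a b c : ℂ} {M : ℝ} (hM : 0 ≤ M)
    (h : ∀ k : ℕ, ‖a ^ k + b ^ k + c ^ k‖ ≤ 3 * M ^ k) : ‖a‖ ≤ M := by
  have h5 : ∀ N : ℕ, ‖a‖ ^ N ≤ 5 * M ^ N := by
    intro N
    rw [← norm_pow]
    refine power_sum_cubic (a := a ^ N) (b := b ^ N) (c := c ^ N) (by positivity) (h N) ?_ ?_
    · simpa only [← pow_mul] using h (N * 2)
    · simpa only [← pow_mul] using h (N * 3)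
  by_contra hcon
  push Not at hcon
  rcases hM.eq_or_lt with h0 | h0
  · have := h5 1
    rw [← h0] at this hcon
    simp at this
    rw [this] at hcon; simp at hcon
  · obtain ⟨n, hn⟩ := pow_unbounded_of_one_lt 5 ((one_lt_div h0).2 hcon)
    rw [div_pow, lt_div_iff₀ (by positivity)] at hn
    linarith [h5 n]

noncomputable def om : ℂ := (-1 + Complex.I * (Real.sqrt 3 : ℂ)) / 2

theorem sq3 : (Real.sqrt 3 : ℂ) ^ 2 = 3 := by
  have := Real.sq_sqrt (show (0:ℝ) ≤ 3 by norm_num)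
  exact_mod_cast this

theorem om_sq : om ^ 2 = (-1 - Complex.I * (Real.sqrt 3 : ℂ)) / 2 := by
  rw [om]
  linear_combination (1 / 4 : ℂ) * Complex.I ^ 2 * sq3 + (3 / 4 : ℂ) * Complex.I_sq

theorem om_sum : 1 + om + om ^ 2 = 0 := by rw [om_sq, om]; ring

theorem om_cube : om ^ 3 = 1 := by linear_combination (om - 1) * om_sum

theorem om_norm : ‖om‖ = 1 := by
  have h : ‖om‖ ^ 3 = 1 := by rw [← norm_pow, om_cube, norm_one]
  exact (pow_eq_one_iff_of_nonneg (norm_nonneg _) (by norm_num)).1 h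

theorem om_pows (k : ℕ) : (k % 3 = 0 ∧ 1 + om ^ k + (om ^ 2) ^ k = 3) ∨ 1 + om ^ k + (om ^ 2) ^ k = 0 := by
  have h3 : om ^ k = om ^ (k % 3) := by
    conv_lhs => rw [← Nat.div_add_mod k 3, pow_add, pow_mul, om_cube, one_pow, one_mul]
  rw [← pow_mul, mul_comm 2 k, pow_mul, h3]
  have : k % 3 < 3 := Nat.mod_lt _ (by norm_num)
  interval_cases k % 3
  · left; norm_num
  · right; simpa using om_sum
  · right; linear_combination om_sum + om * om_cube

theorem symm_poly (Q : MvPolynomial (Fin 2) ℂ) : ∃ R : ℂ × ℂ → ℂ, Differentiable ℂ R ∧ ∀ z v : ℂ,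
    R (z, v ^ 3) = MvPolynomial.eval (fun i => if i = 0 then z else v) Q
      + MvPolynomial.eval (fun i => if i = 0 then z else om * v) Q
      + MvPolynomial.eval (fun i => if i = 0 then z else om ^ 2 * v) Q := by
  induction Q using MvPolynomial.induction_on' with
  | monomial d a =>
    have hev : ∀ z v : ℂ, MvPolynomial.eval (fun i : Fin 2 => if i = 0 then z else v)
        (MvPolynomial.monomial d a) = a * (z ^ d 0 * v ^ d 1) := by
      intro z v
      rw [MvPolynomial.eval_monomial, Finsupp.prod_fintype _ _ (by simp)]
      simp
    rcases om_pows (d 1) with ⟨hm, h⟩ | h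
    · refine ⟨fun p => 3 * a * p.1 ^ d 0 * p.2 ^ (d 1 / 3), by fun_prop, ?_⟩
      intro z v
      rw [hev, hev, hev, mul_pow, mul_pow]
      have : (v ^ 3) ^ (d 1 / 3) = v ^ d 1 := by
        rw [← pow_mul]; congr 1; omega
      simp only [this]
      linear_combination -(a * z ^ d 0 * v ^ d 1) * h
    · refine ⟨fun p => 0, by fun_prop, ?_⟩
      intro z v
      rw [hev, hev, hev, mul_pow, mul_pow]
      linear_combination -(a * z ^ d 0 * v ^ d 1) * h
  | add p q hp hq =>
    obtain ⟨R1, d1, h1⟩ := hp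
    obtain ⟨R2, d2, h2⟩ := hq
    refine ⟨fun p => R1 p + R2 p, d1.add d2, ?_⟩
    intro z v
    simp only [h1, h2, map_add]
    ring

theorem subst_poly (t : ℝ) (p : MvPolynomial (Fin 2) ℂ) : ∃ Q : MvPolynomial (Fin 2) ℂ, ∀ z v : ℂ,
    MvPolynomial.eval (fun i => if i = 0 then z else v) Q
      = MvPolynomial.eval (fun i => if i = 0 then z else (v - z) / t) p := by
  refine ⟨MvPolynomial.bind₁ (fun i : Fin 2 => if i = 0 then MvPolynomial.X 0 else
    MvPolynomial.C (t:ℂ)⁻¹ * (MvPolynomial.X 1 - MvPolynomial.X 0)) p, ?_⟩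
  intro z v
  rw [MvPolynomial.eval, MvPolynomial.eval₂Hom_bind₁]
  congr 2
  funext i
  fin_cases i
  · simp
  · simp [div_eq_inv_mul]

theorem plane_mem (t : ℝ) (ht : 0 < t) (z : ℂ) :
    (z, ((z + t * conj z) - z) / t) ∈ P0 ∧ (z, (om * (z + t * conj z) - z) / t) ∈ P1 t ∧
    (z, (om ^ 2 * (z + t * conj z) - z) / t) ∈ P2 t := by
  have htc : (t:ℂ) ≠ 0 := by exact_mod_cast ht.ne'
  refine ⟨?_, ?_, ?_⟩
  · simp only [P0, Set.mem_ofPred_eq]; field_simp; ring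
  · simp only [P1, Set.mem_ofPred_eq, om]; field_simp
    linear_combination z * sq3
  · simp only [P2, Set.mem_ofPred_eq, om_sq]; field_simp
    linear_combination z * sq3

theorem plane_norm {t : ℝ} (ht : 0 < t) {δ : ℝ} (hδ : 0 < δ) {z e : ℂ} (he : ‖e‖ = 1)
    (hz : ‖z‖ ≤ δ / (1 + (2 + t) / t)) : (z, (e * (z + t * conj z) - z) / t) ∈ eClosedBall δ := by
  simp only [eClosedBall, Set.mem_ofPred_eq]
  have h1 : ‖(e * (z + t * conj z) - z) / t‖ ≤ (2 + t) / t * ‖z‖ := by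
    rw [norm_div, Complex.norm_real, Real.norm_of_nonneg ht.le, div_mul_eq_mul_div]
    apply div_le_div_of_nonneg_right _ ht.le
    refine (norm_sub_le _ _).trans ?_
    rw [norm_mul, he]
    have := norm_add_le z (t * conj z)
    rw [norm_mul, Complex.norm_conj, Complex.norm_real, Real.norm_of_nonneg ht.le] at this
    linarith
  rw [le_div_iff₀ (by positivity)] at hz
  set y := ‖(e * (z + t * conj z) - z) / t‖
  have h2 : ‖z‖ + y ≤ δ := by linarith
  have h3 := norm_nonneg z
  have h4 : 0 ≤ y := norm_nonneg _
  nlinarith [mul_nonneg h3 h4]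

/-- for `0 < t < √3/2` and every `δ > 0`, the polynomially convex hull of
`(P₀ᵗ ∪ P₁ᵗ ∪ P₂ᵗ) ∩ B̄(0;δ)` contains an open ball centred at the origin. -/
theorem stmt_4 (t : ℝ) (ht0 : 0 < t) (ht1 : t < Real.sqrt 3 / 2) (δ : ℝ) (hδ : 0 < δ) :
    ∃ ρ > (0 : ℝ), eOpenBall ρ ⊆ polyHull2 ((P0 ∪ P1 t ∪ P2 t) ∩ eClosedBall δ) := by
  have hlt1 : t < 1 := by
    have h := Real.sq_sqrt (show (0:ℝ) ≤ 3 by norm_num)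
    nlinarith [Real.sqrt_nonneg 3]
  have htc : (t:ℂ) ≠ 0 := by exact_mod_cast ht0.ne'
  obtain ⟨ρ', hρ', H⟩ := fill_core ht0 ht1 (δ' := δ / (1 + (2 + t) / t)) (by positivity)
  refine ⟨min ρ' 1 / 4, by positivity, ?_⟩
  rintro ⟨z0, w0⟩ h0 p
  simp only [eOpenBall, Set.mem_ofPred_eq] at h0
  set ρ := min ρ' 1 / 4 with hρ
  have hρp : 0 < ρ := by positivity
  have hρ1 : 4 * ρ ≤ ρ' := by rw [hρ]; linarith [min_le_left ρ' 1]
  have hρ2 : 4 * ρ ≤ 1 := by rw [hρ]; linarith [min_le_right ρ' 1]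
  have hz0 : ‖z0‖ < ρ := lt_of_pow_lt_pow_left₀ 2 hρp.le (by nlinarith [sq_nonneg ‖w0‖])
  have hw0 : ‖w0‖ < ρ := lt_of_pow_lt_pow_left₀ 2 hρp.le (by nlinarith [sq_nonneg ‖z0‖])
  set K := (P0 ∪ P1 t ∪ P2 t) ∩ eClosedBall δ with hK
  set f : ℂ × ℂ → ℝ := fun w => ‖MvPolynomial.eval (fun i => if i = 0 then w.1 else w.2) p‖ with hf
  set M := sSup (f '' K) with hM
  have hfc : Continuous f := by
    refine ((MvPolynomial.continuous_eval p).comp (continuous_pi ?_)).norm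
    intro i
    by_cases hi : i = 0
    · simp only [hi, if_true]; exact continuous_fst
    · simp only [hi, if_false]; exact continuous_snd
  have hbdd : BddAbove (f '' K) := by
    refine ((isCompact_closedBall (0 : ℂ × ℂ) δ).bddAbove_image hfc.continuousOn).mono
      (Set.image_mono ?_)
    rintro ⟨a, b⟩ ⟨-, h⟩
    simp only [eClosedBall, Set.mem_ofPred_eq] at h
    rw [mem_closedBall_zero_iff, Prod.norm_def]
    refine max_le ?_ ?_
    · exact le_of_sq_le_sq (by simp only; nlinarith [sq_nonneg ‖b‖]) hδ.le
    · exact le_of_sq_le_sq (by simp only; nlinarith [sq_nonneg ‖a‖]) hδ.le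
  have hfK : ∀ q ∈ K, f q ≤ M := fun q hq => le_csSup hbdd (Set.mem_image_of_mem f hq)
  have hM0 : 0 ≤ M := Real.sSup_nonneg (by rintro _ ⟨q, -, rfl⟩; exact norm_nonneg _)
  obtain ⟨Q, hQ⟩ := subst_poly t p
  set v0 : ℂ := t * w0 + z0 with hv0
  have hv : (v0 - z0) / t = w0 := by rw [hv0]; field_simp; ring
  have hvn : ‖v0‖ < 2 * ρ := by
    have := norm_add_le ((t:ℂ) * w0) z0
    rw [norm_mul, Complex.norm_real, Real.norm_of_nonneg ht0.le] at this
    nlinarith [norm_nonneg w0]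
  have hv3 : ‖v0 ^ 3‖ < ρ' := by
    rw [norm_pow]
    have : ‖v0‖ ^ 3 ≤ ‖v0‖ := pow_le_of_le_one (norm_nonneg _) (by linarith) (by norm_num)
    linarith
  have key := power_sum_bound (a := MvPolynomial.eval (fun i => if i = 0 then z0 else v0) Q)
    (b := MvPolynomial.eval (fun i => if i = 0 then z0 else om * v0) Q)
    (c := MvPolynomial.eval (fun i => if i = 0 then z0 else om ^ 2 * v0) Q) hM0 ?_
  · rw [hQ, hv] at key
    exact key
  intro k
  obtain ⟨R, hRd, hR⟩ := symm_poly (Q ^ k)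
  have := H R (3 * M ^ k) hRd ?_ z0 (v0 ^ 3) (by linarith) hv3
  · rw [hR] at this
    simpa only [map_pow] using this
  intro z hz
  rw [hR]
  simp only [map_pow, hQ]
  obtain ⟨m0, m1, m2⟩ := plane_mem t ht0 z
  have b0 := plane_norm ht0 hδ (norm_one (α := ℂ)) hz
  rw [one_mul] at b0
  have b1 := plane_norm ht0 hδ om_norm hz
  have b2 := plane_norm ht0 hδ (e := om ^ 2) (by rw [norm_pow, om_norm, one_pow]) hz
  have g0 := hfK _ ⟨Or.inl (Or.inl m0), b0⟩
  have g1 := hfK _ ⟨Or.inl (Or.inr m1), b1⟩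
  have g2 := hfK _ ⟨Or.inr m2, b2⟩
  simp only [hf] at g0 g1 g2
  refine norm_add₃_le.trans ?_
  rw [norm_pow, norm_pow, norm_pow]
  have k0 := pow_le_pow_left₀ (norm_nonneg _) g0 k
  have k1 := pow_le_pow_left₀ (norm_nonneg _) g1 k
  have k2 := pow_le_pow_left₀ (norm_nonneg _) g2 k
  linarith
end

section
/- For every t > √(15 − √33)/(2√2), the surface S_t = {(z, p_t(z,z̄)) : z ∈ ℂ}, where p_t(z,z̄) = z²z̄ + t z z̄² + (t²/3) z̄³, is locally polynomially convex at the origin: there exists r > 0 such that S_t ∩ B̄(0;r) is polynomially convex. -/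
open Complex ComplexConjugate

/-- The surface `S_t = {(z, z²z̄ + t z z̄² + (t²/3) z̄³) : z ∈ ℂ}`. -/
def Sset (t : ℝ) : Set (ℂ × ℂ) :=
  { zw | ∃ z : ℂ, zw = (z, z ^ 2 * conj z + (t : ℂ) * z * (conj z) ^ 2
      + ((t : ℂ) ^ 2 / 3) * (conj z) ^ 3) }

open Filter Topology in
lemma aux_unit {X : Type*} [TopologicalSpace X] [CompactSpace X] (A : Subalgebra ℂ C(X, ℂ))
    (hA : IsClosed (A : Set C(X, ℂ))) (h : A) (hs : ∀ x, (h : C(X, ℂ)) x ∈ slitPlane) :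
    ∀ τ ∈ Set.Icc (0 : ℝ) 1, IsUnit ((1 : A) + (τ : ℂ) • (h - 1)) := by
  have : IsClosed (A : Set C(X, ℂ)) := hA
  have : CompleteSpace A := hA.completeSpace_coe
  set γ : ℝ → A := fun τ => (1 : A) + (τ : ℂ) • (h - 1) with hγ
  have hc : Continuous γ := by fun_prop
  have hval : ∀ τ ∈ Set.Icc (0 : ℝ) 1, IsUnit ((γ τ : A) : C(X, ℂ)) := by
    intro τ hτ
    rw [ContinuousMap.isUnit_iff_forall_ne_zero]
    intro x
    have := Complex.starConvex_one_slitPlane.add_smul_sub_mem (hs x) hτ.1 hτ.2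
    have h2 := Complex.slitPlane_ne_zero this
    simpa [hγ] using h2
  have key : Set.Icc (0 : ℝ) 1 ⊆ {τ | IsUnit (γ τ)} := by
    apply IsClosed.Icc_subset_of_forall_mem_nhdsWithin
    · apply isClosed_of_closure_subset
      intro τ hτ
      have hτ2 : τ ∈ Set.Icc (0 : ℝ) 1 := by
        have := closure_mono (Set.inter_subset_right) hτ
        rwa [isClosed_Icc.closure_eq] at this
      refine ⟨?_, hτ2⟩
      have hne : (𝓝[{τ | IsUnit (γ τ)} ∩ Set.Icc 0 1] τ).NeBot := mem_closure_iff_nhdsWithin_neBot.mp hτ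
      refine Subalgebra.isUnit_of_isUnit_val_of_eventually (𝕜 := ℂ) A
        (l := map γ (𝓝[{τ | IsUnit (γ τ)} ∩ Set.Icc 0 1] τ)) (hval τ hτ2) ?_ ?_ (hne.map γ)
      · exact (hc.tendsto τ).mono_left nhdsWithin_le_nhds
      · rw [eventually_map]
        filter_upwards [self_mem_nhdsWithin] with y hy using hy.1
    · simp [hγ]
    · intro x hx
      apply mem_nhdsWithin_of_mem_nhds
      exact (Units.isOpen.preimage hc).mem_nhds hx.1
  exact fun τ hτ => key hτ

open Filter Topology in
lemma aux_log {X : Type*} [TopologicalSpace X] [CompactSpace X] (A : Subalgebra ℂ C(X, ℂ))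
    (hA : IsClosed (A : Set C(X, ℂ))) (h : A) (hs : ∀ x, (h : C(X, ℂ)) x ∈ slitPlane) :
    ∃ l : A, ∀ x, (l : C(X, ℂ)) x = Complex.log ((h : C(X, ℂ)) x) := by
  have hu := aux_unit A hA h hs
  have : CompleteSpace A := hA.completeSpace_coe
  set γ : ℝ → A := fun τ => (1 : A) + (τ : ℂ) • (h - 1) with hγ
  have hc : Continuous γ := by fun_prop
  set F : ℝ → A := fun τ => Ring.inverse (γ τ) * (h - 1) with hF
  have hFc : ContinuousOn F (Set.Icc 0 1) := by
    apply ContinuousOn.mul _ continuousOn_const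
    intro τ hτ
    obtain ⟨u, hu'⟩ := hu τ hτ
    have h1 := NormedRing.inverse_continuousAt u
    rw [hu'] at h1
    exact (ContinuousAt.comp (f := γ) h1 hc.continuousAt).continuousWithinAt
  have hFi : IntervalIntegrable F MeasureTheory.volume 0 1 := by
    apply ContinuousOn.intervalIntegrable
    rwa [Set.uIcc_of_le zero_le_one]
  refine ⟨∫ τ in (0:ℝ)..1, F τ, fun x => ?_⟩
  let φ : A →L[ℂ] ℂ := (ContinuousMap.evalCLM ℂ x).comp A.toSubmodule.subtypeL
  have hφ : ∀ a : A, φ a = (a : C(X, ℂ)) x := fun a => rfl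
  rw [← hφ, ← ContinuousLinearMap.intervalIntegral_comp_comm φ hFi]
  have hsl : ∀ τ ∈ Set.uIcc (0 : ℝ) 1, 1 + (τ : ℂ) * ((h : C(X, ℂ)) x - 1) ∈ slitPlane := by
    intro τ hτ
    rw [Set.uIcc_of_le zero_le_one] at hτ
    have := Complex.starConvex_one_slitPlane.add_smul_sub_mem (hs x) hτ.1 hτ.2
    simpa using this
  have hd : ∀ τ ∈ Set.uIcc (0 : ℝ) 1, HasDerivAt (fun τ : ℝ => Complex.log (1 + (τ : ℂ) * ((h : C(X, ℂ)) x - 1)))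
      (φ (F τ)) τ := by
    intro τ hτ
    have h1 : HasDerivAt (fun τ : ℝ => (1 + (τ : ℂ) * ((h : C(X, ℂ)) x - 1))) ((h : C(X, ℂ)) x - 1) τ := by
      have := ((hasDerivAt_id τ).ofReal_comp.mul_const ((h : C(X, ℂ)) x - 1)).const_add 1
      simpa using this
    have h2 := h1.clog_real (hsl τ hτ)
    convert h2 using 1
    rw [Set.uIcc_of_le zero_le_one] at hτ
    have h3 : γ τ * Ring.inverse (γ τ) = 1 := Ring.mul_inverse_cancel _ (hu τ hτ)
    have h4 : ((γ τ : A) : C(X, ℂ)) x * ((Ring.inverse (γ τ) : A) : C(X, ℂ)) x = 1 := by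
      have := congrArg (fun a : A => (a : C(X, ℂ)) x) h3
      simpa using this
    have h5 : ((γ τ : A) : C(X, ℂ)) x = 1 + (τ : ℂ) * ((h : C(X, ℂ)) x - 1) := by simp [hγ]
    rw [h5] at h4
    have h6 : φ (F τ) = ((Ring.inverse (γ τ) : A) : C(X, ℂ)) x * ((h : C(X, ℂ)) x - 1) := by
      rw [hφ]; simp [hF]
    rw [h6, eq_div_iff (left_ne_zero_of_mul_eq_one h4)]
    linear_combination ((h : C(X, ℂ)) x - 1) * h4
  rw [intervalIntegral.integral_eq_sub_of_hasDerivAt hd]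
  · simp
  · apply ContinuousOn.intervalIntegrable
    rw [Set.uIcc_of_le zero_le_one]
    exact φ.continuous.comp_continuousOn hFc

lemma aux_croot {X : Type*} [TopologicalSpace X] [CompactSpace X] (A : Subalgebra ℂ C(X, ℂ))
    (hA : IsClosed (A : Set C(X, ℂ))) (h : A) (hs : ∀ x, (h : C(X, ℂ)) x ∈ slitPlane)
    (k : C(X, ℂ)) (hk : ∀ x, k x = ((h : C(X, ℂ)) x) ^ ((3 : ℂ)⁻¹)) : k ∈ A := by
  obtain ⟨l, hl⟩ := aux_log A hA h hs
  have : CompleteSpace A := hA.completeSpace_coe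
  let _ : NormedAlgebra ℚ A := NormedAlgebra.restrictScalars ℚ ℂ A
  let e : A := NormedSpace.exp ((3 : ℂ)⁻¹ • l)
  have : k = (e : C(X, ℂ)) := by
    ext x
    let φ : A →ₐ[ℂ] ℂ := (ContinuousMap.evalAlgHom ℂ ℂ x).comp A.val
    have hφc : Continuous φ := (continuous_eval_const x).comp continuous_subtype_val
    have h1 : (e : C(X, ℂ)) x = φ e := rfl
    rw [h1, NormedSpace.map_exp φ hφc, hk, Complex.cpow_def_of_ne_zero (slitPlane_ne_zero (hs x)),
      Complex.exp_eq_exp_ℂ]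
    congr 1
    have h2 : φ ((3 : ℂ)⁻¹ • l) = (3 : ℂ)⁻¹ * (l : C(X, ℂ)) x := rfl
    rw [h2, hl, mul_comm]
  rw [this]
  exact e.2

lemma aux_arg (g : ℂ) (h1 : 0 < g.re) (h2 : g.im ^ 2 < 3 * g.re ^ 2) :
    (g ^ 3) ^ ((3 : ℂ)⁻¹) = g := by
  have hn : 0 < ‖g‖ := by
    rw [norm_pos_iff]; rintro rfl; simp at h1
  have hsq : ‖g‖ ^ 2 = g.re ^ 2 + g.im ^ 2 := by
    rw [Complex.sq_norm, Complex.normSq_apply]; ring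
  have h3 : |g.im / ‖g‖| < √3 / 2 := by
    rw [abs_div, abs_of_pos hn, div_lt_iff₀ hn]
    apply abs_lt_of_sq_lt_sq _ (by positivity)
    rw [mul_pow, div_pow, Real.sq_sqrt (by norm_num), hsq]
    linarith
  rw [abs_lt] at h3
  have hpi := Real.pi_pos
  have ha : g.arg < Real.pi / 3 := by
    rw [Complex.arg_of_re_nonneg h1.le, Real.arcsin_lt_iff_lt_sin' ⟨by linarith, by linarith⟩,
      Real.sin_pi_div_three]
    exact h3.2
  have hb : -(Real.pi / 3) < g.arg := by
    rw [Complex.arg_of_re_nonneg h1.le, Real.lt_arcsin_iff_sin_lt' ⟨by linarith, by linarith⟩,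
      Real.sin_neg, Real.sin_pi_div_three]
    exact h3.1
  exact Complex.pow_cpow_ofNat_inv hb ha.le

open Filter Topology in
lemma aux_cube {X : Type*} [TopologicalSpace X] [CompactSpace X] (A : Subalgebra ℂ C(X, ℂ))
    (hA : IsClosed (A : Set C(X, ℂ))) (g : C(X, ℂ)) (hh : g ^ 3 ∈ A)
    (hsec : ∀ x, g x = 0 ∨ (0 < (g x).re ∧ (g x).im ^ 2 < 3 * (g x).re ^ 2)) : g ∈ A := by
  have hcube : ∀ x, 0 ≤ ((g x) ^ 3).re ∨ ((g x) ^ 3).im ≠ 0 := by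
    intro x
    rcases hsec x with h | ⟨h1, h2⟩
    · left; simp [h]
    · by_cases hv : (g x).im = 0
      · left
        have : ((g x) ^ 3).re = (g x).re ^ 3 := by
          simp [pow_succ, hv]
        rw [this]; positivity
      · right
        have : ((g x) ^ 3).im = (g x).im * (3 * (g x).re ^ 2 - (g x).im ^ 2) := by
          simp [pow_succ]; ring
        rw [this]
        exact mul_ne_zero hv (by linarith)
  let F : C(ℝ × X, ℂ) := ⟨fun q => ((g q.2) ^ 3 + ((max q.1 0 : ℝ) : ℂ)) ^ ((3 : ℂ)⁻¹), by
    rw [continuous_iff_continuousAt]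
    rintro ⟨ε, x⟩
    refine ContinuousAt.comp (f := fun q : ℝ × X => (g q.2) ^ 3 + ((max q.1 0 : ℝ) : ℂ))
      (g := fun y : ℂ => y ^ ((3 : ℂ)⁻¹)) (Complex.continuousAt_cpow_const_of_re_pos ?_ (by norm_num)) ?_
    · rcases hcube x with h | h
      · left
        rw [Complex.add_re, Complex.ofReal_re]
        have := le_max_right ε 0
        positivity
      · right
        simpa using h
    · fun_prop⟩
  have hF : ∀ ε > 0, F.curry ε ∈ A := by
    intro ε hε
    let h : A := ⟨g ^ 3, hh⟩ + algebraMap ℂ A (ε : ℂ)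
    have hval : ∀ x, (h : C(X, ℂ)) x = (g x) ^ 3 + (ε : ℂ) := fun x => rfl
    apply aux_croot A hA h
    · intro x
      rw [hval, Complex.mem_slitPlane_iff]
      rcases hcube x with h | h
      · left
        rw [Complex.add_re, Complex.ofReal_re]
        linarith
      · right
        simpa using h
    · intro x
      rw [hval]
      change ((g x) ^ 3 + ((max ε 0 : ℝ) : ℂ)) ^ ((3 : ℂ)⁻¹) = _
      rw [max_eq_left hε.le]
  have h0 : F.curry 0 = g := by
    ext x
    change ((g x) ^ 3 + ((max 0 0 : ℝ) : ℂ)) ^ ((3 : ℂ)⁻¹) = _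
    simp only [max_self, Complex.ofReal_zero, add_zero]
    rcases hsec x with h | ⟨h1, h2⟩
    · rw [h]; simp
    · exact aux_arg _ h1 h2
  rw [← h0]
  have ht : Tendsto F.curry (𝓝[>] (0 : ℝ)) (𝓝 (F.curry 0)) :=
    (F.curry.continuous.tendsto 0).mono_left nhdsWithin_le_nhds
  refine hA.mem_of_tendsto ht ?_
  filter_upwards [self_mem_nhdsWithin] with ε hε using hF ε hε

/-- Half-plane lemma. -/
lemma aux_re {X : Type*} [TopologicalSpace X] [CompactSpace X] (G : Subalgebra ℂ (C(X, ℂ) × ℂ))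
    (hb : ∀ q ∈ G, ‖q.2‖ ≤ ‖q.1‖) (q : C(X, ℂ) × ℂ) (hq : q ∈ G)
    (hre : ∀ x, (q.1 x).re ≤ 0) : q.2.re ≤ 0 := by
  by_contra hcon
  push Not at hcon
  set c := ‖q.1‖ with hc
  have key : ∀ M : ℝ, 0 ≤ M → (q.2.re + M) ^ 2 ≤ M ^ 2 + c ^ 2 := by
    intro M hM
    have hm : q + algebraMap ℂ _ (M : ℂ) ∈ G := G.add_mem hq (G.algebraMap_mem _)
    have h1 := hb _ hm
    have h2 : ‖(q + algebraMap ℂ (C(X, ℂ) × ℂ) (M : ℂ)).1‖ ≤ √(M ^ 2 + c ^ 2) := by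
      rw [ContinuousMap.norm_le _ (by positivity)]
      intro x
      have h3 : (q + algebraMap ℂ (C(X, ℂ) × ℂ) (M : ℂ)).1 x = q.1 x + M := rfl
      rw [h3]
      apply Real.le_sqrt_of_sq_le
      rw [Complex.sq_norm, Complex.normSq_apply]
      have h4 : ‖q.1 x‖ ≤ c := ContinuousMap.norm_coe_le_norm _ _
      have h5 : ‖q.1 x‖ ^ 2 ≤ c ^ 2 := by gcongr
      rw [Complex.sq_norm, Complex.normSq_apply] at h5
      have h6 := hre x
      simp only [Complex.add_re, Complex.ofReal_re, Complex.add_im, Complex.ofReal_im, add_zero]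
      nlinarith
    have h7 : (q + algebraMap ℂ (C(X, ℂ) × ℂ) (M : ℂ)).2 = q.2 + M := rfl
    rw [h7] at h1
    have h8 : q.2.re + M ≤ ‖q.2 + M‖ := by
      have := Complex.re_le_norm (q.2 + M)
      simpa using this
    have h9 : q.2.re + M ≤ √(M ^ 2 + c ^ 2) := h8.trans (h1.trans h2)
    have h10 : (q.2.re + M) ^ 2 ≤ √(M ^ 2 + c ^ 2) ^ 2 := by
      have : 0 ≤ q.2.re + M := by linarith
      gcongr
    rwa [Real.sq_sqrt (by positivity)] at h10
  have h11 := key (c ^ 2 / q.2.re) (by positivity)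
  have h12 : q.2.re * (c ^ 2 / q.2.re) = c ^ 2 := by field_simp
  nlinarith [sq_nonneg c, pow_pos hcon 2]

lemma aux_two_re (a : ℂ) : (2 * a).re = 2 * a.re := by simp

lemma aux_norm_ineq (a b : ℂ) : 2 * (conj a * b).re - ‖a‖ ^ 2 ≤ ‖b‖ ^ 2 := by
  rw [Complex.sq_norm, Complex.sq_norm, Complex.normSq_apply, Complex.normSq_apply]
  simp only [Complex.mul_re, Complex.conj_re, Complex.conj_im]
  nlinarith [sq_nonneg (a.re - b.re), sq_nonneg (a.im - b.im)]

lemma aux_sq {X : Type*} [TopologicalSpace X] [CompactSpace X] (G : Subalgebra ℂ (C(X, ℂ) × ℂ))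
    (hb : ∀ q ∈ G, ‖q.2‖ ≤ ‖q.1‖) (f g k : C(X, ℂ) × ℂ) (hf : f ∈ G) (hg : g ∈ G) (hk : k ∈ G)
    (hle : ∀ x, ‖f.1 x‖ ^ 2 + ‖g.1 x‖ ^ 2 + (k.1 x).re ≤ 0) :
    ‖f.2‖ ^ 2 + ‖g.2‖ ^ 2 + k.2.re ≤ 0 := by
  let q : C(X, ℂ) × ℂ := (2 * conj f.2) • f + (2 * conj g.2) • g + k
    + algebraMap ℂ (C(X, ℂ) × ℂ) (-((‖f.2‖ ^ 2 + ‖g.2‖ ^ 2 : ℝ) : ℂ))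
  have hq : q ∈ G := G.add_mem (G.add_mem (G.add_mem (G.smul_mem hf _) (G.smul_mem hg _)) hk)
    (G.algebraMap_mem _)
  have h1 := aux_re G hb q hq (by
    intro x
    have e1 : q.1 x = 2 * conj f.2 * f.1 x + 2 * conj g.2 * g.1 x + k.1 x
      + (-((‖f.2‖ ^ 2 + ‖g.2‖ ^ 2 : ℝ) : ℂ)) := rfl
    have e2 : (q.1 x).re = 2 * (conj f.2 * f.1 x).re + 2 * (conj g.2 * g.1 x).re + (k.1 x).re
        - (‖f.2‖ ^ 2 + ‖g.2‖ ^ 2) := by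
      rw [e1, mul_assoc, mul_assoc]
      simp only [Complex.add_re, Complex.neg_re, Complex.ofReal_re, aux_two_re]
      ring
    rw [e2]
    have := aux_norm_ineq f.2 (f.1 x)
    have := aux_norm_ineq g.2 (g.1 x)
    have := hle x
    linarith)
  have e1 : q.2 = 2 * conj f.2 * f.2 + 2 * conj g.2 * g.2 + k.2
      + (-((‖f.2‖ ^ 2 + ‖g.2‖ ^ 2 : ℝ) : ℂ)) := rfl
  have e3 : ∀ a : ℂ, (conj a * a).re = ‖a‖ ^ 2 := by
    intro a
    rw [Complex.sq_norm, Complex.normSq_apply]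
    simp [Complex.mul_re]
  have e2 : q.2.re = 2 * (conj f.2 * f.2).re + 2 * (conj g.2 * g.2).re + (k.2).re
        - (‖f.2‖ ^ 2 + ‖g.2‖ ^ 2) := by
    rw [e1, mul_assoc, mul_assoc]
    simp only [Complex.add_re, Complex.neg_re, Complex.ofReal_re, aux_two_re]
    ring
  rw [e2, e3, e3] at h1
  linarith

/-- Core algebraic step. `Z`, `W`, `D`, `H` are the pairs (function on X, value at the hull point). -/
lemma aux_core {X : Type*} [TopologicalSpace X] [CompactSpace X] (G : Subalgebra ℂ (C(X, ℂ) × ℂ))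
    (hb : ∀ q ∈ G, ‖q.2‖ ≤ ‖q.1‖) (t : ℝ) (ht : 0 < t) (Z W D H : C(X, ℂ) × ℂ)
    (hZ : Z ∈ G) (hW : W ∈ G) (hD : D ∈ G) (hH : H ∈ G)
    (hWx : ∀ x, W.1 x = (Z.1 x + t * conj (Z.1 x)) ^ 3)
    (hHx : ∀ x, H.1 x = (Z.1 x + t * conj (Z.1 x)) * D.1 x) :
    H.2 ^ 3 = W.2 * D.2 ^ 3 ∧ (D.2 ≠ 0 → W.2 = (Z.2 + t * conj Z.2) ^ 3) := by
  have hrel : H.2 ^ 3 = W.2 * D.2 ^ 3 := by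
    have hm : H ^ 3 - W * D ^ 3 ∈ G := G.sub_mem (G.pow_mem hH 3) (G.mul_mem hW (G.pow_mem hD 3))
    have h1 := hb _ hm
    have h2 : (H ^ 3 - W * D ^ 3).1 = 0 := by
      ext x
      have : (H ^ 3 - W * D ^ 3).1 x = (H.1 x) ^ 3 - W.1 x * (D.1 x) ^ 3 := rfl
      rw [this, hWx, hHx]
      simp; ring
    rw [h2, norm_zero] at h1
    have h3 : (H ^ 3 - W * D ^ 3).2 = H.2 ^ 3 - W.2 * D.2 ^ 3 := rfl
    rw [h3] at h1
    exact sub_eq_zero.mp (norm_le_zero_iff.mp h1)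
  refine ⟨hrel, fun hd => ?_⟩
  let W1 : C(X, ℂ) × ℂ := (⟨fun x => Z.1 x + t * conj (Z.1 x), by fun_prop⟩, H.2 / D.2)
  have hW13 : W1 ^ 3 = W := by
    refine Prod.ext ?_ ?_
    · ext x
      exact (hWx x).symm
    · change (H.2 / D.2) ^ 3 = W.2
      rw [div_pow, hrel]
      field_simp
  have hW1D : D * W1 = H := by
    refine Prod.ext ?_ ?_
    · ext x
      rw [hHx x, mul_comm]; rfl
    · change D.2 * (H.2 / D.2) = H.2
      field_simp
  let Φ : MvPolynomial (Fin 2) ℂ →ₐ[ℂ] (C(X, ℂ) × ℂ) := MvPolynomial.aeval ![Z, W1]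
  have hΦ : ∀ R, D ^ 2 * Φ R ∈ G ∧ D ^ 2 * W1 * Φ R ∈ G ∧ D ^ 2 * W1 ^ 2 * Φ R ∈ G := by
    intro R
    induction R using MvPolynomial.induction_on with
    | C r =>
      have : Φ (MvPolynomial.C r) = algebraMap ℂ _ r := by simp [Φ]
      rw [this]
      refine ⟨G.mul_mem (G.pow_mem hD 2) (G.algebraMap_mem _), ?_, ?_⟩
      · have e : D ^ 2 * W1 = D * H := by rw [← hW1D]; ring
        rw [e]
        exact G.mul_mem (G.mul_mem hD hH) (G.algebraMap_mem _)
      · have e : D ^ 2 * W1 ^ 2 = H ^ 2 := by rw [← hW1D]; ring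
        rw [e]
        exact G.mul_mem (G.pow_mem hH 2) (G.algebraMap_mem _)
    | add p q hp hq =>
      simp only [map_add, mul_add]
      exact ⟨G.add_mem hp.1 hq.1, G.add_mem hp.2.1 hq.2.1, G.add_mem hp.2.2 hq.2.2⟩
    | mul_X p i hp =>
      rw [map_mul]
      have hX : Φ (MvPolynomial.X i) = ![Z, W1] i := by simp [Φ]
      rw [hX]
      fin_cases i
      · simp only [Fin.zero_eta, Matrix.cons_val_zero, ← mul_assoc]
        exact ⟨G.mul_mem hp.1 hZ, G.mul_mem hp.2.1 hZ, G.mul_mem hp.2.2 hZ⟩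
      · simp only [Fin.mk_one, Matrix.cons_val_one, Matrix.cons_val_fin_one]
        refine ⟨?_, ?_, ?_⟩
        · have e : D ^ 2 * (Φ p * W1) = D ^ 2 * W1 * Φ p := by ring
          rw [e]; exact hp.2.1
        · have e : D ^ 2 * W1 * (Φ p * W1) = D ^ 2 * W1 ^ 2 * Φ p := by ring
          rw [e]; exact hp.2.2
        · have e : D ^ 2 * W1 ^ 2 * (Φ p * W1) = W * (D ^ 2 * Φ p) := by rw [← hW13]; ring
          rw [e]; exact G.mul_mem hW hp.1
  have hb2 : ∀ q ∈ Φ.range, ‖q.2‖ ≤ ‖q.1‖ := by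
    rintro q ⟨R, rfl⟩
    change ‖(Φ R).2‖ ≤ ‖(Φ R).1‖
    by_contra hcon
    push Not at hcon
    have hn : ∀ n : ℕ, ‖D.2‖ ^ 2 * ‖(Φ R).2‖ ^ n ≤ ‖D.1 ^ 2‖ * ‖(Φ R).1‖ ^ n := by
      intro n
      have h1 := hb _ (hΦ (R ^ n)).1
      rw [map_pow] at h1
      have e1 : (D ^ 2 * Φ R ^ n).2 = D.2 ^ 2 * (Φ R).2 ^ n := rfl
      have e2 : (D ^ 2 * Φ R ^ n).1 = D.1 ^ 2 * (Φ R).1 ^ n := rfl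
      rw [e1, e2, norm_mul, norm_pow, norm_pow] at h1
      refine h1.trans ((norm_mul_le _ _).trans ?_)
      rcases Nat.eq_zero_or_pos n with rfl | hn
      · simp only [pow_zero, mul_one]
        rcases isEmpty_or_nonempty X with he | he
        · have : D.1 ^ 2 = 0 := by ext x; exact he.elim x
          simp [this]
        · simp
      · gcongr
        exact norm_pow_le' _ hn
    have hB : 0 < ‖(Φ R).2‖ := lt_of_le_of_lt (norm_nonneg _) hcon
    have hlim : Filter.Tendsto (fun n : ℕ => ‖D.1 ^ 2‖ * (‖(Φ R).1‖ / ‖(Φ R).2‖) ^ n)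
        Filter.atTop (nhds (‖D.1 ^ 2‖ * 0)) :=
      (tendsto_pow_atTop_nhds_zero_of_lt_one (by positivity) ((div_lt_one hB).mpr hcon)).const_mul _
    have h5 : ‖D.2‖ ^ 2 ≤ ‖D.1 ^ 2‖ * 0 := by
      refine ge_of_tendsto' hlim fun n => ?_
      have := hn n
      rw [div_pow, ← mul_div_assoc, le_div_iff₀ (by positivity)]
      exact this
    have : 0 < ‖D.2‖ ^ 2 := by positivity
    linarith
  let Z' : C(X, ℂ) × ℂ := ((t : ℂ)⁻¹) • (W1 - Z)
  have htc : (t : ℂ) ≠ 0 := by exact_mod_cast ht.ne'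
  have hZm : Z ∈ Φ.range := ⟨MvPolynomial.X 0, by simp [Φ]⟩
  have hW1m : W1 ∈ Φ.range := ⟨MvPolynomial.X 1, by simp [Φ]⟩
  have hZ'm : Z' ∈ Φ.range := Φ.range.smul_mem (Φ.range.sub_mem hW1m hZm) _
  have hZ'x : ∀ x, Z'.1 x = conj (Z.1 x) := by
    intro x
    have : Z'.1 x = (t : ℂ)⁻¹ * ((Z.1 x + t * conj (Z.1 x)) - Z.1 x) := rfl
    rw [this]; field_simp; ring
  have h6 := aux_sq Φ.range hb2 Z Z' ((-2 : ℂ) • (Z * Z')) hZm hZ'm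
    (Φ.range.smul_mem (Φ.range.mul_mem hZm hZ'm) _) (by
      intro x
      have : ((-2 : ℂ) • (Z * Z')).1 x = (-2 : ℂ) * (Z.1 x * Z'.1 x) := rfl
      rw [this, hZ'x, Complex.sq_norm, Complex.sq_norm, Complex.normSq_apply, Complex.normSq_apply]
      simp
      linarith)
  have h7 : ((-2 : ℂ) • (Z * Z')).2 = (-2 : ℂ) * (Z.2 * Z'.2) := rfl
  rw [h7, Complex.sq_norm, Complex.sq_norm, Complex.normSq_apply, Complex.normSq_apply] at h6
  simp only [Complex.mul_re, Complex.neg_re, Complex.re_ofNat, Complex.neg_im, Complex.im_ofNat] at h6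
  have h8 : Z'.2 = conj Z.2 := by
    apply Complex.ext
    · rw [Complex.conj_re]
      nlinarith [sq_nonneg (Z'.2.re - Z.2.re), sq_nonneg (Z'.2.im + Z.2.im)]
    · rw [Complex.conj_im]
      nlinarith [sq_nonneg (Z'.2.re - Z.2.re), sq_nonneg (Z'.2.im + Z.2.im)]
  have h9 : W1.2 = Z.2 + t * conj Z.2 := by
    have : Z'.2 = (t : ℂ)⁻¹ * (W1.2 - Z.2) := rfl
    rw [← h8, this]; field_simp; ring
  rw [← h9, ← hW13]; rfl

/-- The pair of the first coordinate on `X` and its value at `p`. -/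
noncomputable def pairZ (X : Set (ℂ × ℂ)) (p : ℂ × ℂ) : C(X, ℂ) × ℂ := (⟨fun x => x.1.1, by fun_prop⟩, p.1)

/-- The pair of the second coordinate on `X` and its value at `p`. -/
noncomputable def pairW (X : Set (ℂ × ℂ)) (p : ℂ × ℂ) : C(X, ℂ) × ℂ := (⟨fun x => x.1.2, by fun_prop⟩, p.2)

open Filter Topology in
lemma aux_build (X : Set (ℂ × ℂ)) [CompactSpace X] (p : ℂ × ℂ) (hp : p ∈ polyHull2 X) :
    ∃ G : Subalgebra ℂ (C(X, ℂ) × ℂ), (∀ q ∈ G, ‖q.2‖ ≤ ‖q.1‖) ∧ pairZ X p ∈ G ∧ pairW X p ∈ G ∧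
      ∀ g : C(X, ℂ), ∀ Q ∈ G, Q.1 = g ^ 3 →
        (∀ x, g x = 0 ∨ (0 < (g x).re ∧ (g x).im ^ 2 < 3 * (g x).re ^ 2)) → ∃ η : ℂ, (g, η) ∈ G := by
  let Φ : MvPolynomial (Fin 2) ℂ →ₐ[ℂ] (C(X, ℂ) × ℂ) := MvPolynomial.aeval ![pairZ X p, pairW X p]
  have e1 : ∀ R, ∀ x : X, (Φ R).1 x = MvPolynomial.eval (fun i => if i = 0 then x.1.1 else x.1.2) R := by
    intro R x
    have : ((ContinuousMap.evalAlgHom ℂ ℂ x).comp (AlgHom.fst ℂ C(X, ℂ) ℂ)).comp Φ =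
        MvPolynomial.aeval (fun i : Fin 2 => if i = 0 then x.1.1 else x.1.2) := by
      apply MvPolynomial.algHom_ext
      intro i
      fin_cases i <;> simp [Φ, pairZ, pairW]
    have h2 := DFunLike.congr_fun this R
    rw [MvPolynomial.aeval_eq_eval] at h2
    exact h2
  have e2 : ∀ R, (Φ R).2 = MvPolynomial.eval (fun i => if i = 0 then p.1 else p.2) R := by
    intro R
    have : (AlgHom.snd ℂ C(X, ℂ) ℂ).comp Φ =
        MvPolynomial.aeval (fun i : Fin 2 => if i = 0 then p.1 else p.2) := by
      apply MvPolynomial.algHom_ext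
      intro i
      fin_cases i <;> simp [Φ, pairZ, pairW]
    have h2 := DFunLike.congr_fun this R
    rw [MvPolynomial.aeval_eq_eval] at h2
    exact h2
  have hb0 : ∀ R, ‖(Φ R).2‖ ≤ ‖(Φ R).1‖ := by
    intro R
    rw [e2]
    refine (hp R).trans (Real.sSup_le ?_ (norm_nonneg _))
    rintro _ ⟨w, hw, rfl⟩
    have := ContinuousMap.norm_coe_le_norm (Φ R).1 ⟨w, hw⟩
    rw [e1] at this
    exact this
  have hbd : ∀ q ∈ Φ.range.topologicalClosure, ‖q.2‖ ≤ ‖q.1‖ := by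
    intro q hq
    have hcl : IsClosed {q : C(X, ℂ) × ℂ | ‖q.2‖ ≤ ‖q.1‖} :=
      isClosed_le (by fun_prop) (by fun_prop)
    have hsub : (Φ.range : Set (C(X, ℂ) × ℂ)) ⊆ {q | ‖q.2‖ ≤ ‖q.1‖} := by
      rintro _ ⟨R, rfl⟩
      exact hb0 R
    exact closure_minimal hsub hcl hq
  refine ⟨Φ.range.topologicalClosure, hbd, ?_, ?_, ?_⟩
  · exact Subalgebra.le_topologicalClosure _ ⟨MvPolynomial.X 0, by simp [Φ]⟩
  · exact Subalgebra.le_topologicalClosure _ ⟨MvPolynomial.X 1, by simp [Φ]⟩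
  · intro g Q hQ hQg hsec
    let Φ0 : MvPolynomial (Fin 2) ℂ →ₐ[ℂ] C(X, ℂ) := (AlgHom.fst ℂ C(X, ℂ) ℂ).comp Φ
    have hgA : g ^ 3 ∈ Φ0.range.topologicalClosure := by
      rw [← hQg]
      have hQ' : Q ∈ closure (Φ.range : Set (C(X, ℂ) × ℂ)) := hQ
      refine map_mem_closure continuous_fst hQ' ?_
      rintro _ ⟨R, rfl⟩
      exact ⟨R, rfl⟩
    have hg := aux_cube _ (Subalgebra.isClosed_topologicalClosure _) g hgA hsec
    have hg' : g ∈ closure (Φ0.range : Set C(X, ℂ)) := hg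
    obtain ⟨f, hf, hlim⟩ := mem_closure_iff_seq_limit.mp hg'
    choose R hR using hf
    have hR' : ∀ n, (Φ (R n)).1 = f n := hR
    have hc : CauchySeq (fun n => (Φ (R n)).2) := by
      have hfc := hlim.cauchySeq
      rw [Metric.cauchySeq_iff] at hfc ⊢
      intro ε hε
      obtain ⟨N, hN⟩ := hfc ε hε
      refine ⟨N, fun m hm n hn => lt_of_le_of_lt ?_ (hN m hm n hn)⟩
      have := hb0 (R m - R n)
      rw [map_sub, Prod.fst_sub, Prod.snd_sub, hR', hR'] at this
      rwa [dist_eq_norm, dist_eq_norm]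
    obtain ⟨η, hη⟩ := cauchySeq_tendsto_of_complete hc
    refine ⟨η, ?_⟩
    have hpair : Tendsto (fun n => Φ (R n)) atTop (𝓝 (g, η)) := by
      rw [Prod.tendsto_iff]
      refine ⟨?_, hη⟩
      simp only [hR']
      exact hlim
    exact mem_closure_of_tendsto hpair (Eventually.of_forall fun n => ⟨R n, rfl⟩)

lemma aux_ineq2 (t X Y : ℝ) (h1 : 1.07 < t) (h2 : t ≤ 1.2) (hX : 0 ≤ X) (hY : 0 ≤ Y) (hn : 0 < X + Y) :
    0 < 6 * t - 3 - 4 * t ^ 2 + t ^ 4 ∧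
    0 < 3 + 4 * t ^ 2 - t ^ 4 ∧
    4 * X * Y * (8 * t ^ 3 * X - (4 * t ^ 3 - t ^ 4 - 4 * t ^ 2 + 3) * (X + Y)) ^ 2 <
      3 * (X + Y) ^ 2 * ((6 * t - 3 - 4 * t ^ 2 + t ^ 4) * (X + Y) + 2 * (3 + 4 * t ^ 2 - t ^ 4) * X) ^ 2 := by
  have q1 : 1.1449 ≤ t ^ 2 := by nlinarith
  have q2 : t ^ 2 ≤ 1.44 := by nlinarith
  have c2 : t ^ 3 ≤ 1.728 := by
    have : t ^ 3 = t ^ 2 * t := by ring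
    rw [this]; nlinarith
  have c1 : 1.225 ≤ t ^ 3 := by
    have : t ^ 3 = t ^ 2 * t := by ring
    rw [this]; nlinarith
  obtain ⟨m, hm⟩ : ∃ m, m = 6 * t - 3 - 4 * t ^ 2 + t ^ 4 := ⟨_, rfl⟩
  obtain ⟨b, hb⟩ : ∃ b, b = 3 + 4 * t ^ 2 - t ^ 4 := ⟨_, rfl⟩
  obtain ⟨k, hk⟩ : ∃ k, k = 4 * t ^ 3 - t ^ 4 - 4 * t ^ 2 + 3 := ⟨_, rfl⟩
  have hm1 : 0.147 ≤ m := by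
    have e : m = (t - 1) * (t ^ 3 + t ^ 2 - 3 * t + 3) := by rw [hm]; ring
    have h3 : 2.1 ≤ t ^ 3 + t ^ 2 - 3 * t + 3 := by
      have e2 : t ^ 3 = t ^ 2 * t := by ring
      nlinarith [sq_nonneg (t - 1.07)]
    rw [e]; nlinarith
  have hb1 : 6.2 ≤ b := by
    have e : b = 3 + 4 * t ^ 2 - (t ^ 2) ^ 2 := by rw [hb]; ring
    rw [e]; nlinarith
  have hkk : k = 3 - t ^ 2 * (t - 2) ^ 2 := by rw [hk]; ring
  have hk1 : k ≤ 2.2 := by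
    have : 0.9 ≤ t * (2 - t) := by nlinarith
    have e : t ^ 2 * (t - 2) ^ 2 = (t * (2 - t)) ^ 2 := by ring
    rw [hkk, e]; nlinarith
  have hk0 : 0 ≤ k := by
    have h3 : t * (2 - t) ≤ 1 := by nlinarith [sq_nonneg (t - 1)]
    have h4 : 0 ≤ t * (2 - t) := by nlinarith
    have e : t ^ 2 * (t - 2) ^ 2 = (t * (2 - t)) ^ 2 := by ring
    rw [hkk, e]; nlinarith
  rw [← hm, ← hb, ← hk]
  have hm0 : 0 < m := by linarith
  have hb0 : 0 < b := by linarith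
  refine ⟨hm0, hb0, ?_⟩
  obtain ⟨c, hc⟩ : ∃ c, c = t ^ 3 := ⟨_, rfl⟩
  rw [← hc] at c1 c2 ⊢
  obtain ⟨n, hnn⟩ : ∃ n, n = X + Y := ⟨_, rfl⟩
  rw [← hnn] at hn ⊢
  have hYn : Y ≤ n := by linarith
  have hkmb : k ^ 2 < 6 * (m * b) := by
    have : 0.147 * 6.2 ≤ m * b := by gcongr
    have h4 : k ^ 2 ≤ 2.2 ^ 2 := by gcongr
    norm_num at this h4
    linarith
  by_cases hcase : 8 * c * X ≤ 2 * k * n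
  · have h3 : (8 * c * X - k * n) ^ 2 ≤ (k * n) ^ 2 := by
      apply sq_le_sq'
      · have : 0 ≤ 8 * c * X := by positivity
        linarith
      · linarith
    have h4 : 4 * X * Y * (8 * c * X - k * n) ^ 2 ≤ 4 * X * n * (k * n) ^ 2 := by gcongr
    have e : 3 * n ^ 2 * (m * n + 2 * b * X) ^ 2 - 4 * X * n * (k * n) ^ 2 =
        4 * n ^ 3 * X * (6 * (m * b) - k ^ 2) + 3 * n ^ 2 * (m * n - 2 * b * X) ^ 2 := by ring
    have h5 : 0 < 4 * n ^ 3 * X * (6 * (m * b) - k ^ 2) + 3 * n ^ 2 * (m * n - 2 * b * X) ^ 2 := by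
      rcases hX.eq_or_lt with h | h
      · rw [← h]
        have : 3 * n ^ 2 * (m * n - 2 * b * 0) ^ 2 = 3 * n ^ 2 * (m * n) ^ 2 := by ring
        rw [this]; positivity
      · have : 0 < 6 * (m * b) - k ^ 2 := by linarith
        positivity
    linarith
  · push Not at hcase
    have hX0 : 0 < X := by
      rcases hX.eq_or_lt with h | h
      · rw [← h] at hcase
        have : 0 ≤ 2 * k * n := by positivity
        linarith
      · exact h
    have h3 : (8 * c * X - k * n) ^ 2 ≤ (8 * c * X) ^ 2 := by
      have : 0 ≤ k * n := by positivity
      apply sq_le_sq' <;> linarith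
    have h4 : 4 * X * Y ≤ n ^ 2 := by rw [hnn]; nlinarith [sq_nonneg (X - Y)]
    have h5 : 4 * X * Y * (8 * c * X - k * n) ^ 2 ≤ n ^ 2 * (8 * c * X) ^ 2 := by gcongr
    have h6 : (8 * c) ^ 2 < 12 * b ^ 2 := by
      have h61 : (8 * c) ^ 2 ≤ (8 * 1.728) ^ 2 := by gcongr
      have h62 : 6.2 ^ 2 ≤ b ^ 2 := by gcongr
      norm_num at h61 h62
      linarith
    have h7 : n ^ 2 * (8 * c * X) ^ 2 < n ^ 2 * X ^ 2 * (12 * b ^ 2) := by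
      have : n ^ 2 * (8 * c * X) ^ 2 = n ^ 2 * X ^ 2 * (8 * c) ^ 2 := by ring
      rw [this]; gcongr
    have h8 : (2 * b * X) ^ 2 ≤ (m * n + 2 * b * X) ^ 2 := by
      have : 0 ≤ m * n := by positivity
      gcongr; linarith
    have h9 : 3 * n ^ 2 * (2 * b * X) ^ 2 ≤ 3 * n ^ 2 * (m * n + 2 * b * X) ^ 2 := by gcongr
    linarith

lemma aux_ineq1 (t X Y : ℝ) (h1 : 1.2 < t) (hX : 0 ≤ X) (hY : 0 ≤ Y) (hn : 0 < X + Y) :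
    4 * X * Y < 3 * ((t + 1) * X + (t - 1) * Y) ^ 2 := by
  have e : 3 * ((t + 1) * X + (t - 1) * Y) ^ 2 - 4 * X * Y =
    3 * ((t + 1) * X - (t - 1) * Y) ^ 2 + (12 * (t ^ 2 - 1) - 4) * (X * Y) := by ring
  have hc : 0 < 12 * (t ^ 2 - 1) - 4 := by nlinarith
  have hXY : 0 ≤ X * Y := by positivity
  rcases hXY.eq_or_lt with h | h
  · have h2 : 4 * X * Y = 0 := by linarith
    have h3 : 0 < (t + 1) * X + (t - 1) * Y := by nlinarith
    rw [h2]; positivity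
  · have := mul_pos hc h
    have := sq_nonneg ((t + 1) * X - (t - 1) * Y)
    linarith

lemma aux_re_im2 (t : ℝ) (z : ℂ) :
    ((z + t * conj z) * ((z + t * conj z) ^ 3 - (1 + t ^ 4) * z ^ 3)).re =
      t * (z.re ^ 2 + z.im ^ 2) * ((6 * t - 3 - 4 * t ^ 2 + t ^ 4) * (z.re ^ 2 + z.im ^ 2)
        + 2 * (3 + 4 * t ^ 2 - t ^ 4) * z.re ^ 2) ∧
    ((z + t * conj z) * ((z + t * conj z) ^ 3 - (1 + t ^ 4) * z ^ 3)).im =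
      -(2 * t * z.re * z.im * (8 * t ^ 3 * z.re ^ 2 -
        (4 * t ^ 3 - t ^ 4 - 4 * t ^ 2 + 3) * (z.re ^ 2 + z.im ^ 2))) := by
  have ht4 : ((t : ℂ) ^ 4) = ((t ^ 4 : ℝ) : ℂ) := by push_cast; rfl
  constructor
  · rw [ht4]
    simp [pow_succ]
    ring
  · rw [ht4]
    simp [pow_succ]
    ring

lemma aux_nsq (z : ℂ) : ‖z‖ ^ 2 = z.re ^ 2 + z.im ^ 2 := by
  rw [Complex.sq_norm, Complex.normSq_apply]; ring

lemma aux_fin (t : ℝ) (ht : 0 < t) (p : ℂ × ℂ)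
    (h : (3 * t : ℂ) * p.2 + p.1 ^ 3 = (p.1 + t * conj p.1) ^ 3) : p ∈ Sset t := by
  refine ⟨p.1, ?_⟩
  have ht0 : (t : ℂ) ≠ 0 := by exact_mod_cast ht.ne'
  refine Prod.ext rfl ?_
  have h3 : (3 * t : ℂ) ≠ 0 := mul_ne_zero (by norm_num) ht0
  apply mul_left_cancel₀ h3
  have : (3 * t : ℂ) * p.2 = (p.1 + t * conj p.1) ^ 3 - p.1 ^ 3 := by rw [← h]; ring
  rw [this]
  ring

lemma aux_case1 (t : ℝ) (ht : 1.2 < t) (X : Set (ℂ × ℂ)) [CompactSpace X]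
    (G : Subalgebra ℂ (C(X, ℂ) × ℂ)) (hb : ∀ q ∈ G, ‖q.2‖ ≤ ‖q.1‖) (Z W : C(X, ℂ) × ℂ)
    (hZ : Z ∈ G) (hW : W ∈ G)
    (hWx : ∀ x, W.1 x = (Z.1 x + t * conj (Z.1 x)) ^ 3)
    (hroot : ∀ g : C(X, ℂ), ∀ Q ∈ G, Q.1 = g ^ 3 →
        (∀ x, g x = 0 ∨ (0 < (g x).re ∧ (g x).im ^ 2 < 3 * (g x).re ^ 2)) → ∃ η : ℂ, (g, η) ∈ G) :
    W.2 = (Z.2 + t * conj Z.2) ^ 3 := by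
  have ht0 : 0 < t := by linarith
  let g : C(X, ℂ) := ⟨fun x => (Z.1 x + t * conj (Z.1 x)) * Z.1 x, by fun_prop⟩
  have hgx : ∀ x, g x = (Z.1 x + t * conj (Z.1 x)) * Z.1 x := fun x => rfl
  obtain ⟨η, hη⟩ := hroot g (W * Z ^ 3) (G.mul_mem hW (G.pow_mem hZ 3)) (by
    ext x
    simp only [Prod.fst_mul, Prod.pow_fst, ContinuousMap.mul_apply, ContinuousMap.pow_apply, hWx, hgx]
    ring) (by
    intro x
    rw [hgx]
    generalize Z.1 x = z
    have hre : ((z + t * conj z) * z).re = (t + 1) * z.re ^ 2 + (t - 1) * z.im ^ 2 := by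
      simp; ring
    have him : ((z + t * conj z) * z).im = 2 * z.re * z.im := by
      simp; ring
    by_cases hz : z = 0
    · left; simp [hz]
    · right
      have hn : 0 < z.re ^ 2 + z.im ^ 2 := by rw [← aux_nsq]; positivity
      have := aux_ineq1 t (z.re ^ 2) (z.im ^ 2) ht (by positivity) (by positivity) hn
      rw [hre, him]
      refine ⟨?_, by nlinarith⟩
      nlinarith [sq_nonneg z.re, sq_nonneg z.im])
  obtain ⟨c1, c2⟩ := aux_core G hb t ht0 Z W Z (g, η) hZ hW hZ hη hWx hgx
  by_cases ha : Z.2 = 0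
  · simp only [ha] at c1
    have hη0 : η = 0 := by simpa using c1
    have hK := aux_sq G hb W 0 ((-((1 + t) ^ 6 / t ^ 3 : ℝ) : ℂ) • ((g, η) - Z ^ 2) ^ 3) hW G.zero_mem
      (G.smul_mem (G.pow_mem (G.sub_mem hη (G.pow_mem hZ 2)) 3) _) (by
        intro x
        have e : (((-((1 + t) ^ 6 / t ^ 3 : ℝ) : ℂ) • (((g, η) : C(X, ℂ) × ℂ) - Z ^ 2) ^ 3).1 x) =
            ((-((1 + t) ^ 6 * (‖Z.1 x‖ ^ 2) ^ 3) : ℝ) : ℂ) := by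
          simp only [Prod.smul_fst, Prod.pow_fst, Prod.fst_sub, ContinuousMap.smul_apply,
            ContinuousMap.pow_apply, ContinuousMap.sub_apply, hgx, smul_eq_mul]
          have : (Z.1 x + t * conj (Z.1 x)) * Z.1 x - Z.1 x ^ 2 = ((t * ‖Z.1 x‖ ^ 2 : ℝ) : ℂ) := by
            push_cast
            rw [← Complex.mul_conj']; ring
          rw [this, ← Complex.ofReal_pow, ← Complex.ofReal_neg, ← Complex.ofReal_mul]
          congr 1
          field_simp
        rw [e, Complex.ofReal_re, hWx]
        have hn : ‖Z.1 x + t * conj (Z.1 x)‖ ≤ (1 + t) * ‖Z.1 x‖ := by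
          refine (norm_add_le _ _).trans ?_
          rw [norm_mul, Complex.norm_conj, Complex.norm_real, Real.norm_of_nonneg ht0.le]
          linarith
        have h6 : ‖Z.1 x + t * conj (Z.1 x)‖ ^ 6 ≤ ((1 + t) * ‖Z.1 x‖) ^ 6 := by gcongr
        have e6 : ‖(Z.1 x + t * conj (Z.1 x)) ^ 3‖ ^ 2 = ‖Z.1 x + t * conj (Z.1 x)‖ ^ 6 := by
          rw [norm_pow]; ring
        rw [e6]
        have : ((1 + t) * ‖Z.1 x‖) ^ 6 = (1 + t) ^ 6 * (‖Z.1 x‖ ^ 2) ^ 3 := by ring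
        simp
        linarith)
    have hW0 : W.2 = 0 := by
      have h : ‖W.2‖ ^ 2 ≤ 0 := by simpa [ha, hη0] using hK
      have : ‖W.2‖ ^ 2 = 0 := le_antisymm h (by positivity)
      simpa using this
    rw [hW0, ha]; simp
  · exact c2 ha

lemma aux_case2 (t : ℝ) (ht : 1.07 < t) (ht2 : t ≤ 1.2) (X : Set (ℂ × ℂ)) [CompactSpace X]
    (G : Subalgebra ℂ (C(X, ℂ) × ℂ)) (hb : ∀ q ∈ G, ‖q.2‖ ≤ ‖q.1‖) (Z W : C(X, ℂ) × ℂ)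
    (hZ : Z ∈ G) (hW : W ∈ G)
    (hWx : ∀ x, W.1 x = (Z.1 x + t * conj (Z.1 x)) ^ 3)
    (hroot : ∀ g : C(X, ℂ), ∀ Q ∈ G, Q.1 = g ^ 3 →
        (∀ x, g x = 0 ∨ (0 < (g x).re ∧ (g x).im ^ 2 < 3 * (g x).re ^ 2)) → ∃ η : ℂ, (g, η) ∈ G) :
    W.2 = (Z.2 + t * conj Z.2) ^ 3 := by
  have ht0 : 0 < t := by linarith
  obtain ⟨D, hDd⟩ : ∃ D, D = W - (1 + t ^ 4 : ℂ) • Z ^ 3 := ⟨_, rfl⟩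
  have hD : D ∈ G := by rw [hDd]; exact G.sub_mem hW (G.smul_mem (G.pow_mem hZ 3) _)
  have hDx : ∀ x, D.1 x = (Z.1 x + t * conj (Z.1 x)) ^ 3 - (1 + t ^ 4) * (Z.1 x) ^ 3 := by
    intro x
    rw [hDd, ← hWx]
    simp
  have hD2 : D.2 = W.2 - (1 + t ^ 4) * Z.2 ^ 3 := by
    rw [hDd]; simp
  let g : C(X, ℂ) := ⟨fun x => (Z.1 x + t * conj (Z.1 x)) * D.1 x, by fun_prop⟩
  have hgx : ∀ x, g x = (Z.1 x + t * conj (Z.1 x)) * D.1 x := fun x => rfl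
  obtain ⟨η, hη⟩ := hroot g (W * D ^ 3) (G.mul_mem hW (G.pow_mem hD 3)) (by
    ext x
    simp only [Prod.fst_mul, Prod.pow_fst, ContinuousMap.mul_apply, ContinuousMap.pow_apply, hWx, hgx]
    ring) (by
    intro x
    rw [hgx, hDx]
    generalize Z.1 x = z
    by_cases hz : z = 0
    · left; simp [hz]
    · right
      obtain ⟨hre, him⟩ := aux_re_im2 t z
      have hn : 0 < z.re ^ 2 + z.im ^ 2 := by rw [← aux_nsq]; positivity
      obtain ⟨i1, i2, i3⟩ := aux_ineq2 t (z.re ^ 2) (z.im ^ 2) ht ht2 (by positivity) (by positivity) hn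
      rw [hre, him]
      refine ⟨by positivity, ?_⟩
      have := mul_lt_mul_of_pos_left i3 (show 0 < t ^ 2 by positivity)
      refine lt_of_eq_of_lt ?_ (lt_of_lt_of_eq this ?_) <;> ring)
  obtain ⟨c1, c2⟩ := aux_core G hb t ht0 Z W D (g, η) hZ hW hD hη hWx hgx
  by_cases hd : D.2 = 0
  · simp only [hd] at c1
    have hη0 : η = 0 := by simpa using c1
    obtain ⟨i1, i2, -⟩ := aux_ineq2 t 1 0 ht ht2 (by norm_num) le_rfl (by norm_num)
    obtain ⟨m, hm⟩ : ∃ m, m = 6 * t - 3 - 4 * t ^ 2 + t ^ 4 := ⟨_, rfl⟩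
    rw [← hm] at i1
    have hK := aux_sq G hb (Z ^ 2) 0 (((-(1 / (t * m)) : ℝ) : ℂ) • (g, η)) (G.pow_mem hZ 2) G.zero_mem
      (G.smul_mem hη _) (by
        intro x
        have e : ((((-(1 / (t * m)) : ℝ) : ℂ) • ((g, η) : C(X, ℂ) × ℂ)).1 x).re =
            -(1 / (t * m)) * (g x).re := by
          simp only [Prod.smul_fst, ContinuousMap.smul_apply, smul_eq_mul, Complex.re_ofReal_mul]
        rw [e, hgx, hDx, (aux_re_im2 t _).1, ← hm]
        simp only [Prod.pow_fst, ContinuousMap.pow_apply, norm_pow, Prod.fst_zero,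
          ContinuousMap.zero_apply, norm_zero]
        rw [← aux_nsq]
        generalize Z.1 x = z
        have : -(1 / (t * m)) * (t * ‖z‖ ^ 2 * (m * ‖z‖ ^ 2 + 2 * (3 + 4 * t ^ 2 - t ^ 4) * z.re ^ 2)) =
          -((‖z‖ ^ 2) ^ 2) - ‖z‖ ^ 2 * (2 * (3 + 4 * t ^ 2 - t ^ 4) * z.re ^ 2) / m := by
          field_simp
          ring
        rw [this]
        have : 0 ≤ ‖z‖ ^ 2 * (2 * (3 + 4 * t ^ 2 - t ^ 4) * z.re ^ 2) / m := by positivity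
        linarith)
    have ha : Z.2 = 0 := by
      have h : ‖Z.2 ^ 2‖ ^ 2 ≤ 0 := by simpa [hη0] using hK
      have : ‖Z.2 ^ 2‖ ^ 2 = 0 := le_antisymm h (by positivity)
      simpa using this
    have hW0 : W.2 = 0 := by
      rw [hd, ha] at hD2
      simpa using hD2.symm
    rw [hW0, ha]; simp
  · exact c2 hd

lemma aux_hull (t : ℝ) (ht : 1.07 < t) (X : Set (ℂ × ℂ)) [CompactSpace X]
    (hXS : X ⊆ Sset t ∩ eClosedBall 1) (p : ℂ × ℂ) (hp : p ∈ polyHull2 X) :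
    p ∈ Sset t ∩ eClosedBall 1 := by
  have ht0 : 0 < t := by linarith
  obtain ⟨G, hb, hZ, hw, hroot⟩ := aux_build X p hp
  have hW : (3 * t : ℂ) • pairW X p + pairZ X p ^ 3 ∈ G :=
    G.add_mem (G.smul_mem hw _) (G.pow_mem hZ 3)
  have hWx : ∀ x, ((3 * t : ℂ) • pairW X p + pairZ X p ^ 3).1 x =
      ((pairZ X p).1 x + t * conj ((pairZ X p).1 x)) ^ 3 := by
    intro x
    obtain ⟨z, hz⟩ := (hXS x.2).1
    simp only [pairZ, pairW, Prod.fst_add, Prod.smul_fst, Prod.pow_fst, ContinuousMap.add_apply,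
      ContinuousMap.smul_apply, ContinuousMap.pow_apply, ContinuousMap.coe_mk, smul_eq_mul]
    rw [hz]
    ring
  constructor
  · apply aux_fin t ht0
    rcases le_or_gt t 1.2 with h | h
    · exact aux_case2 t ht h X G hb _ _ hZ hW hWx hroot
    · exact aux_case1 t h X G hb _ _ hZ hW hWx hroot
  · have := aux_sq G hb (pairZ X p) (pairW X p) (algebraMap ℂ _ (-1)) hZ hw (G.algebraMap_mem _) (by
      intro x
      have h := (hXS x.2).2
      simp only [eClosedBall, Set.mem_setOf_eq] at h
      have e : ((algebraMap ℂ (C(X, ℂ) × ℂ) (-1)).1 x).re = -1 := by simp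
      rw [e]
      simp only [pairZ, pairW, ContinuousMap.coe_mk]
      linarith)
    have e : ((algebraMap ℂ (C(X, ℂ) × ℂ) (-1)).2).re = -1 := by simp
    rw [e] at this
    simp only [eClosedBall, Set.mem_setOf_eq]
    simp only [pairZ, pairW] at this
    linarith

lemma aux_compact (t : ℝ) : IsCompact (Sset t ∩ eClosedBall 1) := by
  let F : ℂ → ℂ × ℂ := fun z => (z, z ^ 2 * conj z + (t : ℂ) * z * (conj z) ^ 2
      + ((t : ℂ) ^ 2 / 3) * (conj z) ^ 3)
  have hF : Continuous F := by fun_prop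
  have hcb : IsClosed (eClosedBall 1) := by
    unfold eClosedBall
    exact isClosed_le (by fun_prop) (by fun_prop)
  have hc : IsCompact (F ⁻¹' eClosedBall 1) := by
    refine (isCompact_closedBall (0 : ℂ) 1).of_isClosed_subset (hcb.preimage hF) ?_
    intro z hz
    have h : ‖z‖ ^ 2 + ‖(F z).2‖ ^ 2 ≤ 1 ^ 2 := hz
    rw [mem_closedBall_zero_iff]
    have := sq_nonneg ‖(F z).2‖
    nlinarith [norm_nonneg z]
  have e : Sset t ∩ eClosedBall 1 = F '' (F ⁻¹' eClosedBall 1) := by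
    ext q
    constructor
    · rintro ⟨⟨z, rfl⟩, h⟩
      exact ⟨z, h, rfl⟩
    · rintro ⟨z, h, rfl⟩
      exact ⟨⟨z, rfl⟩, h⟩
  rw [e]
  exact hc.image hF

lemma aux_sub (X : Set (ℂ × ℂ)) (hX : IsCompact X) : X ⊆ polyHull2 X := by
  intro p hp R
  apply le_csSup
  · apply (hX.image _).bddAbove
    apply Continuous.norm
    apply (MvPolynomial.continuous_eval R).comp
    apply continuous_pi
    intro i
    split_ifs <;> fun_prop
  · exact ⟨p, hp, rfl⟩

lemma aux_t (t : ℝ) (ht : Real.sqrt (15 - Real.sqrt 33) / (2 * Real.sqrt 2) < t) : 1.07 < t := by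
  refine lt_of_le_of_lt ?_ ht
  rw [le_div_iff₀ (by positivity)]
  apply Real.le_sqrt_of_sq_le
  have h1 : Real.sqrt 33 ≤ 5.84 := by
    apply Real.sqrt_le_iff.mpr
    norm_num
  have h2 : Real.sqrt 2 ^ 2 = 2 := Real.sq_sqrt (by norm_num)
  nlinarith

/-- for `t > √(15 − √33)/(2√2)`, the surface `S_t` is locally polynomially
convex at the origin. -/
theorem stmt_5 (t : ℝ) (ht : Real.sqrt (15 - Real.sqrt 33) / (2 * Real.sqrt 2) < t) :
    ∃ r > (0 : ℝ), PolyConvex2 (Sset t ∩ eClosedBall r) := by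
  have h := aux_t t ht
  refine ⟨1, one_pos, ?_⟩
  have hc := aux_compact t
  haveI : CompactSpace (Sset t ∩ eClosedBall 1 : Set (ℂ × ℂ)) := isCompact_iff_compactSpace.mp hc
  exact Set.Subset.antisymm (fun p hp => aux_hull t h _ subset_rfl p hp) (aux_sub _ hc)
end

section
/- The surface S₁ = {(z, z²z̄ + z z̄² + (1/3) z̄³) : z ∈ ℂ} ⊆ ℂ² is locally polynomially convex at the origin: there exists r > 0 such that S₁ ∩ B̄(0;r) is polynomially convex. -/
open Complex ComplexConjugate

lemma cbrt_exists : ∃ c : ℝ → ℝ, Continuous c ∧ ∀ x : ℝ, c (x ^ 3) = x := by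
  refine ⟨fun t => (max t 0) ^ ((1:ℝ)/3) - (max (-t) 0) ^ ((1:ℝ)/3), ?_, ?_⟩
  · have h : Continuous fun s : ℝ => s ^ ((1:ℝ)/3) :=
      Real.continuous_rpow_const (by norm_num)
    exact (h.comp (by fun_prop : Continuous fun t : ℝ => max t 0)).sub
      (h.comp (by fun_prop : Continuous fun t : ℝ => max (-t) 0))
  · have key : ∀ x : ℝ, 0 ≤ x → (x ^ 3) ^ ((1:ℝ)/3) = x := by
      intro x hx
      rw [← Real.rpow_natCast, ← Real.rpow_mul hx]
      norm_num
    intro x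
    rcases le_total 0 x with hx | hx
    · have h3 : 0 ≤ x ^ 3 := by positivity
      simp only
      rw [max_eq_left h3, max_eq_right (by linarith), key x hx,
        Real.zero_rpow (by norm_num)]
      ring
    · have h3 : 0 ≤ (-x) ^ 3 := by
        have : 0 ≤ -x := by linarith
        positivity
      have h4 : -(x ^ 3) = (-x) ^ 3 := by ring
      simp only
      rw [h4, max_eq_left h3, max_eq_right (by linarith), key (-x) (by linarith),
        Real.zero_rpow (by norm_num)]
      ring

lemma S_rel {p : ℂ × ℂ} (hp : p ∈ Sset 1) :
    3 * p.2 + p.1 ^ 3 = (p.1 + conj p.1) ^ 3 := by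
  obtain ⟨z, rfl⟩ := hp
  simp only [ofReal_one]
  ring

lemma S_compact (r : ℝ) : IsCompact (Sset 1 ∩ eClosedBall r) := by
  have hcl : IsClosed (Sset 1 ∩ eClosedBall r) := by
    apply IsClosed.inter
    · have : Sset 1 = {p : ℂ × ℂ | p.2 = p.1 ^ 2 * conj p.1 + ((1:ℝ) : ℂ) * p.1 * (conj p.1) ^ 2
          + (((1:ℝ) : ℂ) ^ 2 / 3) * (conj p.1) ^ 3} := by
        ext ⟨a, b⟩
        simp only [Sset, Set.mem_setOf_eq, Prod.mk.injEq]
        constructor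
        · rintro ⟨z, rfl, h⟩; exact h
        · intro h; exact ⟨a, rfl, h⟩
      rw [this]
      have hc : Continuous fun p : ℂ × ℂ => conj p.1 := continuous_conj.comp continuous_fst
      exact isClosed_eq continuous_snd (by fun_prop)
    · exact isClosed_le (by fun_prop) continuous_const
  refine (isCompact_closedBall (0 : ℂ × ℂ) |r|).of_isClosed_subset hcl ?_
  rintro ⟨a, b⟩ ⟨-, h⟩
  simp only [eClosedBall, Set.mem_setOf_eq] at h
  rw [mem_closedBall_zero_iff, Prod.norm_def]
  refine max_le ?_ ?_
  · exact abs_le_of_sq_le_sq' (by nlinarith [sq_nonneg ‖b‖, sq_abs r]) (abs_nonneg r) |>.2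
  · exact abs_le_of_sq_le_sq' (by nlinarith [sq_nonneg ‖a‖, sq_abs r]) (abs_nonneg r) |>.2

lemma approx_poly (K : Set (ℂ × ℂ)) (hK : IsCompact K) (hS : K ⊆ Sset 1)
    (f : C(K, ℂ)) (ε : ℝ) (hε : 0 < ε) :
    ∃ p : MvPolynomial (Fin 2) ℂ, ∀ w : K,
      ‖MvPolynomial.eval (fun i => if i = 0 then w.1.1 else w.1.2) p - f w‖ < ε := by
  haveI : CompactSpace K := isCompact_iff_compactSpace.mp hK
  let zf : C(K, ℂ) := ⟨fun w => w.1.1, by fun_prop⟩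
  let wf : C(K, ℂ) := ⟨fun w => w.1.2, by fun_prop⟩
  let Φ : MvPolynomial (Fin 2) ℂ →ₐ[ℂ] C(K, ℂ) :=
    MvPolynomial.aeval (fun i => if i = 0 then zf else wf)
  have hΦ : ∀ p (w : K), Φ p w =
      MvPolynomial.eval (fun i => if i = 0 then w.1.1 else w.1.2) p := by
    intro p w
    induction p using MvPolynomial.induction_on with
    | C a => simp [Φ]
    | add p q hp hq => simp [hp, hq]
    | mul_X p i hp =>
      rw [map_mul, ContinuousMap.mul_apply, hp, map_mul]
      congr 1
      simp only [Φ, MvPolynomial.aeval_X, MvPolynomial.eval_X]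
      split_ifs <;> rfl
  let A : Subalgebra ℂ C(K, ℂ) := Φ.range.topologicalClosure
  have hsub : Φ.range ≤ A := Subalgebra.le_topologicalClosure _
  have hz : zf ∈ A := hsub ⟨MvPolynomial.X 0, by simp [Φ]⟩
  have hw : wf ∈ A := hsub ⟨MvPolynomial.X 1, by simp [Φ]⟩
  -- real part
  let xf : C(K, ℂ) := zf + star zf
  have hx : xf ∈ A := by
    obtain ⟨c, hc, hcx⟩ := cbrt_exists
    let u : K → ℝ := fun w => (2 * w.1.1.re) ^ 3
    have hu : Continuous u := by
      have : Continuous fun w : K => w.1.1.re := Complex.continuous_re.comp (by fun_prop)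
      fun_prop
    obtain ⟨M, hM⟩ := (isCompact_range hu).isBounded.exists_norm_le
    have hxv : ∀ w : K, xf w = ((2 * w.1.1.re : ℝ) : ℂ) := by
      intro w
      change w.1.1 + conj w.1.1 = _
      rw [Complex.add_conj]
    change xf ∈ closure (Φ.range : Set C(K, ℂ))
    rw [Metric.mem_closure_iff]
    intro δ hδ
    obtain ⟨q, hq⟩ := exists_polynomial_near_of_continuousOn (-M) M c hc.continuousOn δ hδ
    let ζ : MvPolynomial (Fin 2) ℂ := 3 * MvPolynomial.X 1 + MvPolynomial.X 0 ^ 3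
    have hζ : ∀ w : K, Φ ζ w = (u w : ℂ) := by
      intro w
      rw [hΦ]
      have := S_rel (hS w.2)
      rw [Complex.add_conj] at this
      simp only [ζ, map_add, map_mul, map_pow, MvPolynomial.eval_X, u]
      push_cast at this ⊢
      simpa using this
    refine ⟨Φ (Polynomial.aeval ζ (q.map (algebraMap ℝ ℂ))), ⟨_, rfl⟩, ?_⟩
    rw [ContinuousMap.dist_lt_iff hδ]
    intro w
    have h1 : Φ (Polynomial.aeval ζ (q.map (algebraMap ℝ ℂ))) w = ((q.eval (u w) : ℝ) : ℂ) := by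
      have h2 : ∀ s : Polynomial ℂ, Φ (Polynomial.aeval ζ s) w = s.eval (Φ ζ w) := by
        intro s
        rw [hΦ, hΦ]
        induction s using Polynomial.induction_on' with
        | add p q hp hq => simp only [map_add, Polynomial.eval_add, hp, hq]
        | monomial n a => simp [Polynomial.aeval_monomial]
      rw [h2, hζ, Polynomial.eval_map_algebraMap]
      exact Polynomial.aeval_algebraMap_apply_eq_algebraMap_eval (A := ℂ) (u w) q
    rw [h1, hxv, Complex.dist_eq, ← Complex.ofReal_sub, Complex.norm_real, norm_sub_rev]
    have h3 := hq (u w) (by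
      have := hM (u w) ⟨w, rfl⟩
      rwa [Real.norm_eq_abs, abs_le] at this)
    rwa [hcx] at h3
  have hsz : star zf ∈ A := by
    have : star zf = xf - zf := by simp [xf]
    rw [this]; exact A.sub_mem hx hz
  -- the star subalgebra generated by zf
  have htop : A = ⊤ := by
    let B : StarSubalgebra ℂ C(K, ℂ) := StarAlgebra.adjoin ℂ {zf}
    have hB : B.toSubalgebra ≤ A := by
      change (StarAlgebra.adjoin ℂ {zf}).toSubalgebra ≤ A
      rw [StarAlgebra.adjoin_toSubalgebra]
      apply Algebra.adjoin_le
      rintro g (hg | hg)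
      · rw [Set.mem_singleton_iff] at hg; rw [hg]; exact hz
      · rw [Set.mem_star, Set.mem_singleton_iff] at hg
        rw [← star_star g, hg]; exact hsz
    have hsep : B.SeparatesPoints := by
      intro v w hvw
      refine ⟨zf, ⟨zf, StarAlgebra.self_mem_adjoin_singleton ℂ zf, rfl⟩, ?_⟩
      intro h
      apply hvw
      obtain ⟨a, ha⟩ := hS v.2
      obtain ⟨b, hb⟩ := hS w.2
      have h' : v.1.1 = w.1.1 := h
      have hab : a = b := by rw [ha, hb] at h'; exact h'
      apply Subtype.ext
      rw [ha, hb, hab]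
    have hBt := ContinuousMap.starSubalgebra_topologicalClosure_eq_top_of_separatesPoints B hsep
    rw [eq_top_iff]
    intro g _
    have hg : g ∈ B.topologicalClosure := by rw [hBt]; trivial
    have hg' : g ∈ closure (B : Set C(K, ℂ)) := hg
    have hAcl : IsClosed (A : Set C(K, ℂ)) := Subalgebra.isClosed_topologicalClosure _
    exact closure_minimal (fun y hy => hB hy) hAcl hg'
  have hf : f ∈ A := by rw [htop]; trivial
  have hf' : f ∈ closure (Φ.range : Set C(K, ℂ)) := hf
  rw [Metric.mem_closure_iff] at hf'
  obtain ⟨g, ⟨p, rfl⟩, hg⟩ := hf' ε hε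
  refine ⟨p, fun w => ?_⟩
  have := (ContinuousMap.dist_lt_iff hε).1 hg w
  rw [← hΦ, ← Complex.dist_eq, dist_comm]
  exact this

lemma eval_cont (p : MvPolynomial (Fin 2) ℂ) : Continuous fun w : ℂ × ℂ =>
    ‖MvPolynomial.eval (fun i : Fin 2 => if i = 0 then w.1 else w.2) p‖ := by
  have h := MvPolynomial.continuous_eval p
  refine (h.comp (continuous_pi fun i => ?_)).norm
  split_ifs <;> fun_prop

/-- the surface `S₁ = {(z, z²z̄ + z z̄² + (1/3) z̄³) : z ∈ ℂ}` is locally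
polynomially convex at the origin. -/
theorem stmt_6 :
    ∃ r > (0 : ℝ), PolyConvex2 (Sset 1 ∩ eClosedBall r) := by
  refine ⟨1, one_pos, ?_⟩
  have hK := S_compact 1
  have hS : Sset 1 ∩ eClosedBall 1 ⊆ Sset 1 := Set.inter_subset_left
  generalize Sset 1 ∩ eClosedBall 1 = K at hK hS
  apply Set.Subset.antisymm
  · intro a ha
    by_contra haK
    let g : ℂ × ℂ → ℂ := fun w => (w.1 - a.1) * conj (w.1 - a.1) + (w.2 - a.2) * conj (w.2 - a.2)
    have hcc : Continuous (fun z : ℂ => conj z) := continuous_conj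
    have hc1 : Continuous fun w : K => conj (w.1.1 - a.1) := hcc.comp (by fun_prop)
    have hc2 : Continuous fun w : K => conj (w.1.2 - a.2) := hcc.comp (by fun_prop)
    have hgc : Continuous fun w : K => g w.1 := by
      simp only [g]
      fun_prop
    have hg0 : ∀ w : K, g w.1 ≠ 0 := by
      intro w h
      simp only [g, Complex.mul_conj] at h
      rw [← Complex.ofReal_add, Complex.ofReal_eq_zero] at h
      have h1 := Complex.normSq_nonneg (w.1.1 - a.1)
      have h2 := Complex.normSq_nonneg (w.1.2 - a.2)
      have e1 := Complex.normSq_eq_zero.1 (by linarith : Complex.normSq (w.1.1 - a.1) = 0)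
      have e2 := Complex.normSq_eq_zero.1 (by linarith : Complex.normSq (w.1.2 - a.2) = 0)
      apply haK
      have : a = w.1 := Prod.ext (sub_eq_zero.1 e1).symm (sub_eq_zero.1 e2).symm
      rw [this]; exact w.2
    let h1 : C(K, ℂ) := ⟨fun w => conj (w.1.1 - a.1) / g w.1, hc1.div hgc hg0⟩
    let h2 : C(K, ℂ) := ⟨fun w => conj (w.1.2 - a.2) / g w.1, hc2.div hgc hg0⟩
    have hid : ∀ w : K, (w.1.1 - a.1) * h1 w + (w.1.2 - a.2) * h2 w = 1 := by
      intro w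
      change (w.1.1 - a.1) * (conj (w.1.1 - a.1) / g w.1)
        + (w.1.2 - a.2) * (conj (w.1.2 - a.2) / g w.1) = 1
      rw [mul_div_assoc', mul_div_assoc', ← add_div]
      exact div_self (hg0 w)
    obtain ⟨M, hM⟩ := (hK.image (continuous_id.sub continuous_const :
      Continuous fun w : ℂ × ℂ => w - a)).isBounded.exists_pos_norm_le
    obtain ⟨hM0, hM⟩ := hM
    have hε : 0 < 1 / (4 * M) := by positivity
    obtain ⟨p1, hp1⟩ := approx_poly K hK hS h1 _ hε
    obtain ⟨p2, hp2⟩ := approx_poly K hK hS h2 _ hε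
    have key := ha (1 - (MvPolynomial.X 0 - MvPolynomial.C a.1) * p1
      - (MvPolynomial.X 1 - MvPolynomial.C a.2) * p2)
    have hle := Real.sSup_le (s := ((fun w : ℂ × ℂ =>
          ‖MvPolynomial.eval (fun i : Fin 2 => if i = 0 then w.1 else w.2)
            (1 - (MvPolynomial.X 0 - MvPolynomial.C a.1) * p1
      - (MvPolynomial.X 1 - MvPolynomial.C a.2) * p2)‖) '' K)) (a := 1 / 2) (by
        rintro _ ⟨w, hw, rfl⟩
        have b1 := (hp1 ⟨w, hw⟩).le
        have b2 := (hp2 ⟨w, hw⟩).le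
        have i := hid ⟨w, hw⟩
        have hn := hM _ ⟨w, hw, rfl⟩
        have n1 : ‖w.1 - a.1‖ ≤ M := (norm_fst_le (w - a)).trans hn
        have n2 : ‖w.2 - a.2‖ ≤ M := (norm_snd_le (w - a)).trans hn
        simp only [map_sub, map_mul, map_one, MvPolynomial.eval_X, MvPolynomial.eval_C,
          if_true, one_ne_zero, if_false] at b1 b2 i ⊢
        set P1 := MvPolynomial.eval (fun i : Fin 2 => if i = 0 then w.1 else w.2) p1
        set P2 := MvPolynomial.eval (fun i : Fin 2 => if i = 0 then w.1 else w.2) p2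
        have e : 1 - (w.1 - a.1) * P1 - (w.2 - a.2) * P2 =
            -((w.1 - a.1) * (P1 - h1 ⟨w, hw⟩) + (w.2 - a.2) * (P2 - h2 ⟨w, hw⟩)) := by
          rw [← i]; ring
        rw [e, norm_neg]
        calc _ ≤ ‖w.1 - a.1‖ * ‖P1 - h1 ⟨w, hw⟩‖ + ‖w.2 - a.2‖ * ‖P2 - h2 ⟨w, hw⟩‖ := by
              refine (norm_add_le _ _).trans ?_
              rw [norm_mul, norm_mul]
          _ ≤ M * (1 / (4 * M)) + M * (1 / (4 * M)) := by gcongr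
          _ = 1 / 2 := by field_simp; norm_num) (by norm_num)
    have := key.trans hle
    simp at this
    norm_num at this
  · intro a ha p
    exact le_csSup (hK.image (eval_cont p)).bddAbove ⟨a, ha, rfl⟩
end
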